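/- arXiv:1410.0504 — 2 statements merged into one kernel-verified Lean document; each statement's English description precedes it below -/
import Mathlib

section
/- Pólya–Szegő inequality for anisotropic Hessian integrals: let Ω ⊂ ℝ² be a bounded convex open set with C² boundary and let u ∈ Φ₀(Ω) ∩ C²(E_u). Then I_H[u,Ω] ≥ I_H[u^★, Ω^★], i.e. ∫_Ω u det_H[u] dx ≥ 4κ³ ∫₀^{P_H(Ω)} |(u^♦)'(s)|³ ds. -/
open MeasureTheory Set
open scoped ENNReal NNReal RealInnerProductSpace

noncomputable section

/-- The plane `ℝ²`. -/
abbrev E2 : Type := EuclideanSpace ℝ (Fin 2)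

/-- The `i`-th partial derivative of `f` at `x`. -/
def pd (f : E2 → ℝ) (i : Fin 2) (x : E2) : ℝ :=
  fderiv ℝ f x (EuclideanSpace.single i 1)

/-- The Hessian matrix of `f` at `x`. -/
def hessian (f : E2 → ℝ) (x : E2) : Matrix (Fin 2) (Fin 2) ℝ :=
  Matrix.of fun i j => pd (pd f j) i x

/-- The hypotheses on the anisotropy `H`: a convex, coercive, positively `1`-homogeneous even
function, with `H²` strongly convex and `C²` away from the origin. -/
structure IsAnisoNorm (H : E2 → ℝ) : Prop where
  nonneg : ∀ ξ, 0 ≤ H ξ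
  convex : ConvexOn ℝ Set.univ H
  coercive : ∃ α > 0, ∀ ξ, α * ‖ξ‖ ≤ H ξ
  homog : ∀ (t : ℝ) (ξ : E2), H (t • ξ) = |t| * H ξ
  smooth : ContDiffOn ℝ 2 H {(0 : E2)}ᶜ
  posdef : ∀ ξ : E2, ξ ≠ 0 → ∀ v : E2, v ≠ 0 →
      0 < ∑ i, ∑ j, hessian (fun z => H z ^ 2) ξ i j * v i * v j

/-- The polar function `H^o(v) = sup_{ξ ≠ 0} (ξ·v)/H(ξ)`. -/
def polar (H : E2 → ℝ) (v : E2) : ℝ :=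
  ⨆ ξ : {ξ : E2 // ξ ≠ 0}, ⟪(ξ : E2), v⟫ / H ξ

/-- The Wulff shape `𝒲 = {H^o < 1}`. -/
def Wulff (H : E2 → ℝ) : Set E2 := {ξ | polar H ξ < 1}

/-- The scaled Wulff shape `𝒲_R = {H^o < R}`. -/
def wulffR (H : E2 → ℝ) (R : ℝ) : Set E2 := {ξ | polar H ξ < R}

/-- `κ`, the Lebesgue measure of the Wulff shape. -/
def kappa (H : E2 → ℝ) : ℝ := (volume (Wulff H)).toReal

/-- `F(ξ) = H(ξ)²/2`. -/
def Fani (H : E2 → ℝ) (ξ : E2) : ℝ := H ξ ^ 2 / 2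

/-- The matrix `A[u] = ∇²_ξ F(∇u) · ∇²u`. -/
def Amat (H u : E2 → ℝ) (x : E2) : Matrix (Fin 2) (Fin 2) ℝ :=
  hessian (Fani H) (gradient u x) * hessian u x

/-- The anisotropic Monge–Ampère operator `det_H[u] = det ∇²_ξF(∇u) · det ∇²u`. -/
def detH (H u : E2 → ℝ) (x : E2) : ℝ :=
  (hessian (Fani H) (gradient u x)).det * (hessian u x).det

/-- The cofactor matrix of a `2×2` matrix. -/
def cof (B : Matrix (Fin 2) (Fin 2) ℝ) : Matrix (Fin 2) (Fin 2) ℝ :=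
  Matrix.of ![![B 1 1, -B 1 0], ![-B 0 1, B 0 0]]

/-- The anisotropic curvature of the level line of `u` through `x`:
`k_H(x) = -Σ_{i,j} H_{ξ_iξ_j}(∇u) u_{ij}`. -/
def kH (H u : E2 → ℝ) (x : E2) : ℝ :=
  -∑ i, ∑ j, hessian H (gradient u x) i j * hessian u x i j

/-- The class `Φ₀(Ω)`: `W^{2,2}(Ω) ∩ C¹(Ω̄)` functions vanishing on `∂Ω`, concave in `Ω`. -/
structure MemPhi0 (Ω : Set E2) (u : E2 → ℝ) : Prop where
  sobolev : ∀ i j, MemLp (fun x => hessian u x i j) 2 (volume.restrict Ω)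
  c1 : ContDiffOn ℝ 1 u (closure Ω)
  bzero : ∀ x ∈ frontier Ω, u x = 0
  concave : ConcaveOn ℝ Ω u

/-- `max_{Ω̄} u`. -/
def maxcl (Ω : Set E2) (u : E2 → ℝ) : ℝ := sSup (u '' closure Ω)

/-- The set `E_u = {x ∈ Ω : 0 ≤ u(x) < max_{Ω̄} u}`. -/
def Eu (Ω : Set E2) (u : E2 → ℝ) : Set E2 :=
  {x ∈ Ω | 0 ≤ u x ∧ u x < maxcl Ω u}

/-- `K` has `C²` boundary: it admits a global `C²` defining function with nonvanishing
gradient on the boundary. -/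
def HasC2Boundary (K : Set E2) : Prop :=
  ∃ φ : E2 → ℝ, ContDiff ℝ 2 φ ∧ K = {x | φ x < 0} ∧
    frontier K = {x | φ x = 0} ∧ ∀ x ∈ frontier K, gradient φ x ≠ 0

/-- `K` has `C¹` boundary. -/
def HasC1Boundary (K : Set E2) : Prop :=
  ∃ φ : E2 → ℝ, ContDiff ℝ 1 φ ∧ K = {x | φ x < 0} ∧
    frontier K = {x | φ x = 0} ∧ ∀ x ∈ frontier K, gradient φ x ≠ 0

/-- The Euclidean outer unit normal `ν = -∇u/|∇u|` to a superlevel set of `u`. -/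
def nuLevel (u : E2 → ℝ) (x : E2) : E2 := -(‖gradient u x‖⁻¹ • gradient u x)

/-- The level set `Σ_t = {u = t}` (in `Ω̄`). -/
def levelSet (Ω : Set E2) (u : E2 → ℝ) (t : ℝ) : Set E2 :=
  {x ∈ closure Ω | u x = t}

/-- The superlevel set `Ω_t = {u > t}`. -/
def superLevel (Ω : Set E2) (u : E2 → ℝ) (t : ℝ) : Set E2 :=
  {x ∈ Ω | t < u x}

/-- `λ_H(t) = P_H({u > t}) = ∫_{{u = t}} H(ν) dℋ¹`. -/
def lambdaH (H : E2 → ℝ) (Ω : Set E2) (u : E2 → ℝ) (t : ℝ) : ℝ :=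
  ∫ x in levelSet Ω u t, H (nuLevel u x) ∂(μH[1] : Measure E2)

/-- The anisotropic perimeter `P_H(Ω) = λ_H(0)` of `Ω = {u > 0}`. -/
def PerH (H : E2 → ℝ) (Ω : Set E2) (u : E2 → ℝ) : ℝ := lambdaH H Ω u 0

/-- The rearrangement `u^♦(s) = sup{t ≥ 0 : λ_H(t) ≥ s}` of `u` with respect to the
anisotropic perimeter. -/
def diamondRe (H : E2 → ℝ) (Ω : Set E2) (u : E2 → ℝ) (s : ℝ) : ℝ :=
  sSup {t : ℝ | 0 ≤ t ∧ s ≤ lambdaH H Ω u t}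

/-- The anisotropic radial symmetrand `u^★(x) = u^♦(2κ H^o(x))`. -/
def starRe (H : E2 → ℝ) (Ω : Set E2) (u : E2 → ℝ) (x : E2) : ℝ :=
  diamondRe H Ω u (2 * kappa H * polar H x)

/-- `Ω^★ = 𝒲_R` with `R = P_H(Ω)/(2κ)`. -/
def OmegaStar (H : E2 → ℝ) (Ω : Set E2) (u : E2 → ℝ) : Set E2 :=
  wulffR H (PerH H Ω u / (2 * kappa H))

/-- The distribution function `μ(t) = |{x ∈ Ω : |f(x)| > t}|`. -/
def distrib (Ω : Set E2) (f : E2 → ℝ) (t : ℝ) : ℝ :=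
  (volume {x ∈ Ω | t < |f x|}).toReal

/-- The decreasing rearrangement `f*(s) = sup{t : μ(t) > s}`. -/
def decRe (Ω : Set E2) (f : E2 → ℝ) (s : ℝ) : ℝ :=
  sSup {t : ℝ | s < distrib Ω f t}

/-!
Write `e θ = (cos θ, sin θ)`, `c = H ∘ e` and `q = c + c''`. By homogeneity `det ∇²F = c³ q` along
the ray of direction `e θ`, so `q > 0`, and Cauchy's formula `4 H ξ = ∫ |⟪ξ, e' θ⟫| q θ dθ` writes
the anisotropic length of a curve as an average of the lengths of its projections. The level line
`Σ_t` projects two-to-one onto a segment as long as the width of `K_t = {u ≥ t}`; hence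
`λ_H t = ∫ h_t(-e θ) q θ dθ`, where `h_t` is the support function of `K_t`, and `λ_H` is concave
and strictly decreasing on `(0, max u)`.

Let `t < t'` and `D p = (h_t(-p) - h_{t'}(-p)) / (t' - t)`. If `D p < 1`, then `u - ⟪p, ·⟫` attains
its maximum over `K_t` inside `{u > t}`, so `p` is a value of `∇u` there. The change of variables
`p = ∇u x` bounds the `det_H`-mass of `{u > t}` below by `∫ c³ q / (2 (D (e θ))²) dθ`. Applying
Hölder's inequality to `∫ c q ≥ 2κ` and `∫ D q = (λ_H t - λ_H t') / (t' - t)`, and letting `t' → t`,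
one finds that this mass is at least `4κ³ / λ_H'(t)²`. Integrating over `t` gives `∫ u det_H[u]` on
one side by the layer-cake formula, and on the other side the integral of `|(u^♦)'|³` by the
substitution `s = λ_H t`, since `u^♦` is the inverse of `λ_H`.
-/

open Filter Topology

section Calculus

variable {E G : Type*} [NormedAddCommGroup E] [NormedSpace ℝ E]
  [NormedAddCommGroup G] [NormedSpace ℝ G]

lemma hasDerivAt_add_smul (x v : E) (s : ℝ) : HasDerivAt (fun s : ℝ => x + s • v) v s := by
  simpa using ((hasDerivAt_id s).smul_const v).const_add x

lemma hasDerivAt_comp_add_smul {f : E → G} {x : E} (hf : DifferentiableAt ℝ f x) (v : E) :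
    HasDerivAt (fun s : ℝ => f (x + s • v)) (fderiv ℝ f x v) 0 := by
  refine HasFDerivAt.comp_hasDerivAt 0 (f := fun s : ℝ => x + s • v) ?_ (hasDerivAt_add_smul x v 0)
  simpa using hf.hasFDerivAt

lemma fderiv_apply_self_of_homogeneous {f : E → G} {k : ℕ} {x : E}
    (hf : DifferentiableAt ℝ f x) (hom : ∀ s : ℝ, s ≠ 0 → f (s • x) = s ^ k • f x) :
    fderiv ℝ f x x = (k : ℝ) • f x := by
  have ray : HasDerivAt (fun s : ℝ => f (s • x)) (fderiv ℝ f x x) 1 := by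
    refine HasFDerivAt.comp_hasDerivAt 1 (f := fun s : ℝ => s • x) ?_ ?_
    · simpa using hf.hasFDerivAt
    · simpa using (hasDerivAt_id (1 : ℝ)).smul_const x
  have power : HasDerivAt (fun s : ℝ => s ^ k • f x) ((k : ℝ) • f x) 1 := by
    simpa using (hasDerivAt_pow k (1 : ℝ)).smul_const (f x)
  refine ray.unique (power.congr_of_eventuallyEq ?_)
  filter_upwards [isOpen_ne.mem_nhds one_ne_zero] with s hs using hom s hs

lemma fderiv_smul_of_homogeneous {f : E → G} {k : ℕ} {s : ℝ} (hs : s ≠ 0)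
    (hom : ∀ x, f (s • x) = s ^ (k + 1) • f x) (x : E) :
    fderiv ℝ f (s • x) = s ^ k • fderiv ℝ f x := by
  have h : s • fderiv ℝ f (s • x) = s ^ (k + 1) • fderiv ℝ f x := by
    rw [← fderiv_comp_smul, ← Pi.smul_apply (s ^ (k + 1)), ← fderiv_const_smul_field]
    exact congrArg (fderiv ℝ · x) (funext hom)
  rw [pow_succ', mul_smul] at h
  exact smul_right_injective _ hs h

lemma differentiableAt_fderiv {f : E → G} {x : E} (hf : ContDiffAt ℝ 2 f x) :
    DifferentiableAt ℝ (fderiv ℝ f) x :=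
  (hf.fderiv_right (m := 1) (by norm_num)).differentiableAt one_ne_zero

lemma le_add_fderiv_of_concaveOn {s : Set E} {f : E → ℝ} (hf : ConcaveOn ℝ s f) {x y : E}
    (hx : x ∈ s) (hy : y ∈ s) (hd : DifferentiableAt ℝ f x) :
    f y ≤ f x + fderiv ℝ f x (y - x) := by
  have line : ConcaveOn ℝ (Icc (0 : ℝ) 1) (f ∘ AffineMap.lineMap x y) :=
    (hf.comp_affineMap (AffineMap.lineMap x y)).subset
      (fun s hs => hf.1.lineMap_mem hx hy hs) (convex_Icc 0 1)
  have deriv : HasDerivAt (f ∘ AffineMap.lineMap x y) (fderiv ℝ f x (y - x)) (0 : ℝ) :=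
    HasFDerivAt.comp_hasDerivAt 0 (by simpa using hd.hasFDerivAt) AffineMap.hasDerivAt_lineMap
  have := line.slope_le_of_hasDerivAt (by simp) (by simp) one_pos deriv
  simp only [slope_def_field, Function.comp_apply, AffineMap.lineMap_apply_one,
    AffineMap.lineMap_apply_zero, sub_zero, div_one] at this
  linarith

lemma le_add_fderiv_of_mem_closure {s : Set E} {f : E → ℝ} (hf : ConcaveOn ℝ s f)
    (hc : ContinuousOn f (closure s)) {x y : E} (hx : x ∈ s) (hy : y ∈ closure s)
    (hd : DifferentiableAt ℝ f x) : f y ≤ f x + fderiv ℝ f x (y - x) :=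
  ContinuousWithinAt.closure_le hy ((hc y hy).mono subset_closure) (by fun_prop)
    fun _ hz => le_add_fderiv_of_concaveOn hf hx hz hd

lemma fderiv_fderiv_apply_self_nonpos {s : Set E} {f : E → ℝ} (hf : ConcaveOn ℝ s f)
    (hs : IsOpen s) (hd : DifferentiableOn ℝ f s) {x : E} (hx : x ∈ s)
    (hd2 : DifferentiableAt ℝ (fderiv ℝ f) x) (v : E) :
    fderiv ℝ (fderiv ℝ f) x v v ≤ 0 := by
  have hdiff : ∀ y ∈ s, DifferentiableAt ℝ f y := fun y hy => hd.differentiableAt (hs.mem_nhds hy)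
  have deriv : HasDerivAt (fun t : ℝ => fderiv ℝ f (x + t • v) v)
      (fderiv ℝ (fderiv ℝ f) x v v) 0 := by
    simpa using (hasDerivAt_comp_add_smul hd2 v).clm_apply (hasDerivAt_const 0 v)
  have hmem : ∀ᶠ t : ℝ in 𝓝[>] 0, x + t • v ∈ s := by
    refine nhdsWithin_le_nhds ((hasDerivAt_add_smul x v 0).continuousAt.eventually ?_)
    simpa using hs.mem_nhds hx
  refine le_of_tendsto ((hasDerivAt_iff_tendsto_slope.1 deriv).mono_left
    (nhdsWithin_mono 0 (t := {0}ᶜ) fun t (ht : t ∈ Ioi 0) => ht.ne')) ?_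
  filter_upwards [hmem, self_mem_nhdsWithin] with t ht (ht0 : 0 < t)
  have h1 := le_add_fderiv_of_concaveOn hf hx ht (hdiff x hx)
  have h2 := le_add_fderiv_of_concaveOn hf ht hx (hdiff _ ht)
  simp only [add_sub_cancel_left, sub_add_cancel_left, map_neg, map_smul, smul_eq_mul] at h1 h2
  rw [slope_def_field, zero_smul, add_zero, sub_zero]
  refine div_nonpos_of_nonpos_of_nonneg (nonpos_of_mul_nonpos_right ?_ ht0) ht0.le
  linarith

lemma exists_ray_mem_frontier {K : Set E} (hK : Bornology.IsBounded K) {z w : E} (hz : z ∈ K)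
    (hw : w ≠ 0) : ∃ τ : ℝ, 0 ≤ τ ∧ z + τ • w ∈ frontier K := by
  by_contra! avoid
  obtain ⟨R, hR⟩ := hK.closure.subset_closedBall z
  have far : z + (|R| / ‖w‖ + 1) • w ∉ closure K := fun h => by
    have := mem_closedBall_iff_norm.1 (hR h)
    have hw' := norm_pos_iff.2 hw
    rw [add_sub_cancel_left, norm_smul, Real.norm_of_nonneg (by positivity), add_mul,
      div_mul_cancel₀ _ hw'.ne'] at this
    linarith [le_abs_self R]
  have conn : IsPreconnected ((fun τ : ℝ => z + τ • w) '' Ici 0) :=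
    isPreconnected_Ici.image _ (by fun_prop)
  obtain ⟨-, ⟨τ, -, rfl⟩, hinside, houtside⟩ := conn (interior K) (closure K)ᶜ isOpen_interior
    isClosed_closure.isOpen_compl (by
      rintro - ⟨τ, hτ, rfl⟩
      by_cases h : z + τ • w ∈ closure K
      · exact Or.inl (by_contra fun hi => avoid τ hτ ⟨h, hi⟩)
      · exact Or.inr h)
    ⟨z, ⟨0, self_mem_Ici, by simp⟩, by_contra fun hi =>
      avoid 0 le_rfl (by simpa using ⟨subset_closure hz, hi⟩)⟩
    ⟨_, ⟨_, mem_Ici.2 (by positivity), rfl⟩, far⟩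
  exact houtside (interior_subset_closure hinside)

end Calculus

lemma gradient_eq_of_isLocalExtr {E : Type*} [NormedAddCommGroup E] [InnerProductSpace ℝ E]
    [CompleteSpace E] {f : E → ℝ} {x p : E} (hd : DifferentiableAt ℝ f x)
    (h : IsLocalExtr (fun y => f y - ⟪p, y⟫) x) : gradient f x = p := by
  refine ext_inner_right ℝ fun v => ?_
  have hp : HasFDerivAt (⟪p, ·⟫) (innerSL ℝ p) x := (innerSL ℝ p).hasFDerivAt
  have hz := h.hasFDerivAt_eq_zero (hd.hasFDerivAt.fun_sub hp)
  rw [sub_eq_zero] at hz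
  rw [inner_gradient_left, hz, innerSL_apply_apply]

section LinearAlgebra

lemma det_pos_of_forall_form_pos {M : Matrix (Fin 2) (Fin 2) ℝ}
    (h : ∀ v : E2, v ≠ 0 → 0 < ∑ i, ∑ j, M i j * v i * v j) : 0 < M.det := by
  have form : ∀ x y : ℝ, x ≠ 0 ∨ y ≠ 0 →
      0 < M 0 0 * x * x + M 0 1 * x * y + (M 1 0 * y * x + M 1 1 * y * y) := fun x y hxy => by
    have hne : (!₂[x, y] : E2) ≠ 0 := by simpa [PiLp.ext_iff, ← not_and_or] using hxy
    simpa [Fin.sum_univ_two] using h _ hne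
  have h00 : 0 < M 0 0 := by simpa using form 1 0 (.inl one_ne_zero)
  have hy : 0 < 4 * M 0 0 * M 1 1 - (M 0 1 + M 1 0) ^ 2 := by
    refine pos_of_mul_pos_right (a := M 0 0) ?_ h00.le
    linarith [form (-(M 0 1 + M 1 0)) (2 * M 0 0) (.inr (by positivity))]
  rw [Matrix.det_fin_two]
  nlinarith [sq_nonneg (M 0 1 - M 1 0)]

lemma det_nonneg_of_forall_form_nonpos {M : Matrix (Fin 2) (Fin 2) ℝ}
    (h : ∀ v : E2, ∑ i, ∑ j, M i j * v i * v j ≤ 0) : 0 ≤ M.det := by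
  have quadratic : ∀ x : ℝ, M 0 0 * (x * x) + (M 0 1 + M 1 0) * x + M 1 1 ≤ 0 := fun x => by
    have := h !₂[x, 1]
    simp only [Fin.sum_univ_two, Matrix.cons_val_zero, Matrix.cons_val_one] at this
    linarith
  have := discrim_le_zero_of_nonpos quadratic
  rw [discrim] at this
  rw [Matrix.det_fin_two]
  nlinarith [sq_nonneg (M 0 1 - M 1 0)]

lemma det_eq_inner {E : Type*} [NormedAddCommGroup E] [InnerProductSpace ℝ E]
    (b : OrthonormalBasis (Fin 2) ℝ E) (L : E →L[ℝ] E) :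
    L.det = ⟪b 0, L (b 0)⟫ * ⟪b 1, L (b 1)⟫ - ⟪b 0, L (b 1)⟫ * ⟪b 1, L (b 0)⟫ := by
  rw [ContinuousLinearMap.det, ← LinearMap.det_toMatrix b.toBasis, Matrix.det_fin_two]
  simp only [LinearMap.toMatrix_apply, OrthonormalBasis.coe_toBasis,
    OrthonormalBasis.coe_toBasis_repr_apply, OrthonormalBasis.repr_apply_apply,
    ContinuousLinearMap.coe_coe]

end LinearAlgebra

section Hessian

variable {E : Type*} [NormedAddCommGroup E] [InnerProductSpace ℝ E] [CompleteSpace E]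

/-- The inverse of the Riesz isomorphism, as a linear map: over `ℝ` the conjugation in
`InnerProductSpace.toDual` is the identity. -/
def rieszEquiv (E : Type*) [NormedAddCommGroup E] [InnerProductSpace ℝ E] [CompleteSpace E] :
    StrongDual ℝ E ≃L[ℝ] E :=
  (InnerProductSpace.toDual ℝ E).symm.toContinuousLinearEquiv

lemma gradient_eq_rieszEquiv_comp (f : E → ℝ) : gradient f = rieszEquiv E ∘ fderiv ℝ f := rfl

lemma differentiableAt_gradient {f : E → ℝ} {x : E} (hf : DifferentiableAt ℝ (fderiv ℝ f) x) :
    DifferentiableAt ℝ (gradient f) x :=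
  (rieszEquiv E).differentiableAt.comp x hf

lemma inner_fderiv_gradient (f : E → ℝ) (x v w : E) :
    ⟪fderiv ℝ (gradient f) x v, w⟫ = fderiv ℝ (fderiv ℝ f) x v w := by
  rw [gradient_eq_rieszEquiv_comp, (rieszEquiv E).comp_fderiv]
  exact InnerProductSpace.toDual_symm_apply

lemma gradient_smul_of_homogeneous {f : E → ℝ} {k : ℕ} {s : ℝ} (hs : s ≠ 0)
    (hom : ∀ x, f (s • x) = s ^ (k + 1) • f x) (x : E) :
    gradient f (s • x) = s ^ k • gradient f x := by
  rw [gradient, fderiv_smul_of_homogeneous hs hom, map_smul, gradient]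

lemma measurable_gradient [MeasurableSpace E] [BorelSpace E] (f : E → ℝ) :
    Measurable (gradient f) :=
  (LinearIsometryEquiv.continuous _).measurable.comp (measurable_fderiv ℝ f)

lemma hessian_apply {f : E2 → ℝ} {x : E2} (hf : DifferentiableAt ℝ (fderiv ℝ f) x) (i j : Fin 2) :
    hessian f x i j = fderiv ℝ (fderiv ℝ f) x (EuclideanSpace.single i 1)
      (EuclideanSpace.single j 1) := by
  have column : fderiv ℝ (fun y => fderiv ℝ f y (EuclideanSpace.single j 1)) x =
      (fderiv ℝ (fderiv ℝ f) x).flip (EuclideanSpace.single j 1) := by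
    rw [fderiv_clm_apply hf (differentiableAt_const _)]
    simp
  exact congrArg (· (EuclideanSpace.single i 1)) column

lemma sum_hessian_mul_mul {f : E2 → ℝ} {x : E2} (hf : DifferentiableAt ℝ (fderiv ℝ f) x) (v : E2) :
    ∑ i, ∑ j, hessian f x i j * v i * v j = fderiv ℝ (fderiv ℝ f) x v v := by
  have hv : v = v 0 • EuclideanSpace.single (0 : Fin 2) (1 : ℝ) +
      v 1 • EuclideanSpace.single (1 : Fin 2) (1 : ℝ) := by
    ext i; fin_cases i <;> simp
  conv_rhs => rw [hv]
  simp only [Fin.sum_univ_two, hessian_apply hf, map_add, map_smul, add_apply, smul_apply,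
    smul_eq_mul]
  ring

lemma det_fderiv_gradient {f : E2 → ℝ} {x : E2} (hf : DifferentiableAt ℝ (fderiv ℝ f) x) :
    (fderiv ℝ (gradient f) x).det = (hessian f x).det := by
  rw [det_eq_inner (EuclideanSpace.basisFun (Fin 2) ℝ), Matrix.det_fin_two]
  simp only [real_inner_comm (fderiv ℝ _ _ _), inner_fderiv_gradient, hessian_apply hf,
    EuclideanSpace.basisFun_apply]
  ring

lemma hessian_const_mul (a : ℝ) (f : E2 → ℝ) (x : E2) :
    hessian (fun z => a * f z) x = a • hessian f x := by
  have pd_const_mul (g : E2 → ℝ) (i : Fin 2) : pd (fun z => a * g z) i = fun z => a * pd g i z :=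
    funext fun z => congrArg (fun L : E2 → E2 →L[ℝ] ℝ => L z (EuclideanSpace.single i 1))
      (fderiv_const_smul_field (𝕜 := ℝ) (f := g) a)
  ext i j
  simp only [hessian, Matrix.of_apply, pd_const_mul, Matrix.smul_apply, smul_eq_mul]

lemma measurable_det_hessian (f : E2 → ℝ) : Measurable fun x => (hessian f x).det := by
  have entry (i j : Fin 2) : Measurable fun x => hessian f x i j := measurable_fderiv_apply_const ..
  simp only [Matrix.det_fin_two]
  exact ((entry 0 0).mul (entry 1 1)).sub ((entry 0 1).mul (entry 1 0))

end Hessian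

section PolarFrame

/-- The unit vector at angle `θ`. -/
def radialVec (θ : ℝ) : E2 := !₂[Real.cos θ, Real.sin θ]

/-- The derivative of `radialVec`, which is the unit vector at angle `θ + π / 2`. -/
def angularVec (θ : ℝ) : E2 := !₂[-Real.sin θ, Real.cos θ]

lemma orthonormal_radialVec_angularVec (θ : ℝ) :
    Orthonormal ℝ ![radialVec θ, angularVec θ] := by
  simp only [orthonormal_vecCons_iff, EuclideanSpace.norm_eq, radialVec, angularVec,
    Fin.sum_univ_two, PiLp.inner_apply]
  simp [mul_comm]

/-- The orthonormal basis of the plane rotated by the angle `θ`. -/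
def polarFrame (θ : ℝ) : OrthonormalBasis (Fin 2) ℝ E2 :=
  OrthonormalBasis.mk (orthonormal_radialVec_angularVec θ)
    ((orthonormal_radialVec_angularVec θ).linearIndependent.span_eq_top_of_card_eq_finrank'
      (by simp)).ge

@[simp] lemma polarFrame_zero (θ : ℝ) : polarFrame θ 0 = radialVec θ := by simp [polarFrame]

@[simp] lemma polarFrame_one (θ : ℝ) : polarFrame θ 1 = angularVec θ := by simp [polarFrame]

@[simp] lemma norm_radialVec (θ : ℝ) : ‖radialVec θ‖ = 1 :=
  (orthonormal_radialVec_angularVec θ).norm_eq_one 0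

@[simp] lemma norm_angularVec (θ : ℝ) : ‖angularVec θ‖ = 1 :=
  (orthonormal_radialVec_angularVec θ).norm_eq_one 1

lemma inner_radialVec_angularVec (θ : ℝ) : ⟪radialVec θ, angularVec θ⟫ = 0 :=
  (orthonormal_radialVec_angularVec θ).inner_eq_zero (i := 0) (j := 1) (by simp)

lemma radialVec_ne_zero (θ : ℝ) : radialVec θ ≠ 0 := by
  rw [← norm_ne_zero_iff, norm_radialVec]; exact one_ne_zero

lemma inner_radialVec_smul_add (θ : ℝ) (x : E2) :
    ⟪radialVec θ, x⟫ • radialVec θ + ⟪angularVec θ, x⟫ • angularVec θ = x := by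
  simpa using (polarFrame θ).sum_repr' x

lemma inner_radialVec_angularVec_eq_sin (φ θ : ℝ) :
    ⟪radialVec φ, angularVec θ⟫ = -Real.sin (θ - φ) := by
  simp [PiLp.inner_apply, radialVec, angularVec, Real.sin_sub]
  ring

lemma radialVec_add_pi (θ : ℝ) : radialVec (θ + Real.pi) = -radialVec θ := by
  ext i; fin_cases i <;> simp [radialVec]

lemma angularVec_add_pi (θ : ℝ) : angularVec (θ + Real.pi) = -angularVec θ := by
  ext i; fin_cases i <;> simp [angularVec]

lemma contDiff_radialVec {n : WithTop ℕ∞} : ContDiff ℝ n radialVec := by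
  refine contDiff_euclidean.2 fun i => ?_
  fin_cases i
  exacts [Real.contDiff_cos, Real.contDiff_sin]

@[fun_prop] lemma continuous_radialVec : Continuous radialVec :=
  (contDiff_radialVec (n := 0)).continuous

@[fun_prop] lemma continuous_angularVec : Continuous angularVec := by
  unfold angularVec; fun_prop

lemma hasDerivAt_vec {a b : ℝ → ℝ} {a' b' t : ℝ} (ha : HasDerivAt a a' t)
    (hb : HasDerivAt b b' t) : HasDerivAt (fun s => (!₂[a s, b s] : E2)) !₂[a', b'] t := by
  refine (PiLp.continuousLinearEquiv 2 ℝ fun _ : Fin 2 => ℝ).symm.hasFDerivAt.comp_hasDerivAt t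
    (hasDerivAt_pi (φ := fun s => ![a s, b s]).2 fun i => ?_)
  fin_cases i
  exacts [ha, hb]

lemma hasDerivAt_radialVec (θ : ℝ) : HasDerivAt radialVec (angularVec θ) θ :=
  hasDerivAt_vec (Real.hasDerivAt_cos θ) (Real.hasDerivAt_sin θ)

lemma hasDerivAt_angularVec (θ : ℝ) : HasDerivAt angularVec (-radialVec θ) θ :=
  (hasDerivAt_vec (Real.hasDerivAt_sin θ).neg (Real.hasDerivAt_cos θ)).congr_deriv
    (by ext i; fin_cases i <;> simp [radialVec])

lemma exists_eq_norm_smul_radialVec (x : E2) : ∃ θ, x = ‖x‖ • radialVec θ := by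
  let z : ℂ := ⟨x 0, x 1⟩
  have hz : ‖z‖ = ‖x‖ := by
    simp [z, EuclideanSpace.norm_eq, Complex.norm_eq_sqrt_sq_add_sq]
  refine ⟨z.arg, ?_⟩
  ext i; fin_cases i
  · simpa [hz, radialVec] using (Complex.norm_mul_cos_arg z).symm
  · simpa [hz, radialVec] using (Complex.norm_mul_sin_arg z).symm

lemma exists_eq_radialVec {x : E2} (hx : ‖x‖ = 1) : ∃ θ, x = radialVec θ := by
  obtain ⟨θ, hθ⟩ := exists_eq_norm_smul_radialVec x
  exact ⟨θ, by rwa [hx, one_smul] at hθ⟩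

lemma lintegral_eq_lintegral_polar {f : E2 → ℝ≥0∞} (hf : Measurable f) :
    ∫⁻ x, f x = ∫⁻ θ in Ioo (-Real.pi) Real.pi, ∫⁻ r in Ioi (0 : ℝ),
      ENNReal.ofReal r * f (r • radialVec θ) := by
  have cartesian : ∫⁻ x, f x = ∫⁻ p : ℝ × ℝ, f !₂[p.1, p.2] := by
    rw [← (PiLp.volume_preserving_toLp (Fin 2)).lintegral_comp hf,
      ← (volume_preserving_finTwoArrow ℝ).symm.lintegral_comp
        (f := fun y : Fin 2 → ℝ => f (WithLp.toLp 2 y)) (by fun_prop)]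
    rfl
  have meas : Measurable fun p : ℝ × ℝ => ENNReal.ofReal p.1 •
      f !₂[(polarCoord.symm p).1, (polarCoord.symm p).2] := by
    simp only [polarCoord_symm_apply]
    fun_prop
  rw [cartesian, ← lintegral_comp_polarCoord_symm, polarCoord_target, Measure.volume_eq_prod,
    setLIntegral_prod_symm _ meas.aemeasurable]
  refine lintegral_congr fun θ => lintegral_congr fun r => ?_
  rw [polarCoord_symm_apply, smul_eq_mul]
  congr 2
  ext i; fin_cases i <;> simp [radialVec]

/-- Both sides are integrals over a period of `θ ↦ f (radialVec θ) * g θ` after a half turn. -/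
lemma integral_neg_radialVec {f : E2 → ℝ} {g : ℝ → ℝ} (hg : Function.Periodic g Real.pi) :
    ∫ θ in (-Real.pi)..Real.pi, f (-radialVec θ) * g θ =
      ∫ θ in (-Real.pi)..Real.pi, f (radialVec θ) * g θ := by
  have periodic : Function.Periodic (fun θ => f (radialVec θ) * g θ) (2 * Real.pi) := fun θ => by
    simp only [two_mul, ← add_assoc, radialVec_add_pi, neg_neg, hg _]
  calc ∫ θ in (-Real.pi)..Real.pi, f (-radialVec θ) * g θ
      = ∫ θ in (-Real.pi)..Real.pi, f (radialVec (θ + Real.pi)) * g (θ + Real.pi) := by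
        simp only [radialVec_add_pi, hg _]
    _ = ∫ θ in 0..(0 + 2 * Real.pi), f (radialVec θ) * g θ := by
        rw [intervalIntegral.integral_comp_add_right fun θ => f (radialVec θ) * g θ]
        ring_nf
    _ = ∫ θ in (-Real.pi)..Real.pi, f (radialVec θ) * g θ := by
        rw [periodic.intervalIntegral_add_eq 0 (-Real.pi)]
        ring_nf

end PolarFrame

section Anisotropy

variable {H : E2 → ℝ}

namespace IsAnisoNorm

lemma map_zero (hH : IsAnisoNorm H) : H 0 = 0 := by
  simpa using hH.homog 0 0

lemma pos (hH : IsAnisoNorm H) {ξ : E2} (hξ : ξ ≠ 0) : 0 < H ξ := by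
  obtain ⟨α, hα, le⟩ := hH.coercive
  exact (mul_pos hα (norm_pos_iff.2 hξ)).trans_le (le ξ)

lemma map_neg (hH : IsAnisoNorm H) (ξ : E2) : H (-ξ) = H ξ := by
  simpa using hH.homog (-1) ξ

lemma continuous (hH : IsAnisoNorm H) : Continuous H :=
  hH.convex.locallyLipschitz.continuous

lemma Fani_smul (hH : IsAnisoNorm H) (s : ℝ) (ξ : E2) :
    Fani H (s • ξ) = s ^ 2 • Fani H ξ := by
  rw [Fani, hH.homog, mul_pow, sq_abs, Fani, smul_eq_mul, mul_div_assoc]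

lemma contDiffAt_Fani (hH : IsAnisoNorm H) {ξ : E2} (hξ : ξ ≠ 0) : ContDiffAt ℝ 2 (Fani H) ξ :=
  ((hH.smooth.contDiffAt (isOpen_compl_singleton.mem_nhds hξ)).pow 2).div_const 2

lemma differentiableAt_Fani (hH : IsAnisoNorm H) {ξ : E2} (hξ : ξ ≠ 0) :
    DifferentiableAt ℝ (Fani H) ξ :=
  (hH.contDiffAt_Fani hξ).differentiableAt two_ne_zero

lemma inner_gradient_Fani_self (hH : IsAnisoNorm H) {ξ : E2} (hξ : ξ ≠ 0) :
    ⟪gradient (Fani H) ξ, ξ⟫ = H ξ ^ 2 := by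
  rw [inner_gradient_left, fderiv_apply_self_of_homogeneous (hH.differentiableAt_Fani hξ)
    fun s _ => hH.Fani_smul s ξ, Fani, smul_eq_mul, Nat.cast_ofNat, mul_div_cancel₀ _ two_ne_zero]

lemma gradient_Fani_smul (hH : IsAnisoNorm H) {s : ℝ} (hs : s ≠ 0) (ξ : E2) :
    gradient (Fani H) (s • ξ) = s • gradient (Fani H) ξ := by
  simpa using gradient_smul_of_homogeneous (k := 1) hs (hH.Fani_smul s) ξ

lemma det_hessian_Fani_eq (hH : IsAnisoNorm H) {ξ : E2} (hξ : ξ ≠ 0) :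
    (hessian (Fani H) ξ).det = (fderiv ℝ (gradient (Fani H)) ξ).det :=
  (det_fderiv_gradient (differentiableAt_fderiv (hH.contDiffAt_Fani hξ))).symm

lemma det_hessian_Fani_pos (hH : IsAnisoNorm H) {ξ : E2} (hξ : ξ ≠ 0) :
    0 < (hessian (Fani H) ξ).det := by
  have half : Fani H = fun z => 2⁻¹ * H z ^ 2 := funext fun z => by rw [Fani]; ring
  rw [half, hessian_const_mul, Matrix.det_smul]
  exact mul_pos (by positivity) (det_pos_of_forall_form_pos (hH.posdef ξ hξ))

end IsAnisoNorm

/-- The restriction `c` of the anisotropy `H` to the unit circle, as a function of the angle. It is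
the support function of the Wulff shape. -/
def angularProfile (H : E2 → ℝ) (θ : ℝ) : ℝ := H (radialVec θ)

/-- The curvature radius `q = c + c''` of the boundary of the Wulff shape, as a function of the
angle of the normal. -/
def curvatureRadius (H : E2 → ℝ) (θ : ℝ) : ℝ :=
  angularProfile H θ + deriv (deriv (angularProfile H)) θ

namespace IsAnisoNorm

lemma angularProfile_pos (hH : IsAnisoNorm H) (θ : ℝ) : 0 < angularProfile H θ :=
  hH.pos (radialVec_ne_zero θ)

lemma contDiff_angularProfile (hH : IsAnisoNorm H) : ContDiff ℝ 2 (angularProfile H) :=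
  contDiffOn_univ.1 <| hH.smooth.comp contDiff_radialVec.contDiffOn fun θ _ => radialVec_ne_zero θ

lemma contDiff_deriv_angularProfile (hH : IsAnisoNorm H) :
    ContDiff ℝ 1 (deriv (angularProfile H)) :=
  ((contDiff_succ_iff_deriv (n := 1)).1 (hH.contDiff_angularProfile.of_le (by norm_num))).2.2

lemma hasDerivAt_angularProfile (hH : IsAnisoNorm H) (θ : ℝ) :
    HasDerivAt (angularProfile H) (deriv (angularProfile H) θ) θ :=
  (hH.contDiff_angularProfile.differentiable two_ne_zero θ).hasDerivAt

lemma hasDerivAt_deriv_angularProfile (hH : IsAnisoNorm H) (θ : ℝ) :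
    HasDerivAt (deriv (angularProfile H)) (deriv (deriv (angularProfile H)) θ) θ :=
  (hH.contDiff_deriv_angularProfile.differentiable one_ne_zero θ).hasDerivAt

@[fun_prop] lemma continuous_angularProfile (hH : IsAnisoNorm H) : Continuous (angularProfile H) :=
  hH.contDiff_angularProfile.continuous

@[fun_prop] lemma continuous_curvatureRadius (hH : IsAnisoNorm H) :
    Continuous (curvatureRadius H) :=
  hH.continuous_angularProfile.add (hH.contDiff_deriv_angularProfile.continuous_deriv le_rfl)

lemma periodic_angularProfile (hH : IsAnisoNorm H) :
    Function.Periodic (angularProfile H) Real.pi := fun θ => by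
  rw [angularProfile, radialVec_add_pi, hH.map_neg, angularProfile]

lemma periodic_curvatureRadius (hH : IsAnisoNorm H) :
    Function.Periodic (curvatureRadius H) Real.pi := by
  have periodic_deriv {f : ℝ → ℝ} (hf : Function.Periodic f Real.pi) :
      Function.Periodic (deriv f) Real.pi := fun θ => by
    rw [← deriv_comp_add_const, hf.funext]
  exact hH.periodic_angularProfile.add (periodic_deriv (periodic_deriv hH.periodic_angularProfile))

lemma gradient_Fani_radialVec (hH : IsAnisoNorm H) (θ : ℝ) :
    gradient (Fani H) (radialVec θ) = angularProfile H θ •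
      (angularProfile H θ • radialVec θ + deriv (angularProfile H) θ • angularVec θ) := by
  have along_circle : ⟪angularVec θ, gradient (Fani H) (radialVec θ)⟫ =
      angularProfile H θ * deriv (angularProfile H) θ := by
    rw [real_inner_comm, inner_gradient_left]
    have chain : HasDerivAt (Fani H ∘ radialVec) _ θ :=
      (hH.differentiableAt_Fani (radialVec_ne_zero θ)).hasFDerivAt.comp_hasDerivAt θ
        (hasDerivAt_radialVec θ)
    refine chain.unique (((hH.hasDerivAt_angularProfile θ).pow 2).div_const 2 |>.congr_deriv ?_)
    ring
  rw [← inner_radialVec_smul_add θ (gradient (Fani H) (radialVec θ)), along_circle,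
    real_inner_comm, hH.inner_gradient_Fani_self (radialVec_ne_zero θ), smul_add, smul_smul,
    smul_smul, ← sq, angularProfile]

lemma fderiv_gradient_Fani_radialVec (hH : IsAnisoNorm H) (θ : ℝ) :
    fderiv ℝ (gradient (Fani H)) (radialVec θ) (radialVec θ) =
      gradient (Fani H) (radialVec θ) := by
  simpa using fderiv_apply_self_of_homogeneous (k := 1) (differentiableAt_gradient
    (differentiableAt_fderiv (hH.contDiffAt_Fani (radialVec_ne_zero θ))))
    fun s hs => by rw [hH.gradient_Fani_smul hs, pow_one]

lemma fderiv_gradient_Fani_angularVec (hH : IsAnisoNorm H) (θ : ℝ) :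
    fderiv ℝ (gradient (Fani H)) (radialVec θ) (angularVec θ) =
      (angularProfile H θ * deriv (angularProfile H) θ) • radialVec θ +
      (deriv (angularProfile H) θ ^ 2 + angularProfile H θ * curvatureRadius H θ) •
        angularVec θ := by
  have chain : HasDerivAt (gradient (Fani H) ∘ radialVec) _ θ :=
    (differentiableAt_gradient (differentiableAt_fderiv
      (hH.contDiffAt_Fani (radialVec_ne_zero θ)))).hasFDerivAt.comp_hasDerivAt θ
        (hasDerivAt_radialVec θ)
  have profile := hH.hasDerivAt_angularProfile θ
  have explicit := profile.fun_smul ((profile.fun_smul (hasDerivAt_radialVec θ)).fun_add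
    ((hH.hasDerivAt_deriv_angularProfile θ).fun_smul (hasDerivAt_angularVec θ)))
  rw [← funext hH.gradient_Fani_radialVec] at explicit
  rw [chain.unique explicit, curvatureRadius]
  module

lemma det_hessian_Fani_radialVec (hH : IsAnisoNorm H) (θ : ℝ) :
    (hessian (Fani H) (radialVec θ)).det = angularProfile H θ ^ 3 * curvatureRadius H θ := by
  rw [hH.det_hessian_Fani_eq (radialVec_ne_zero θ), det_eq_inner (polarFrame θ)]
  simp only [polarFrame_zero, polarFrame_one, hH.fderiv_gradient_Fani_radialVec,
    hH.gradient_Fani_radialVec, hH.fderiv_gradient_Fani_angularVec, inner_add_right,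
    real_inner_smul_right, real_inner_self_eq_norm_sq, norm_radialVec, norm_angularVec,
    inner_radialVec_angularVec, real_inner_comm (radialVec θ)]
  ring

lemma det_hessian_Fani_smul_radialVec (hH : IsAnisoNorm H) {r : ℝ} (hr : r ≠ 0) (θ : ℝ) :
    (hessian (Fani H) (r • radialVec θ)).det = angularProfile H θ ^ 3 * curvatureRadius H θ := by
  rw [hH.det_hessian_Fani_eq (smul_ne_zero hr (radialVec_ne_zero θ)),
    fderiv_smul_of_homogeneous (k := 0) hr (by simpa using hH.gradient_Fani_smul hr), pow_zero,
    one_smul, ← hH.det_hessian_Fani_eq (radialVec_ne_zero θ), hH.det_hessian_Fani_radialVec]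

lemma curvatureRadius_pos (hH : IsAnisoNorm H) (θ : ℝ) : 0 < curvatureRadius H θ := by
  have := hH.det_hessian_Fani_pos (radialVec_ne_zero θ)
  rw [hH.det_hessian_Fani_radialVec] at this
  exact pos_of_mul_pos_right this (pow_pos (hH.angularProfile_pos θ) 3).le

/-- `sin (· - φ) c' - cos (· - φ) c` is a primitive of `sin (· - φ) (c + c'')`. -/
lemma integral_sin_mul_curvatureRadius (hH : IsAnisoNorm H) (φ : ℝ) :
    ∫ θ in φ..(φ + Real.pi), Real.sin (θ - φ) * curvatureRadius H θ = 2 * angularProfile H φ := by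
  have primitive (θ : ℝ) : HasDerivAt (fun θ => Real.sin (θ - φ) * deriv (angularProfile H) θ -
      Real.cos (θ - φ) * angularProfile H θ) (Real.sin (θ - φ) * curvatureRadius H θ) θ := by
    have sin : HasDerivAt (fun θ => Real.sin (θ - φ)) (Real.cos (θ - φ)) θ := by
      simpa using ((hasDerivAt_id θ).sub_const φ).sin
    have cos : HasDerivAt (fun θ => Real.cos (θ - φ)) (-Real.sin (θ - φ)) θ := by
      simpa using ((hasDerivAt_id θ).sub_const φ).cos
    refine ((sin.fun_mul (hH.hasDerivAt_deriv_angularProfile θ)).fun_sub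
      (cos.fun_mul (hH.hasDerivAt_angularProfile θ))).congr_deriv ?_
    rw [curvatureRadius]
    ring
  rw [intervalIntegral.integral_eq_sub_of_hasDerivAt (fun θ _ => primitive θ)
    (Continuous.intervalIntegrable (by have := hH.continuous_curvatureRadius; fun_prop) _ _)]
  simp only [add_sub_cancel_left, sub_self, Real.sin_pi, Real.cos_pi, Real.sin_zero,
    Real.cos_zero, hH.periodic_angularProfile φ]
  ring

lemma integral_abs_inner_mul_curvatureRadius (hH : IsAnisoNorm H) (ξ : E2) :
    ∫ θ in (-Real.pi)..Real.pi, |⟪ξ, angularVec θ⟫| * curvatureRadius H θ = 4 * H ξ := by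
  obtain ⟨φ, hφ⟩ := exists_eq_norm_smul_radialVec ξ
  have integrand (θ : ℝ) : |⟪ξ, angularVec θ⟫| * curvatureRadius H θ =
      ‖ξ‖ * (|Real.sin (θ - φ)| * curvatureRadius H θ) := by
    conv_lhs => rw [hφ, real_inner_smul_left, abs_mul, abs_norm, inner_radialVec_angularVec_eq_sin,
      abs_neg, mul_assoc]
  have periodic : Function.Periodic (fun θ => |Real.sin (θ - φ)| * curvatureRadius H θ) Real.pi :=
    fun θ => by
      simp only [hH.periodic_curvatureRadius θ, add_sub_right_comm, Real.sin_add_pi, abs_neg]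
  have half_turn (t : ℝ) : ∫ θ in t..(t + Real.pi), |Real.sin (θ - φ)| * curvatureRadius H θ =
      2 * angularProfile H φ := by
    rw [periodic.intervalIntegral_add_eq t φ, ← hH.integral_sin_mul_curvatureRadius φ]
    refine intervalIntegral.integral_congr fun θ hθ => ?_
    rw [uIcc_of_le (by linarith [Real.pi_pos])] at hθ
    have := Real.sin_nonneg_of_nonneg_of_le_pi (sub_nonneg.2 hθ.1) (by linarith [hθ.2])
    simp only [abs_of_nonneg this]
  have intble (a b : ℝ) : IntervalIntegrable
      (fun θ => |Real.sin (θ - φ)| * curvatureRadius H θ) volume a b := by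
    have := hH.continuous_curvatureRadius
    exact (by fun_prop : Continuous _).intervalIntegrable a b
  have left := half_turn (-Real.pi)
  have right := half_turn 0
  rw [neg_add_cancel] at left
  rw [zero_add] at right
  simp only [integrand]
  rw [intervalIntegral.integral_const_mul, ← intervalIntegral.integral_add_adjacent_intervals
    (intble _ 0) (intble 0 _), left, right]
  conv_rhs => rw [hφ, hH.homog, abs_norm]
  rw [angularProfile]
  ring

end IsAnisoNorm

end Anisotropy

section Integral

lemma setLIntegral_le_lintegral_abs_det_fderiv_mul {E : Type*} [NormedAddCommGroup E]
    [NormedSpace ℝ E] [FiniteDimensional ℝ E] [MeasurableSpace E] [BorelSpace E] (μ : Measure E)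
    [μ.IsAddHaarMeasure] {f : E → E} (hf : Measurable f) {A P : Set E} (hA : MeasurableSet A)
    (hd : ∀ x ∈ A, DifferentiableAt ℝ f x) (hPA : P ⊆ f '' A) {w : E → ℝ≥0∞} (hw : Measurable w) :
    ∫⁻ p in P, w p ∂μ ≤ ∫⁻ x in A, ENNReal.ofReal |(fderiv ℝ f x).det| * w (f x) ∂μ := by
  have hdet : Measurable fun x => ENNReal.ofReal |(fderiv ℝ f x).det| :=
    ENNReal.measurable_ofReal.comp <| continuous_abs.measurable.comp <|
      ContinuousLinearMap.continuous_det.measurable.comp (measurable_fderiv ℝ f)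
  let ν := (μ.restrict A).withDensity fun x => ENNReal.ofReal |(fderiv ℝ f x).det|
  have hle : μ.restrict P ≤ ν.map f := Measure.le_iff.2 fun B hB => by
    rw [Measure.restrict_apply hB, Measure.map_apply hf hB, withDensity_apply _ (hf hB),
      Measure.restrict_restrict (hf hB)]
    calc μ (B ∩ P) ≤ μ (f '' (f ⁻¹' B ∩ A)) := measure_mono fun p ⟨hpB, hpP⟩ => by
          obtain ⟨x, hx, rfl⟩ := hPA hpP
          exact ⟨x, ⟨hpB, hx⟩, rfl⟩
      _ ≤ _ := addHaar_image_le_lintegral_abs_det_fderiv μ ((hf hB).inter hA)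
          fun x hx => (hd x hx.2).hasFDerivAt.hasFDerivWithinAt
  calc ∫⁻ p in P, w p ∂μ ≤ ∫⁻ p, w p ∂ν.map f := lintegral_mono' hle le_rfl
    _ = ∫⁻ x, w (f x) ∂ν := lintegral_map hw hf
    _ = _ := lintegral_withDensity_eq_lintegral_mul _ hdet (hw.comp hf)

/-- Hölder's inequality for `f = (f ^ 3 / g ^ 2) ^ (1 / 3) * g ^ (2 / 3)`. With `k = ∫ f / ∫ g`, the
proof integrates `f ^ 3 / g ^ 2 - 3 * k ^ 2 * f + 2 * k ^ 3 * g =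
(f - k * g) ^ 2 * (f + 2 * k * g) / g ^ 2 ≥ 0`. -/
lemma integral_pow_three_le {α : Type*} [MeasurableSpace α] {μ : Measure α} {f g : α → ℝ}
    (hf : ∀ x, 0 ≤ f x) (hg : ∀ x, 0 < g x) (hfi : Integrable f μ) (hgi : Integrable g μ)
    (hfg : Integrable (fun x => f x ^ 3 / g x ^ 2) μ) :
    (∫ x, f x ∂μ) ^ 3 ≤ (∫ x, g x ∂μ) ^ 2 * ∫ x, f x ^ 3 / g x ^ 2 ∂μ := by
  rcases eq_or_ne μ 0 with rfl | hμ
  · simp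
  have gpos : 0 < ∫ x, g x ∂μ := by
    refine (integral_pos_iff_support_of_nonneg (fun x => (hg x).le) hgi).2 ?_
    rw [Function.support_eq_univ fun x => (hg x).ne']
    exact Measure.measure_univ_pos.2 hμ
  let k := (∫ x, f x ∂μ) / ∫ x, g x ∂μ
  have hk : 0 ≤ k := div_nonneg (integral_nonneg hf) gpos.le
  have pointwise (x : α) : 0 ≤ f x ^ 3 / g x ^ 2 - 3 * k ^ 2 * f x + 2 * k ^ 3 * g x := by
    have := hg x
    have := hf x
    calc 0 ≤ (f x - k * g x) ^ 2 * (f x + 2 * k * g x) / g x ^ 2 := by positivity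
      _ = _ := by field_simp; ring
  have integrated : 0 ≤ ∫ x, f x ^ 3 / g x ^ 2 - 3 * k ^ 2 * f x + 2 * k ^ 3 * g x ∂μ :=
    integral_nonneg pointwise
  rw [integral_add (hfg.sub' (hfi.const_mul _)) (hgi.const_mul _),
    integral_sub hfg (hfi.const_mul _), integral_const_mul, integral_const_mul] at integrated
  have hfk : ∫ x, f x ∂μ = k * ∫ x, g x ∂μ := (div_mul_cancel₀ _ gpos.ne').symm
  rw [hfk] at integrated ⊢
  nlinarith [mul_nonneg (sq_nonneg (∫ x, g x ∂μ)) integrated]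

lemma lintegral_Ioi_mul_ite_mul_lt_one {d g : ℝ} (hd : 0 < d) (hg : 0 ≤ g) :
    ∫⁻ r in Ioi (0 : ℝ), ENNReal.ofReal r * (if r * d < 1 then ENNReal.ofReal g else 0) =
      ENNReal.ofReal (g / (2 * d ^ 2)) := by
  calc ∫⁻ r in Ioi (0 : ℝ), ENNReal.ofReal r * (if r * d < 1 then ENNReal.ofReal g else 0)
      = ∫⁻ r in Ioi (0 : ℝ), (Iio (1 / d)).indicator (fun r => ENNReal.ofReal (r * g)) r := by
        refine setLIntegral_congr_fun measurableSet_Ioi fun r (hr : 0 < r) => ?_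
        simp only [indicator, mem_Iio, lt_div_iff₀ hd, ENNReal.ofReal_mul hr.le, mul_ite, mul_zero]
    _ = ∫⁻ r in Ioo 0 (1 / d), ENNReal.ofReal (r * g) := by
        rw [lintegral_indicator measurableSet_Iio, Measure.restrict_restrict measurableSet_Iio,
          Iio_inter_Ioi]
    _ = ENNReal.ofReal (∫ r in (0 : ℝ)..(1 / d), r * g) := by
        rw [intervalIntegral.integral_of_le (by positivity), integral_Ioc_eq_integral_Ioo,
          ofReal_integral_eq_lintegral_ofReal]
        · exact (by fun_prop : Continuous fun r : ℝ => r * g).integrableOn_Icc.mono_set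
            Ioo_subset_Icc_self
        · filter_upwards [ae_restrict_mem measurableSet_Ioo] with r hr
          exact mul_nonneg hr.1.le hg
    _ = ENNReal.ofReal (g / (2 * d ^ 2)) := by
        rw [intervalIntegral.integral_mul_const, integral_id]
        congr 1
        field_simp
        ring

end Integral

section WulffArea

variable {H : E2 → ℝ}

namespace IsAnisoNorm

lemma lintegral_det_hessian_Fani (hH : IsAnisoNorm H) {Q : E2 → ℝ} (hQ : Continuous Q)
    (hom : ∀ r : ℝ, 0 < r → ∀ x, Q (r • x) = r * Q x) (hQpos : ∀ x, x ≠ 0 → 0 < Q x) :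
    ∫⁻ p in {p | p ≠ 0 ∧ Q p < 1}, ENNReal.ofReal (hessian (Fani H) p).det =
      ENNReal.ofReal (∫ θ in (-Real.pi)..Real.pi,
        angularProfile H θ ^ 3 * curvatureRadius H θ / (2 * Q (radialVec θ) ^ 2)) := by
  have pos (θ : ℝ) : 0 < Q (radialVec θ) := hQpos _ (radialVec_ne_zero θ)
  have density_nonneg (θ : ℝ) : 0 ≤ angularProfile H θ ^ 3 * curvatureRadius H θ :=
    mul_nonneg (pow_nonneg (hH.angularProfile_pos θ).le 3) (hH.curvatureRadius_pos θ).le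
  have hms : MeasurableSet {p | p ≠ 0 ∧ Q p < 1} :=
    (isOpen_ne.inter (isOpen_lt hQ continuous_const)).measurableSet
  have radial (θ : ℝ) : ∫⁻ r in Ioi (0 : ℝ), ENNReal.ofReal r * ({p | p ≠ 0 ∧ Q p < 1}.indicator
      (fun p => ENNReal.ofReal (hessian (Fani H) p).det) (r • radialVec θ)) = ENNReal.ofReal
        (angularProfile H θ ^ 3 * curvatureRadius H θ / (2 * Q (radialVec θ) ^ 2)) := by
    rw [← lintegral_Ioi_mul_ite_mul_lt_one (pos θ) (density_nonneg θ)]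
    refine setLIntegral_congr_fun measurableSet_Ioi fun r (hr : 0 < r) => ?_
    simp only [indicator, mem_ofPred_eq, hom r hr, hH.det_hessian_Fani_smul_radialVec hr.ne',
      ne_eq, smul_eq_zero, hr.ne', radialVec_ne_zero, or_self, not_false_eq_true, true_and]
  have cont : Continuous fun θ =>
      angularProfile H θ ^ 3 * curvatureRadius H θ / (2 * Q (radialVec θ) ^ 2) :=
    ((hH.continuous_angularProfile.pow 3).mul hH.continuous_curvatureRadius).div (by fun_prop)
      fun θ => by have := pos θ; positivity
  rw [← lintegral_indicator hms, lintegral_eq_lintegral_polar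
    ((measurable_det_hessian _).ennreal_ofReal.indicator hms)]
  simp only [radial]
  rw [intervalIntegral.integral_of_le (by linarith [Real.pi_pos]), integral_Ioc_eq_integral_Ioo,
    ofReal_integral_eq_lintegral_ofReal]
  · exact cont.integrableOn_Icc.mono_set Ioo_subset_Icc_self
  · exact .of_forall fun θ => div_nonneg (density_nonneg θ) (by positivity)

end IsAnisoNorm

/-- The area of the Wulff shape in terms of the support function `c` of its boundary:
`½ ∫ c (c + c'')`. -/
def wulffArea (H : E2 → ℝ) : ℝ :=
  (∫ θ in (-Real.pi)..Real.pi, angularProfile H θ * curvatureRadius H θ) / 2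

namespace IsAnisoNorm

lemma wulffArea_pos (hH : IsAnisoNorm H) : 0 < wulffArea H :=
  half_pos <| intervalIntegral.intervalIntegral_pos_of_pos
    ((hH.continuous_angularProfile.mul hH.continuous_curvatureRadius).intervalIntegrable _ _)
    (fun θ => mul_pos (hH.angularProfile_pos θ) (hH.curvatureRadius_pos θ))
    (by linarith [Real.pi_pos])

lemma inner_div_le_polar (hH : IsAnisoNorm H) {p : E2} (hp : p ≠ 0) (q : E2) :
    ⟪p, q⟫ / H p ≤ polar H q := by
  obtain ⟨α, hα, coercive⟩ := hH.coercive
  refine le_ciSup (f := fun ξ : {ξ : E2 // ξ ≠ 0} => ⟪(ξ : E2), q⟫ / H ξ) ⟨‖q‖ / α, ?_⟩ ⟨p, hp⟩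
  rintro _ ⟨⟨ξ, hξ⟩, rfl⟩
  rw [div_le_div_iff₀ (hH.pos hξ) hα]
  nlinarith [real_inner_le_norm ξ q, coercive ξ, norm_nonneg q]

lemma exists_forall_Fani_sub_inner_le (hH : IsAnisoNorm H) (q : E2) :
    ∃ p, ∀ y, Fani H p - ⟪q, p⟫ ≤ Fani H y - ⟪q, y⟫ := by
  obtain ⟨α, hα, coercive⟩ := hH.coercive
  have cont : Continuous fun p => Fani H p - ⟪q, p⟫ :=
    ((hH.continuous.pow 2).div_const 2).sub (by fun_prop)
  refine cont.exists_forall_le' 0 ?_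
  filter_upwards [(tendsto_norm_cocompact_atTop (E := E2)).eventually_ge_atTop
    (2 * ‖q‖ / α ^ 2)] with y hy
  rw [div_le_iff₀ (by positivity)] at hy
  have hsq : (α * ‖y‖) ^ 2 ≤ H y ^ 2 := pow_le_pow_left₀ (by positivity) (coercive y) 2
  rw [inner_zero_right, sub_zero, Fani, hH.map_zero, Fani]
  nlinarith [norm_nonneg y, real_inner_le_norm q y]

/-- If `p` minimizes `F - ⟪q, ·⟫`, then `∇F(p) = q`, hence `H(p)² = ⟪p, q⟫ ≤ H(p) H^o(q)`. -/
lemma Wulff_subset (hH : IsAnisoNorm H) :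
    Wulff H ⊆ {0} ∪ gradient (Fani H) '' {p | p ≠ 0 ∧ H p < 1} := by
  intro q hq
  refine or_iff_not_imp_left.2 fun hq0 => ?_
  obtain ⟨p, min⟩ := hH.exists_forall_Fani_sub_inner_le q
  have hp0 : p ≠ 0 := by
    rintro rfl
    have hqn : 0 < ‖q‖ := norm_pos_iff.2 hq0
    have hFq : 0 < Fani H q := half_pos (pow_pos (hH.pos hq0) 2)
    have := min ((‖q‖ ^ 2 / (2 * Fani H q)) • q)
    rw [hH.Fani_smul, real_inner_smul_right, real_inner_self_eq_norm_sq, inner_zero_right, Fani,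
      hH.map_zero, smul_eq_mul] at this
    have value : (‖q‖ ^ 2 / (2 * Fani H q)) ^ 2 * Fani H q -
        ‖q‖ ^ 2 / (2 * Fani H q) * ‖q‖ ^ 2 = -(‖q‖ ^ 4 / (4 * Fani H q)) := by
      field_simp
      ring
    have : 0 < ‖q‖ ^ 4 / (4 * Fani H q) := by positivity
    linarith
  have gradient_eq : gradient (Fani H) p = q :=
    gradient_eq_of_isLocalExtr (hH.differentiableAt_Fani hp0) (.inl (.of_forall min))
  have euler := hH.inner_gradient_Fani_self hp0
  rw [gradient_eq, real_inner_comm] at euler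
  have lt_one := (hH.inner_div_le_polar hp0 q).trans_lt hq
  rw [euler, sq, mul_div_cancel_right₀ _ (hH.pos hp0).ne'] at lt_one
  exact ⟨p, ⟨hp0, lt_one⟩, gradient_eq⟩

lemma kappa_le_wulffArea (hH : IsAnisoNorm H) : kappa H ≤ wulffArea H := by
  let B : Set E2 := {p | p ≠ 0 ∧ H p < 1}
  have hB : MeasurableSet B :=
    (isOpen_ne.inter (isOpen_lt hH.continuous continuous_const)).measurableSet
  refine ENNReal.toReal_le_of_le_ofReal hH.wulffArea_pos.le ?_
  calc volume (Wulff H) ≤ volume ({0} ∪ gradient (Fani H) '' B) := measure_mono hH.Wulff_subset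
    _ ≤ volume {(0 : E2)} + volume (gradient (Fani H) '' B) := measure_union_le _ _
    _ = volume (gradient (Fani H) '' B) := by rw [measure_singleton, zero_add]
    _ ≤ ∫⁻ p in B, ENNReal.ofReal |(fderiv ℝ (gradient (Fani H)) p).det| :=
        addHaar_image_le_lintegral_abs_det_fderiv volume hB fun p hp =>
          (differentiableAt_gradient (differentiableAt_fderiv
            (hH.contDiffAt_Fani hp.1))).hasFDerivAt.hasFDerivWithinAt
    _ = ∫⁻ p in B, ENNReal.ofReal (hessian (Fani H) p).det :=
        setLIntegral_congr_fun hB fun p hp => by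
          rw [← hH.det_hessian_Fani_eq hp.1, abs_of_pos (hH.det_hessian_Fani_pos hp.1)]
    _ = ENNReal.ofReal (wulffArea H) := by
        rw [hH.lintegral_det_hessian_Fani hH.continuous
          (fun r hr x => by rw [hH.homog, abs_of_pos hr]) fun x hx => hH.pos hx, wulffArea,
          ← intervalIntegral.integral_div]
        congr 2 with θ
        have := hH.angularProfile_pos θ
        change _ / (2 * angularProfile H θ ^ 2) = _
        field_simp

end IsAnisoNorm

end WulffArea

section MetricArea

lemma measure_le_of_locally_le {X : Type*} [TopologicalSpace X] [SecondCountableTopology X]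
    [MeasurableSpace X] [OpensMeasurableSpace X] {μ ν : Measure X}
    (h : ∀ x, ∃ U ∈ 𝓝 x, μ.restrict U ≤ ν.restrict U) : μ ≤ ν := by
  rcases isEmpty_or_nonempty X with hX | hX
  · rw [Measure.eq_zero_of_isEmpty μ]
    exact Measure.zero_le ν
  choose U hU hle using h
  obtain ⟨t, ht, htU⟩ :=
    TopologicalSpace.countable_cover_nhds fun x => interior_mem_nhds.2 (hU x)
  obtain ⟨g, rfl⟩ := ht.exists_eq_range <| by
    by_contra ht0
    rw [not_nonempty_iff_eq_empty.1 ht0, biUnion_empty] at htU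
    exact empty_ne_univ htU
  let V := disjointed fun n => interior (U (g n))
  have hV (n : ℕ) : MeasurableSet (V n) :=
    MeasurableSet.disjointed (fun n => isOpen_interior.measurableSet) n
  have cover : ⋃ n, V n = univ := by
    rw [iUnion_disjointed, ← htU, biUnion_range]
  have hVle (n : ℕ) : μ.restrict (V n) ≤ ν.restrict (V n) := by
    have hVU : V n ⊆ U (g n) := (disjointed_subset _ n).trans interior_subset
    rw [← Measure.restrict_restrict_of_subset (μ := μ) hVU,
      ← Measure.restrict_restrict_of_subset (μ := ν) hVU]
    exact Measure.restrict_mono subset_rfl (hle _)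
  rw [← μ.restrict_univ, ← ν.restrict_univ, ← cover,
    Measure.restrict_iUnion (disjoint_disjointed _) hV,
    Measure.restrict_iUnion (disjoint_disjointed _) hV]
  refine Measure.le_iff.2 fun B hB => ?_
  simp only [Measure.sum_apply _ hB]
  exact ENNReal.tsum_le_tsum fun n => hVle n B

variable {X Y : Type*} [MetricSpace X] [MetricSpace Y]

/-- `c` is the strict metric derivative of `f` at `x`: near `x` the map `f` multiplies distances by
`c`, up to an arbitrarily small relative error. -/
def HasStrictMetricDerivAt (f : X → Y) (c : ℝ) (x : X) : Prop :=
  ∀ ε > 0, ∀ᶠ p in 𝓝 (x, x), |dist (f p.1) (f p.2) - c * dist p.1 p.2| ≤ ε * dist p.1 p.2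

lemma HasStrictMetricDerivAt.exists_isOpen {f : X → Y} {c : ℝ} {x : X}
    (h : HasStrictMetricDerivAt f c x) {ε : ℝ} (hε : 0 < ε) :
    ∃ U, IsOpen U ∧ x ∈ U ∧
      ∀ y ∈ U, ∀ z ∈ U, |dist (f y) (f z) - c * dist y z| ≤ ε * dist y z := by
  obtain ⟨U, V, hU, hxU, hV, hxV, hUV⟩ := mem_nhds_prod_iff'.1 (h ε hε)
  exact ⟨U ∩ V, hU.inter hV, ⟨hxU, hxV⟩, fun y hy z hz => hUV (mk_mem_prod hy.1 hz.2)⟩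

lemma HasStrictMetricDerivAt.continuousAt {f : X → Y} {c : ℝ} {x : X}
    (h : HasStrictMetricDerivAt f c x) : ContinuousAt f x := by
  obtain ⟨U, hU, hxU, hlip⟩ := h.exists_isOpen one_pos
  refine tendsto_iff_dist_tendsto_zero.2 (squeeze_zero' (.of_forall fun _ => dist_nonneg)
    (g := fun y => (c + 1) * dist y x) ?_ ?_)
  · filter_upwards [hU.mem_nhds hxU] with y hy
    linarith [(abs_le.1 (hlip y hy x hxU)).2]
  · have : Continuous fun y => (c + 1) * dist y x := by fun_prop
    simpa using this.tendsto x

variable [MeasurableSpace X] [BorelSpace X]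

lemma hausdorffMeasure_one_subtype_univ (A : Set X) : μH[1] (univ : Set A) = μH[1] A := by
  simpa using (isometry_subtype_coe.hausdorffMeasure_image (.inl zero_le_one)
    (univ : Set A)).symm

variable [MeasurableSpace Y] [BorelSpace Y]

lemma hausdorffMeasure_image_le_of_dist_le {f : X → Y} {A : Set X} {k : ℝ}
    (h : ∀ x ∈ A, ∀ y ∈ A, dist (f x) (f y) ≤ k * dist x y) :
    μH[1] (f '' A) ≤ ENNReal.ofReal k * μH[1] A := by
  have lip : LipschitzOnWith k.toNNReal f A := .of_dist_le_mul fun x hx y hy =>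
    (h x hx y hy).trans (mul_le_mul_of_nonneg_right (Real.le_coe_toNNReal k) dist_nonneg)
  exact (lip.hausdorffMeasure_image_le zero_le_one).trans_eq (by rw [ENNReal.rpow_one]; rfl)

lemma mul_hausdorffMeasure_le_image_of_le_dist {f : X → Y} {A : Set X} {k : ℝ}
    (h : ∀ x ∈ A, ∀ y ∈ A, k * dist x y ≤ dist (f x) (f y)) :
    ENNReal.ofReal k * μH[1] A ≤ μH[1] (f '' A) := by
  rcases le_or_gt k 0 with hk | hk
  · simp [ENNReal.ofReal_of_nonpos hk]
  have anti : AntilipschitzWith (k⁻¹).toNNReal fun x : A => f x :=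
    .of_le_mul_dist fun x y => by
      rw [Real.coe_toNNReal _ (inv_pos.2 hk).le, inv_mul_eq_div, le_div_iff₀' hk]
      exact h x x.2 y y.2
  have image_eq : (fun x : A => f x) '' univ = f '' A := by
    rw [image_univ, ← image_eq_range]
  have main := anti.le_hausdorffMeasure_image zero_le_one univ
  rw [hausdorffMeasure_one_subtype_univ, image_eq, ENNReal.rpow_one] at main
  calc ENNReal.ofReal k * μH[1] A
      ≤ ENNReal.ofReal k * (ENNReal.ofReal k⁻¹ * μH[1] (f '' A)) := by gcongr; exact main
    _ = μH[1] (f '' A) := by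
      rw [← mul_assoc, ← ENNReal.ofReal_mul hk.le, mul_inv_cancel₀ hk.ne', ENNReal.ofReal_one,
        one_mul]

lemma exists_restrict_comap_le {f : X → Y} (hf : MeasurableEmbedding f) {J : X → ℝ}
    (hJ : Continuous J) {x : X} (hd : HasStrictMetricDerivAt f (J x) x) {ε : ℝ} (hε : 0 < ε) :
    ∃ U ∈ 𝓝 x,
      (μH[1].comap f).restrict U ≤
        (μH[1].withDensity (fun y => ENNReal.ofReal (J y)) +
          ENNReal.ofReal (2 * ε) • μH[1]).restrict U ∧
      (μH[1].withDensity fun y => ENNReal.ofReal (J y)).restrict U ≤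
        (μH[1].comap f + ENNReal.ofReal (2 * ε) • μH[1]).restrict U := by
  obtain ⟨U, hU, hxU, hfU⟩ := hd.exists_isOpen hε
  let V := U ∩ {y | |J y - J x| < ε}
  have hV : IsOpen V := hU.inter (isOpen_lt (by fun_prop) continuous_const)
  have hJm : Measurable fun y => ENNReal.ofReal (J y) := hJ.measurable.ennreal_ofReal
  refine ⟨V, hV.mem_nhds ⟨hxU, by simpa using hε⟩, Measure.le_iff.2 fun B hB => ?_,
    Measure.le_iff.2 fun B hB => ?_⟩ <;>
  rw [Measure.restrict_apply hB, Measure.restrict_apply hB, Measure.add_apply,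
    hf.comap_apply, Measure.smul_apply, smul_eq_mul,
    withDensity_apply _ (hB.inter hV.measurableSet), ← setLIntegral_const]
  · rw [← lintegral_add_left hJm]
    calc μH[1] (f '' (B ∩ V)) ≤ ENNReal.ofReal (J x + ε) * μH[1] (B ∩ V) :=
          hausdorffMeasure_image_le_of_dist_le fun y hy z hz => by
            linarith [(abs_le.1 (hfU y hy.2.1 z hz.2.1)).2]
      _ ≤ _ := by
          rw [← setLIntegral_const]
          refine setLIntegral_mono (hJm.add_const _) fun y hy => ?_
          refine (ENNReal.ofReal_le_ofReal ?_).trans ENNReal.ofReal_add_le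
          linarith [(abs_lt.1 (mem_ofPred.1 hy.2.2)).1]
  · calc ∫⁻ y in B ∩ V, ENNReal.ofReal (J y) ∂μH[1]
        ≤ ∫⁻ _ in B ∩ V, (ENNReal.ofReal (J x - ε) + ENNReal.ofReal (2 * ε)) ∂μH[1] := by
          refine setLIntegral_mono measurable_const fun y hy => ?_
          refine (ENNReal.ofReal_le_ofReal ?_).trans ENNReal.ofReal_add_le
          linarith [(abs_lt.1 (mem_ofPred.1 hy.2.2)).2]
      _ ≤ _ := by
          rw [lintegral_add_left measurable_const, setLIntegral_const]
          gcongr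
          exact mul_hausdorffMeasure_le_image_of_le_dist fun y hy z hz => by
            linarith [(abs_le.1 (hfU y hy.2.1 z hz.2.1)).1]

lemma hausdorffMeasure_univ_lt_top [CompactSpace X] (h : ∀ x : X, ∃ f : X → ℝ, Continuous f ∧
    ∃ c > 0, HasStrictMetricDerivAt f c x) : μH[1] (univ : Set X) < ∞ := by
  refine isCompact_univ.measure_lt_top_of_nhdsWithin fun x _ => ?_
  obtain ⟨f, hf, c, hc, hd⟩ := h x
  obtain ⟨U, hU, hxU, hfU⟩ := hd.exists_isOpen (half_pos hc)
  refine ⟨U, mem_nhdsWithin_of_mem_nhds (hU.mem_nhds hxU), ?_⟩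
  have image_finite : μH[1] (f '' U) < ∞ := by
    rw [hausdorffMeasure_real]
    exact (measure_mono (image_subset_range f U)).trans_lt (isCompact_range hf).measure_lt_top
  have le_image : ENNReal.ofReal (c / 2) * μH[1] U ≤ μH[1] (f '' U) :=
    mul_hausdorffMeasure_le_image_of_le_dist fun y hy z hz => by
      linarith [(abs_le.1 (hfU y hy z hz)).1]
  exact ENNReal.lt_top_of_mul_ne_top_right (le_image.trans_lt image_finite).ne
    (by simpa using hc)

variable [SecondCountableTopology X] [StandardBorelSpace X] [SecondCountableTopology Y]

lemma lintegral_eq_hausdorffMeasure_range {f : X → Y} (hf : Function.Injective f) {J : X → ℝ}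
    (hJ : Continuous J) (hd : ∀ x, HasStrictMetricDerivAt f (J x) x)
    (hfin : μH[1] (univ : Set X) ≠ ∞) :
    ∫⁻ x, ENNReal.ofReal (J x) ∂μH[1] = μH[1] (range f) := by
  have hfe : MeasurableEmbedding f := (continuous_iff_continuousAt.2 fun x =>
    (hd x).continuousAt).measurable.measurableEmbedding hf
  have small (b : ℝ≥0∞) : Tendsto (fun ε : ℝ => b + ENNReal.ofReal (2 * ε) * μH[1] (univ : Set X))
      (𝓝[>] 0) (𝓝 b) := by
    have h : Tendsto (fun ε : ℝ => ENNReal.ofReal (2 * ε)) (𝓝[>] 0) (𝓝 0) := by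
      have : Continuous fun ε : ℝ => ENNReal.ofReal (2 * ε) :=
        ENNReal.continuous_ofReal.comp (by fun_prop)
      simpa using (this.tendsto 0).mono_left nhdsWithin_le_nhds
    simpa using (ENNReal.Tendsto.mul_const h (.inr hfin)).const_add b
  have range_eq : μH[1] (range f) = μH[1].comap f univ := by rw [hfe.comap_apply, image_univ]
  have integral_eq : ∫⁻ x, ENNReal.ofReal (J x) ∂μH[1] =
      μH[1].withDensity (fun x => ENNReal.ofReal (J x)) univ := by
    rw [withDensity_apply _ .univ, setLIntegral_univ]
  rw [range_eq, integral_eq]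
  refine le_antisymm (ge_of_tendsto (small _) ?_) (ge_of_tendsto (small _) ?_) <;>
  filter_upwards [self_mem_nhdsWithin] with ε (hε : 0 < ε)
  · exact measure_le_of_locally_le (fun x =>
      (exists_restrict_comap_le hfe hJ (hd x) hε).imp fun U hU => ⟨hU.1, hU.2.2⟩) univ
  · exact measure_le_of_locally_le (fun x =>
      (exists_restrict_comap_le hfe hJ (hd x) hε).imp fun U hU => ⟨hU.1, hU.2.1⟩) univ

lemma setLIntegral_eq_hausdorffMeasure_image {f : X → Y} {A : Set X} (hA : MeasurableSet A)
    (hf : InjOn f A) {J : X → ℝ} (hJ : ContinuousOn J A)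
    (hd : ∀ x : A, HasStrictMetricDerivAt (fun y : A => f y) (J x) x) (hfin : μH[1] A ≠ ∞) :
    ∫⁻ x in A, ENNReal.ofReal (J x) ∂μH[1] = μH[1] (f '' A) := by
  have : StandardBorelSpace A := hA.standardBorel
  calc ∫⁻ x in A, ENNReal.ofReal (J x) ∂μH[1]
      = ∫⁻ x : A, ENNReal.ofReal (J x) ∂μH[1] := by
        rw [← (MeasurableEmbedding.subtype_coe hA).lintegral_map fun x => ENNReal.ofReal (J x),
          isometry_subtype_coe.map_hausdorffMeasure (.inl zero_le_one), Subtype.range_coe]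
    _ = μH[1] (f '' A) := by
        rw [image_eq_range]
        exact lintegral_eq_hausdorffMeasure_range (injOn_iff_injective.1 hf) hJ.domRestrict hd
          (by rwa [hausdorffMeasure_one_subtype_univ])

end MetricArea

section StrictNormal

variable {E : Type*} [NormedAddCommGroup E] [InnerProductSpace ℝ E] {Γ : Set E} {ν x : E}

/-- The secants of `Γ` near `x` are asymptotically orthogonal to `ν`. This is a notion of normal
vector which does not require `Γ` to be parametrized. -/
def IsStrictNormalAt (Γ : Set E) (ν x : E) : Prop :=
  (fun p : E × E => ⟪ν, p.1 - p.2⟫) =o[𝓝[Γ ×ˢ Γ] (x, x)] fun p => p.1 - p.2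

lemma IsStrictNormalAt.mono {Γ' : Set E} (h : IsStrictNormalAt Γ ν x) (hΓ : Γ' ⊆ Γ) :
    IsStrictNormalAt Γ' ν x :=
  Asymptotics.IsLittleO.mono h (nhdsWithin_mono _ (prod_mono hΓ hΓ))

lemma IsStrictNormalAt.const_smul (h : IsStrictNormalAt Γ ν x) (c : ℝ) :
    IsStrictNormalAt Γ (c • ν) x := by
  simpa only [IsStrictNormalAt, real_inner_smul_left] using
    Asymptotics.IsLittleO.const_mul_left h c

lemma isStrictNormalAt_gradient [CompleteSpace E] {u : E → ℝ} {t : ℝ}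
    (hu : HasStrictFDerivAt u (fderiv ℝ u x) x) (hΓ : ∀ y ∈ Γ, u y = t) :
    IsStrictNormalAt Γ (gradient u x) x := by
  refine ((hu.isLittleO.mono nhdsWithin_le_nhds).neg_left).congr' ?_ .rfl
  filter_upwards [self_mem_nhdsWithin] with p hp
  simp [inner_gradient_left, hΓ _ hp.1, hΓ _ hp.2]

end StrictNormal

section PlaneCurve

variable {Γ : Set E2} {ν : E2 → E2}

lemma abs_abs_inner_radialVec_sub_le {n v : E2} (hn : ‖n‖ = 1) (θ : ℝ) {ε : ℝ}
    (h : |⟪n, v⟫| ≤ ε * ‖v‖) :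
    |(|⟪radialVec θ, v⟫| - |⟪n, angularVec θ⟫| * ‖v‖)| ≤ 2 * ε * ‖v‖ := by
  obtain ⟨φ, rfl⟩ := exists_eq_radialVec hn
  set a := ⟪radialVec φ, v⟫
  set b := ⟪angularVec φ, v⟫
  have hsin : ⟪radialVec θ, angularVec φ⟫ = -⟪radialVec φ, angularVec θ⟫ := by
    rw [inner_radialVec_angularVec_eq_sin, inner_radialVec_angularVec_eq_sin, ← neg_sub,
      Real.sin_neg, neg_neg]
  have expand : ⟪radialVec θ, v⟫ =
      a * ⟪radialVec θ, radialVec φ⟫ - b * ⟪radialVec φ, angularVec θ⟫ := by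
    conv_lhs => rw [← inner_radialVec_smul_add φ v]
    rw [inner_add_right, real_inner_smul_right, real_inner_smul_right, hsin, mul_neg,
      ← sub_eq_add_neg]
  have unit_inner {x y : E2} (hx : ‖x‖ = 1) (hy : ‖y‖ = 1) : |⟪x, y⟫| ≤ 1 := by
    simpa [hx, hy] using abs_real_inner_le_norm x y
  have hσ := unit_inner hn (norm_angularVec θ)
  have hτ := unit_inner (norm_radialVec θ) hn
  have norm_le : ‖v‖ ≤ |a| + |b| := by
    conv_lhs => rw [← inner_radialVec_smul_add φ v]
    simpa [norm_smul] using norm_add_le (a • radialVec φ) (b • angularVec φ)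
  have le_norm : |b| ≤ ‖v‖ := by
    simpa using abs_real_inner_le_norm (angularVec φ) v
  set σ := ⟪radialVec φ, angularVec θ⟫
  have first : |(|⟪radialVec θ, v⟫| - |b * σ|)| ≤ |a| := by
    rw [← abs_neg (b * σ)]
    refine (abs_abs_sub_abs_le_abs_sub _ _).trans ?_
    rw [expand, sub_neg_eq_add, sub_add_cancel, abs_mul]
    exact mul_le_of_le_one_right (abs_nonneg a) hτ
  have second : |(|b * σ| - |σ| * ‖v‖)| ≤ |a| := by
    rw [abs_mul, mul_comm, ← mul_sub, abs_mul, abs_abs, abs_sub_comm,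
      abs_of_nonneg (sub_nonneg.2 le_norm)]
    exact (mul_le_of_le_one_left (sub_nonneg.2 le_norm) hσ).trans (by linarith)
  calc |(|⟪radialVec θ, v⟫| - |σ| * ‖v‖)|
      ≤ |(|⟪radialVec θ, v⟫| - |b * σ|)| + |(|b * σ| - |σ| * ‖v‖)| := abs_sub_le _ _ _
    _ ≤ |a| + |a| := add_le_add first second
    _ ≤ 2 * ε * ‖v‖ := by linarith

lemma hasStrictMetricDerivAt_inner_radialVec {A : Set E2} {n : E2} {x : A} (hn : ‖n‖ = 1)
    (h : IsStrictNormalAt A n (x : E2)) (θ : ℝ) :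
    HasStrictMetricDerivAt (fun y : A => ⟪radialVec θ, (y : E2)⟫) |⟪n, angularVec θ⟫| x := by
  intro ε hε
  have hev : ∀ᶠ p : E2 × E2 in 𝓝[(A : Set E2) ×ˢ A] ((x : E2), (x : E2)),
      |⟪n, p.1 - p.2⟫| ≤ ε / 2 * ‖p.1 - p.2‖ := by
    simpa using Asymptotics.IsLittleO.bound h (half_pos hε)
  have coe : Tendsto (fun p : A × A => ((p.1 : E2), (p.2 : E2))) (𝓝 (x, x))
      (𝓝[(A : Set E2) ×ˢ A] ((x : E2), (x : E2))) :=
    tendsto_nhdsWithin_iff.2 ⟨(by fun_prop : Continuous fun p : A × A =>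
      ((p.1 : E2), (p.2 : E2))).tendsto _, .of_forall fun p => ⟨p.1.2, p.2.2⟩⟩
  filter_upwards [coe.eventually hev] with p hp
  have bound := abs_abs_inner_radialVec_sub_le hn θ hp
  rw [mul_div_cancel₀ _ two_ne_zero] at bound
  rwa [Real.dist_eq, ← inner_sub_right, Subtype.dist_eq, dist_eq_norm]

lemma hausdorffMeasure_lt_top_of_isStrictNormalAt (hΓ : IsCompact Γ) (hν : ∀ x ∈ Γ, ‖ν x‖ = 1)
    (h : ∀ x ∈ Γ, IsStrictNormalAt Γ (ν x) x) : μH[1] Γ < ∞ := by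
  have := isCompact_iff_compactSpace.1 hΓ
  rw [← hausdorffMeasure_one_subtype_univ]
  refine hausdorffMeasure_univ_lt_top fun x => ?_
  obtain ⟨φ, hφ⟩ := exists_eq_radialVec (hν x x.2)
  refine ⟨fun y : Γ => ⟪radialVec (φ + Real.pi / 2), (y : E2)⟫, by fun_prop, _, ?_,
    hasStrictMetricDerivAt_inner_radialVec (hν x x.2) (h x x.2) _⟩
  simp [hφ, inner_radialVec_angularVec_eq_sin]

lemma setLIntegral_abs_inner_angularVec_eq_volume_image (hν : ∀ x ∈ Γ, ‖ν x‖ = 1)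
    (hνc : ContinuousOn ν Γ) (h : ∀ x ∈ Γ, IsStrictNormalAt Γ (ν x) x) (hfin : μH[1] Γ < ∞)
    (θ : ℝ) {A : Set E2} (hA : MeasurableSet A) (hAΓ : A ⊆ Γ)
    (hinj : InjOn (fun x : E2 => ⟪radialVec θ, x⟫) A) :
    ∫⁻ x in A, ENNReal.ofReal |⟪ν x, angularVec θ⟫| ∂μH[1] =
      volume ((fun x : E2 => ⟪radialVec θ, x⟫) '' A) := by
  rw [← hausdorffMeasure_real]
  exact setLIntegral_eq_hausdorffMeasure_image hA hinj
    (continuous_abs.comp_continuousOn ((hνc.mono hAΓ).inner continuousOn_const))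
    (fun x => hasStrictMetricDerivAt_inner_radialVec (hν x (hAΓ x.2))
      ((h x (hAΓ x.2)).mono hAΓ) θ)
    ((measure_mono hAΓ).trans_lt hfin).ne

end PlaneCurve

section Admissible

/-- The pairs `(Ω, u)` under study: `u` is a function of class `Φ₀` on a bounded open set `Ω`, of
class `C²` where it is below its maximum. The field `concave` of `MemPhi0` contains the convexity
of `Ω`. -/
structure Admissible (Ω : Set E2) (u : E2 → ℝ) : Prop where
  isOpen : IsOpen Ω
  isBounded : Bornology.IsBounded Ω
  memPhi0 : MemPhi0 Ω u
  contDiffOn_Eu : ContDiffOn ℝ 2 u (Eu Ω u)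

namespace Admissible

variable {Ω : Set E2} {u : E2 → ℝ} {x y : E2}

lemma isCompact_closure (h : Admissible Ω u) : IsCompact (closure Ω) :=
  h.isBounded.isCompact_closure

lemma continuousOn (h : Admissible Ω u) : ContinuousOn u (closure Ω) := h.memPhi0.c1.continuousOn

lemma le_maxcl (h : Admissible Ω u) (hx : x ∈ closure Ω) : u x ≤ maxcl Ω u :=
  le_csSup (h.isCompact_closure.image_of_continuousOn h.continuousOn).bddAbove ⟨x, hx, rfl⟩

lemma mem_of_ne_zero (h : Admissible Ω u) (hx : x ∈ closure Ω) (hux : u x ≠ 0) : x ∈ Ω :=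
  by_contra fun hxΩ => hux (h.memPhi0.bzero x ⟨hx, by rwa [h.isOpen.interior_eq]⟩)

lemma contDiffAt_one (h : Admissible Ω u) (hx : x ∈ Ω) : ContDiffAt ℝ 1 u x :=
  h.memPhi0.c1.contDiffAt (mem_of_superset (h.isOpen.mem_nhds hx) subset_closure)

lemma differentiableAt (h : Admissible Ω u) (hx : x ∈ Ω) : DifferentiableAt ℝ u x :=
  (h.contDiffAt_one hx).differentiableAt one_ne_zero

lemma le_add_fderiv (h : Admissible Ω u) (hx : x ∈ Ω) (hy : y ∈ closure Ω) :
    u y ≤ u x + fderiv ℝ u x (y - x) :=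
  le_add_fderiv_of_mem_closure h.memPhi0.concave h.continuousOn hx hy (h.differentiableAt hx)

lemma nonneg (h : Admissible Ω u) (hx : x ∈ Ω) : 0 ≤ u x := by
  obtain ⟨w, hw, descent⟩ : ∃ w : E2, w ≠ 0 ∧ fderiv ℝ u x w ≤ 0 := by
    rcases le_total (fderiv ℝ u x (radialVec 0)) 0 with hle | hle
    · exact ⟨_, radialVec_ne_zero 0, hle⟩
    · exact ⟨_, neg_ne_zero.2 (radialVec_ne_zero 0), by simpa using hle⟩
  obtain ⟨τ, hτ, hz⟩ := exists_ray_mem_frontier h.isBounded hx hw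
  calc 0 = u (x + τ • w) := (h.memPhi0.bzero _ hz).symm
    _ ≤ u x + τ * fderiv ℝ u x w := by simpa using h.le_add_fderiv hx (frontier_subset_closure hz)
    _ ≤ u x := add_le_of_nonpos_right (mul_nonpos_of_nonneg_of_nonpos hτ descent)

lemma Eu_eq (h : Admissible Ω u) : Eu Ω u = {x ∈ Ω | u x < maxcl Ω u} :=
  Set.ext fun _ => ⟨fun hx => ⟨hx.1, hx.2.2⟩, fun hx => ⟨hx.1, h.nonneg hx.1, hx.2⟩⟩

lemma isOpen_Eu (h : Admissible Ω u) : IsOpen (Eu Ω u) := by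
  rw [h.Eu_eq]
  exact (h.continuousOn.mono subset_closure).isOpen_inter_preimage h.isOpen isOpen_Iio

lemma exists_eq_maxcl (h : Admissible Ω u) (hΩ : Ω.Nonempty) : ∃ x ∈ closure Ω, u x = maxcl Ω u :=
  (h.isCompact_closure.image_of_continuousOn h.continuousOn).sSup_mem (hΩ.closure.image u)

lemma gradient_ne_zero (h : Admissible Ω u) (hx : x ∈ Eu Ω u) : gradient u x ≠ 0 := fun h0 => by
  obtain ⟨y, hy, hmax⟩ := h.exists_eq_maxcl ⟨x, hx.1⟩
  have := h.le_add_fderiv hx.1 hy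
  rw [← inner_gradient_left, h0, inner_zero_left, add_zero, hmax] at this
  exact this.not_gt hx.2.2

lemma fderiv_eq_zero (h : Admissible Ω u) (hx : x ∈ Ω) (hmax : u x = maxcl Ω u) :
    fderiv ℝ u x = 0 :=
  IsLocalMax.fderiv_eq_zero <| by
    filter_upwards [h.isOpen.mem_nhds hx] with y hy
    exact hmax ▸ h.le_maxcl (subset_closure hy)

lemma differentiableAt_fderiv (h : Admissible Ω u) (hx : x ∈ Eu Ω u) :
    DifferentiableAt ℝ (fderiv ℝ u) x :=
  _root_.differentiableAt_fderiv (h.contDiffOn_Eu.contDiffAt (h.isOpen_Eu.mem_nhds hx))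

lemma det_hessian_nonneg (h : Admissible Ω u) (hx : x ∈ Eu Ω u) : 0 ≤ (hessian u x).det := by
  refine det_nonneg_of_forall_form_nonpos fun v => ?_
  rw [sum_hessian_mul_mul (h.differentiableAt_fderiv hx)]
  exact fderiv_fderiv_apply_self_nonpos h.memPhi0.concave h.isOpen
    (fun y hy => (h.differentiableAt hy).differentiableWithinAt) hx.1
    (h.differentiableAt_fderiv hx) v

lemma hessian_eq_zero_ae (h : Admissible Ω u) :
    ∀ᵐ x ∂volume.restrict Ω, x ∉ Eu Ω u → hessian u x = 0 := by
  have hfr := (h.memPhi0.concave.convex_ge (maxcl Ω u)).addHaar_frontier volume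
  filter_upwards [ae_restrict_mem h.isOpen.measurableSet,
    ae_restrict_of_ae (measure_eq_zero_iff_ae_notMem.1 hfr)] with x hxΩ hx hxE
  have hmem : x ∈ {x ∈ Ω | maxcl Ω u ≤ u x} :=
    ⟨hxΩ, le_of_not_gt fun hlt => hxE (h.Eu_eq ▸ ⟨hxΩ, hlt⟩)⟩
  have hnhds : {x ∈ Ω | maxcl Ω u ≤ u x} ∈ 𝓝 x :=
    mem_interior_iff_mem_nhds.1 (by_contra fun hi => hx ⟨subset_closure hmem, hi⟩)
  ext i j
  have : pd u j =ᶠ[𝓝 x] 0 := by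
    filter_upwards [hnhds] with y hy
    rw [pd, h.fderiv_eq_zero hy.1 ((h.le_maxcl (subset_closure hy.1)).antisymm hy.2)]
    rfl
  rw [hessian, Matrix.of_apply, pd, this.fderiv_eq]
  simp

end Admissible

end Admissible

section MongeAmpere

lemma IsAnisoNorm.exists_abs_det_hessian_Fani_le {H : E2 → ℝ} (hH : IsAnisoNorm H) :
    ∃ C, 0 ≤ C ∧ ∀ ξ, ξ ≠ 0 → |(hessian (Fani H) ξ).det| ≤ C := by
  have bounded := ((hH.periodic_angularProfile.comp (· ^ 3)).mul
    hH.periodic_curvatureRadius).isBounded_of_continuous Real.pi_ne_zero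
    (((continuous_pow 3).comp hH.continuous_angularProfile).mul hH.continuous_curvatureRadius)
  obtain ⟨C, hC0, hC⟩ := bounded.exists_pos_norm_le
  refine ⟨C, hC0.le, fun ξ hξ => ?_⟩
  obtain ⟨θ, hθ⟩ := exists_eq_norm_smul_radialVec ξ
  rw [hθ, hH.det_hessian_Fani_smul_radialVec (norm_ne_zero_iff.2 hξ)]
  exact hC _ ⟨θ, rfl⟩

lemma measurable_detH (H u : E2 → ℝ) : Measurable (detH H u) :=
  ((measurable_det_hessian (Fani H)).comp (measurable_gradient u)).mul (measurable_det_hessian u)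

namespace Admissible

variable {Ω : Set E2} {u H : E2 → ℝ} {x : E2}

lemma detH_eq_zero_ae (h : Admissible Ω u) (H : E2 → ℝ) :
    ∀ᵐ x ∂volume.restrict Ω, x ∉ Eu Ω u → detH H u x = 0 := by
  filter_upwards [h.hessian_eq_zero_ae] with x hx hxE
  rw [detH, hx hxE, Matrix.det_zero, mul_zero]

lemma detH_nonneg (h : Admissible Ω u) (hH : IsAnisoNorm H) (hx : x ∈ Eu Ω u) :
    0 ≤ detH H u x :=
  mul_nonneg (hH.det_hessian_Fani_pos (h.gradient_ne_zero hx)).le (h.det_hessian_nonneg hx)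

lemma mul_detH_nonneg_ae (h : Admissible Ω u) (hH : IsAnisoNorm H) :
    0 ≤ᵐ[volume.restrict Ω] fun x => u x * detH H u x := by
  filter_upwards [h.detH_eq_zero_ae H, ae_restrict_mem h.isOpen.measurableSet] with x hx hxΩ
  by_cases hxE : x ∈ Eu Ω u
  · exact mul_nonneg (h.nonneg hxΩ) (h.detH_nonneg hH hxE)
  · simp [hx hxE]

lemma integrableOn_mul_detH (h : Admissible Ω u) (hH : IsAnisoNorm H) :
    IntegrableOn (fun x => u x * detH H u x) Ω := by
  obtain ⟨C, hC0, hC⟩ := hH.exists_abs_det_hessian_Fani_le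
  have hdet : Integrable (fun x => (hessian u x).det) (volume.restrict Ω) := by
    have := ((h.memPhi0.sobolev 0 0).integrable_mul (h.memPhi0.sobolev 1 1)).sub
      ((h.memPhi0.sobolev 0 1).integrable_mul (h.memPhi0.sobolev 1 0))
    exact this.congr (.of_forall fun x => (Matrix.det_fin_two _).symm)
  have hdetH : Integrable (detH H u) (volume.restrict Ω) := by
    refine (hdet.norm.const_mul C).mono' (measurable_detH H u).aestronglyMeasurable ?_
    filter_upwards [h.detH_eq_zero_ae H] with x hx
    by_cases hxE : x ∈ Eu Ω u
    · rw [detH, norm_mul]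
      exact mul_le_mul_of_nonneg_right (hC _ (h.gradient_ne_zero hxE)) (norm_nonneg _)
    · rw [hx hxE, norm_zero]
      positivity
  refine hdetH.bdd_mul (c := maxcl Ω u) ((h.continuousOn.mono
    subset_closure).aestronglyMeasurable h.isOpen.measurableSet) ?_
  filter_upwards [ae_restrict_mem h.isOpen.measurableSet] with x hx
  rw [Real.norm_of_nonneg (h.nonneg hx)]
  exact h.le_maxcl (subset_closure hx)

end Admissible

end MongeAmpere

section SupportFunction

variable {E : Type*} [NormedAddCommGroup E] [InnerProductSpace ℝ E] {K L : Set E} {x v : E}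

/-- The support function `h_K(v) = sup_{x ∈ K} ⟪v, x⟫`. As suprema are taken in `ℝ`, its value is
meaningless when `K` is empty or unbounded in the direction `v`. -/
def supportFun (K : Set E) (v : E) : ℝ := sSup ((⟪v, ·⟫) '' K)

lemma inner_le_supportFun (hK : IsCompact K) (hx : x ∈ K) (v : E) : ⟪v, x⟫ ≤ supportFun K v :=
  le_csSup (hK.image (by fun_prop)).bddAbove ⟨x, hx, rfl⟩

lemma exists_inner_eq_supportFun (hK : IsCompact K) (hne : K.Nonempty) (v : E) :
    ∃ x ∈ K, ⟪v, x⟫ = supportFun K v :=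
  (hK.image (f := fun x : E => ⟪v, x⟫) (by fun_prop)).sSup_mem (hne.image _)

lemma continuous_supportFun (hK : IsCompact K) : Continuous (supportFun K) :=
  hK.continuous_sSup (f := fun v x : E => ⟪v, x⟫) continuous_inner

lemma supportFun_smul {r : ℝ} (hr : 0 ≤ r) (K : Set E) (v : E) :
    supportFun K (r • v) = r * supportFun K v := by
  rw [supportFun, supportFun, ← smul_eq_mul, ← Real.sSup_smul_of_nonneg hr, ← image_smul,
    image_image]
  simp only [real_inner_smul_left, smul_eq_mul]

lemma supportFun_lt_of_subset_interior (hK : IsCompact K) (hne : K.Nonempty) (hL : IsCompact L)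
    (hKL : K ⊆ interior L) (hv : v ≠ 0) : supportFun K v < supportFun L v := by
  obtain ⟨x, hx, hxv⟩ := exists_inner_eq_supportFun hK hne v
  have near : ∀ᶠ s : ℝ in 𝓝[>] 0, x + s • v ∈ L := by
    refine nhdsWithin_le_nhds ((hasDerivAt_add_smul x v 0).continuousAt.eventually ?_)
    simpa using mem_interior_iff_mem_nhds.1 (hKL hx)
  obtain ⟨s, hs, hs0 : 0 < s⟩ := (near.and self_mem_nhdsWithin).exists
  calc supportFun K v = ⟪v, x⟫ := hxv.symm
    _ < ⟪v, x⟫ + s * ⟪v, v⟫ := lt_add_of_pos_right _ (mul_pos hs0 (real_inner_self_pos.2 hv))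
    _ = ⟪v, x + s • v⟫ := by rw [inner_add_right, real_inner_smul_right]
    _ ≤ supportFun L v := inner_le_supportFun hL hs v

lemma neg_supportFun_neg_le (hK : IsCompact K) (hx : x ∈ K) (v : E) :
    -supportFun K (-v) ≤ ⟪v, x⟫ := by
  have := inner_le_supportFun hK hx (-v)
  rw [inner_neg_left] at this
  linarith

lemma Ioo_subset_image_inner_interior (hK : IsCompact K) (hc : Convex ℝ K)
    (hinterior : (interior K).Nonempty) (v : E) :
    Ioo (-supportFun K (-v)) (supportFun K v) ⊆ (⟪v, ·⟫) '' interior K := by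
  have approx : ∀ (w : E) (r : ℝ), r < supportFun K w → ∃ z ∈ interior K, r < ⟪w, z⟫ := by
    intro w r hr
    obtain ⟨a, ha, haw⟩ := exists_inner_eq_supportFun hK (hinterior.mono interior_subset) w
    have ha' : a ∈ closure (interior K) := by
      rw [hc.closure_interior_eq_closure_of_nonempty_interior hinterior]
      exact subset_closure ha
    obtain ⟨z, hzr, hz⟩ := mem_closure_iff.1 ha' {z | r < ⟪w, z⟫}
      (isOpen_lt continuous_const (by fun_prop)) (hr.trans_eq haw.symm)
    exact ⟨z, hz, hzr⟩
  rintro r ⟨hr1, hr2⟩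
  obtain ⟨z, hz, hrz⟩ := approx v r hr2
  obtain ⟨z', hz', hrz'⟩ := approx (-v) (-r) (by linarith)
  rw [inner_neg_left] at hrz'
  have conn := hc.interior.isPreconnected.image (⟪v, ·⟫) (by fun_prop)
  exact conn.ordConnected.out ⟨z', hz', rfl⟩ ⟨z, hz, rfl⟩ ⟨by linarith, hrz.le⟩

end SupportFunction

section SuperLevel

/-- The closed superlevel set `K_t = {u ≥ t}` in `Ω̄`. -/
def closedSuperLevel (Ω : Set E2) (u : E2 → ℝ) (t : ℝ) : Set E2 := {x ∈ closure Ω | t ≤ u x}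

namespace Admissible

variable {Ω : Set E2} {u : E2 → ℝ} {x : E2} {t t' : ℝ}

lemma isCompact_closedSuperLevel (h : Admissible Ω u) (t : ℝ) :
    IsCompact (closedSuperLevel Ω u t) :=
  h.isCompact_closure.of_isClosed_subset
    (h.continuousOn.preimage_isClosed_of_isClosed isClosed_closure isClosed_Ici) inter_subset_left

lemma isCompact_levelSet (h : Admissible Ω u) (t : ℝ) : IsCompact (levelSet Ω u t) :=
  h.isCompact_closure.of_isClosed_subset
    (h.continuousOn.preimage_isClosed_of_isClosed isClosed_closure isClosed_singleton)
    inter_subset_left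

lemma isOpen_superLevel (h : Admissible Ω u) (t : ℝ) : IsOpen (superLevel Ω u t) :=
  (h.continuousOn.mono subset_closure).isOpen_inter_preimage h.isOpen isOpen_Ioi

lemma closedSuperLevel_eq (h : Admissible Ω u) (ht : 0 < t) :
    closedSuperLevel Ω u t = {x ∈ Ω | t ≤ u x} :=
  Set.ext fun _ => ⟨fun hx => ⟨h.mem_of_ne_zero hx.1 (ht.trans_le hx.2).ne', hx.2⟩,
    fun hx => ⟨subset_closure hx.1, hx.2⟩⟩

lemma closedSuperLevel_subset (h : Admissible Ω u) (ht : 0 < t) :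
    closedSuperLevel Ω u t ⊆ Ω := h.closedSuperLevel_eq ht ▸ sep_subset _ _

lemma convex_closedSuperLevel (h : Admissible Ω u) (ht : 0 < t) :
    Convex ℝ (closedSuperLevel Ω u t) :=
  h.closedSuperLevel_eq ht ▸ h.memPhi0.concave.convex_ge t

lemma superLevel_nonempty (h : Admissible Ω u) (ht : t ∈ Ioo 0 (maxcl Ω u)) :
    (superLevel Ω u t).Nonempty := by
  have hΩ : Ω.Nonempty := nonempty_iff_ne_empty.2 fun hΩ =>
    (ht.1.trans ht.2).ne' (by simp [maxcl, hΩ])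
  obtain ⟨x, hx, hmax⟩ := h.exists_eq_maxcl hΩ
  exact ⟨x, h.mem_of_ne_zero hx (hmax ▸ (ht.1.trans ht.2).ne'), hmax ▸ ht.2⟩

lemma levelSet_subset_Eu (h : Admissible Ω u) (ht : t ∈ Ioo 0 (maxcl Ω u)) :
    levelSet Ω u t ⊆ Eu Ω u := by
  rintro x ⟨hx, rfl⟩
  exact ⟨h.mem_of_ne_zero hx ht.1.ne', ht.1.le, ht.2⟩

lemma interior_closedSuperLevel (h : Admissible Ω u) (ht : t ∈ Ioo 0 (maxcl Ω u)) :
    interior (closedSuperLevel Ω u t) = superLevel Ω u t := by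
  refine Subset.antisymm (fun x hx => ?_)
    (interior_maximal (fun x hx => ⟨subset_closure hx.1, hx.2.le⟩) (h.isOpen_superLevel t))
  have hxK := interior_subset hx
  refine ⟨h.closedSuperLevel_subset ht.1 hxK, hxK.2.lt_of_ne' fun hxt => ?_⟩
  have hmin : IsLocalMin u x := by
    filter_upwards [mem_interior_iff_mem_nhds.1 hx] with y hy
    exact hxt ▸ hy.2
  refine h.gradient_ne_zero (h.levelSet_subset_Eu ht ⟨hxK.1, hxt⟩) ?_
  rw [gradient, hmin.fderiv_eq_zero, map_zero]

lemma frontier_closedSuperLevel (h : Admissible Ω u) (ht : t ∈ Ioo 0 (maxcl Ω u)) :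
    frontier (closedSuperLevel Ω u t) = levelSet Ω u t := by
  rw [(h.isCompact_closedSuperLevel t).isClosed.frontier_eq, h.interior_closedSuperLevel ht]
  refine Set.ext fun x => ⟨fun hx => ⟨hx.1.1, hx.1.2.antisymm' (le_of_not_gt fun hlt =>
    hx.2 ⟨h.closedSuperLevel_subset ht.1 hx.1, hlt⟩)⟩, fun hx => ⟨⟨hx.1, hx.2.ge⟩, fun hx' =>
    hx'.2.ne' hx.2⟩⟩

lemma closedSuperLevel_nonempty (h : Admissible Ω u) (ht : t ∈ Ioo 0 (maxcl Ω u)) :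
    (closedSuperLevel Ω u t).Nonempty :=
  (h.superLevel_nonempty ht).mono (h.interior_closedSuperLevel ht ▸ interior_subset)

lemma supportFun_closedSuperLevel_lt (h : Admissible Ω u) (ht : t ∈ Ioo 0 (maxcl Ω u))
    (ht' : t' ∈ Ioo 0 (maxcl Ω u)) (htt' : t < t') {v : E2} (hv : v ≠ 0) :
    supportFun (closedSuperLevel Ω u t') v < supportFun (closedSuperLevel Ω u t) v :=
  supportFun_lt_of_subset_interior (h.isCompact_closedSuperLevel t')
    (h.closedSuperLevel_nonempty ht') (h.isCompact_closedSuperLevel t)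
    (fun _ hx => h.interior_closedSuperLevel ht ▸
      ⟨h.closedSuperLevel_subset ht'.1 hx, htt'.trans_le hx.2⟩) hv

lemma concaveOn_supportFun_closedSuperLevel (h : Admissible Ω u) (v : E2) :
    ConcaveOn ℝ (Ioo 0 (maxcl Ω u)) fun t => supportFun (closedSuperLevel Ω u t) v := by
  refine ⟨convex_Ioo _ _, fun t ht s hs a b ha hb hab => ?_⟩
  obtain ⟨x, hx, hxv⟩ := exists_inner_eq_supportFun (h.isCompact_closedSuperLevel t)
    (h.closedSuperLevel_nonempty ht) v
  obtain ⟨y, hy, hyv⟩ := exists_inner_eq_supportFun (h.isCompact_closedSuperLevel s)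
    (h.closedSuperLevel_nonempty hs) v
  have hxΩ := h.closedSuperLevel_subset ht.1 hx
  have hyΩ := h.closedSuperLevel_subset hs.1 hy
  have hxy : a • x + b • y ∈ closedSuperLevel Ω u (a • t + b • s) := by
    refine ⟨subset_closure (h.memPhi0.concave.1 hxΩ hyΩ ha hb hab), ?_⟩
    refine le_trans ?_ (h.memPhi0.concave.2 hxΩ hyΩ ha hb hab)
    exact add_le_add (smul_le_smul_of_nonneg_left hx.2 ha) (smul_le_smul_of_nonneg_left hy.2 hb)
  have := inner_le_supportFun (h.isCompact_closedSuperLevel _) hxy v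
  rwa [inner_add_right, real_inner_smul_right, real_inner_smul_right, hxv, hyv] at this

end Admissible

end SuperLevel

section LevelLine

lemma inner_nuLevel (u : E2 → ℝ) (x v : E2) :
    ⟪nuLevel u x, v⟫ = -(‖gradient u x‖⁻¹ * fderiv ℝ u x v) := by
  rw [nuLevel, inner_neg_left, real_inner_smul_left, inner_gradient_left]

lemma measurable_nuLevel (u : E2 → ℝ) : Measurable (nuLevel u) :=
  ((measurable_gradient u).norm.inv.smul (measurable_gradient u)).neg

/-- The part of the level line `{u = t}` whose outer normal has a positive component along
`angularVec θ`. -/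
def levelArc (Ω : Set E2) (u : E2 → ℝ) (t θ : ℝ) : Set E2 :=
  {x ∈ levelSet Ω u t | fderiv ℝ u x (angularVec θ) < 0}

namespace Admissible

variable {Ω : Set E2} {u : E2 → ℝ} {x : E2} {t : ℝ}

lemma norm_nuLevel (h : Admissible Ω u) (hx : x ∈ Eu Ω u) : ‖nuLevel u x‖ = 1 := by
  rw [nuLevel, norm_neg, norm_smul, norm_inv, norm_norm,
    inv_mul_cancel₀ (norm_ne_zero_iff.2 (h.gradient_ne_zero hx))]

lemma continuousOn_nuLevel (h : Admissible Ω u) : ContinuousOn (nuLevel u) (Eu Ω u) := fun _ hx =>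
  have hg := (differentiableAt_gradient (h.differentiableAt_fderiv hx)).continuousAt
  ((hg.norm.inv₀ (norm_ne_zero_iff.2 (h.gradient_ne_zero hx))).smul hg).neg.continuousWithinAt

lemma isStrictNormalAt_nuLevel (h : Admissible Ω u) (hx : x ∈ Ω) (t : ℝ) :
    IsStrictNormalAt (levelSet Ω u t) (nuLevel u x) x := by
  have strict := (h.contDiffAt_one hx).hasStrictFDerivAt one_ne_zero
  simpa [nuLevel] using (isStrictNormalAt_gradient strict fun y (hy : y ∈ levelSet Ω u t) =>
    hy.2).const_smul (-‖gradient u x‖⁻¹)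

lemma hausdorffMeasure_levelSet_lt_top (h : Admissible Ω u) (ht : t ∈ Ioo 0 (maxcl Ω u)) :
    μH[1] (levelSet Ω u t) < ∞ :=
  hausdorffMeasure_lt_top_of_isStrictNormalAt (h.isCompact_levelSet t)
    (fun _ hx => h.norm_nuLevel (h.levelSet_subset_Eu ht hx))
    fun _ hx => h.isStrictNormalAt_nuLevel (h.levelSet_subset_Eu ht hx).1 t

lemma injOn_levelArc (h : Admissible Ω u) (ht : t ∈ Ioo 0 (maxcl Ω u)) (θ : ℝ) :
    InjOn (fun x : E2 => ⟪radialVec θ, x⟫) (levelArc Ω u t θ) := by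
  have behind : ∀ x ∈ levelArc Ω u t θ, ∀ y ∈ levelArc Ω u t θ,
      ⟪radialVec θ, x⟫ = ⟪radialVec θ, y⟫ → ⟪angularVec θ, y - x⟫ ≤ 0 := by
    intro x hx y hy hxy
    have split := inner_radialVec_smul_add θ (y - x)
    rw [inner_sub_right (radialVec θ), hxy, sub_self, zero_smul, zero_add] at split
    have := h.le_add_fderiv (h.levelSet_subset_Eu ht hx.1).1 hy.1.1
    rw [hx.1.2, hy.1.2, ← split, map_smul, smul_eq_mul, le_add_iff_nonneg_right] at this
    exact nonpos_of_mul_nonneg_left this hx.2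
  intro x hx y hy hxy
  have h1 := behind x hx y hy hxy
  have h2 := behind y hy x hx hxy.symm
  rw [inner_sub_right] at h1 h2
  rw [← inner_radialVec_smul_add θ x, ← inner_radialVec_smul_add θ y,
    show ⟪radialVec θ, x⟫ = ⟪radialVec θ, y⟫ from hxy,
    show ⟪angularVec θ, x⟫ = ⟪angularVec θ, y⟫ by linarith]

lemma Ioo_subset_image_levelArc (h : Admissible Ω u) (ht : t ∈ Ioo 0 (maxcl Ω u)) (θ : ℝ) :
    Ioo (-supportFun (closedSuperLevel Ω u t) (-radialVec θ))
      (supportFun (closedSuperLevel Ω u t) (radialVec θ)) ⊆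
        (fun x : E2 => ⟪radialVec θ, x⟫) '' levelArc Ω u t θ := by
  have hK := h.isCompact_closedSuperLevel t
  refine (Ioo_subset_image_inner_interior hK (h.convex_closedSuperLevel ht.1)
    (h.interior_closedSuperLevel ht ▸ h.superLevel_nonempty ht) _).trans ?_
  rintro - ⟨z, hz, rfl⟩
  obtain ⟨τ, hτ, hfr⟩ := exists_ray_mem_frontier hK.isBounded (interior_subset hz)
    (norm_ne_zero_iff.1 ((norm_angularVec θ).trans_ne one_ne_zero))
  rw [h.interior_closedSuperLevel ht] at hz
  rw [h.frontier_closedSuperLevel ht] at hfr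
  refine ⟨z + τ • angularVec θ, ⟨hfr, ?_⟩, by
    simp [inner_add_right, real_inner_smul_right, inner_radialVec_angularVec]⟩
  have := h.le_add_fderiv (h.levelSet_subset_Eu ht hfr).1 (subset_closure hz.1)
  rw [hfr.2, sub_add_cancel_left, map_neg, map_smul, smul_eq_mul] at this
  exact neg_of_mul_neg_right (by linarith [hz.2]) hτ

lemma volume_image_levelArc (h : Admissible Ω u) (ht : t ∈ Ioo 0 (maxcl Ω u)) (θ : ℝ) :
    volume ((fun x : E2 => ⟪radialVec θ, x⟫) '' levelArc Ω u t θ) =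
      ENNReal.ofReal (supportFun (closedSuperLevel Ω u t) (radialVec θ) +
        supportFun (closedSuperLevel Ω u t) (-radialVec θ)) := by
  have hK := h.isCompact_closedSuperLevel t
  have upper : (fun x : E2 => ⟪radialVec θ, x⟫) '' levelArc Ω u t θ ⊆
      Icc (-supportFun (closedSuperLevel Ω u t) (-radialVec θ))
        (supportFun (closedSuperLevel Ω u t) (radialVec θ)) := by
    rintro - ⟨x, hx, rfl⟩
    have hxK : x ∈ closedSuperLevel Ω u t := ⟨hx.1.1, hx.1.2.ge⟩
    exact ⟨neg_supportFun_neg_le hK hxK _, inner_le_supportFun hK hxK _⟩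
  rw [← sub_neg_eq_add]
  exact ((measure_mono upper).trans_eq Real.volume_Icc).antisymm
    (Real.volume_Ioo.symm.trans_le (measure_mono (h.Ioo_subset_image_levelArc ht θ)))

lemma measurableSet_levelArc (h : Admissible Ω u) (t θ : ℝ) :
    MeasurableSet (levelArc Ω u t θ) :=
  (h.isCompact_levelSet t).isClosed.measurableSet.inter
    (measurableSet_lt (measurable_fderiv_apply_const ℝ u _) measurable_const)

lemma setLIntegral_levelArc (h : Admissible Ω u) (ht : t ∈ Ioo 0 (maxcl Ω u)) (θ : ℝ) :
    ∫⁻ x in levelArc Ω u t θ, ENNReal.ofReal |⟪nuLevel u x, angularVec θ⟫| ∂μH[1] =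
      ENNReal.ofReal (supportFun (closedSuperLevel Ω u t) (radialVec θ) +
        supportFun (closedSuperLevel Ω u t) (-radialVec θ)) := by
  have hE := h.levelSet_subset_Eu ht
  rw [setLIntegral_abs_inner_angularVec_eq_volume_image (fun _ hx => h.norm_nuLevel (hE hx))
    (h.continuousOn_nuLevel.mono hE) (fun _ hx => h.isStrictNormalAt_nuLevel (hE hx).1 t)
    (h.hausdorffMeasure_levelSet_lt_top ht) θ (h.measurableSet_levelArc t θ) (sep_subset _ _)
    (h.injOn_levelArc ht θ), h.volume_image_levelArc ht θ]

lemma setLIntegral_levelSet_abs_inner_nuLevel (h : Admissible Ω u) (ht : t ∈ Ioo 0 (maxcl Ω u))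
    (θ : ℝ) :
    ∫⁻ x in levelSet Ω u t, ENNReal.ofReal |⟪nuLevel u x, angularVec θ⟫| ∂μH[1] =
      2 * ENNReal.ofReal (supportFun (closedSuperLevel Ω u t) (radialVec θ) +
        supportFun (closedSuperLevel Ω u t) (-radialVec θ)) := by
  have other := h.setLIntegral_levelArc ht (θ + Real.pi)
  simp only [angularVec_add_pi, radialVec_add_pi, inner_neg_right, abs_neg, neg_neg] at other
  have disj : Disjoint (levelArc Ω u t θ) (levelArc Ω u t (θ + Real.pi)) :=
    disjoint_left.2 fun x hx hx' => by
      have := hx'.2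
      rw [angularVec_add_pi, map_neg] at this
      linarith [hx.2]
  have rest : ∀ x ∈ levelSet Ω u t \ (levelArc Ω u t θ ∪ levelArc Ω u t (θ + Real.pi)),
      ENNReal.ofReal |⟪nuLevel u x, angularVec θ⟫| = 0 := by
    rintro x ⟨hx, hx'⟩
    have h1 : ¬ fderiv ℝ u x (angularVec θ) < 0 := fun hlt => hx' (Or.inl ⟨hx, hlt⟩)
    have h2 : ¬ fderiv ℝ u x (angularVec (θ + Real.pi)) < 0 := fun hlt => hx' (Or.inr ⟨hx, hlt⟩)
    rw [angularVec_add_pi, map_neg] at h2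
    rw [inner_nuLevel, show fderiv ℝ u x (angularVec θ) = 0 by linarith]
    simp
  have harcs := (h.measurableSet_levelArc t θ).union (h.measurableSet_levelArc t (θ + Real.pi))
  have hsub : levelArc Ω u t θ ∪ levelArc Ω u t (θ + Real.pi) ⊆ levelSet Ω u t :=
    union_subset (sep_subset _ _) (sep_subset _ _)
  rw [← lintegral_inter_add_sdiff _ (levelSet Ω u t) harcs, inter_eq_self_of_subset_right hsub,
    setLIntegral_congr_fun ((h.isCompact_levelSet t).isClosed.measurableSet.diff harcs) rest,
    lintegral_zero, add_zero, lintegral_union (h.measurableSet_levelArc t _) disj,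
    h.setLIntegral_levelArc ht θ, other, add_comm (supportFun _ (-radialVec θ)), two_mul]

end Admissible

end LevelLine

section AnisotropicPerimeter

variable {H : E2 → ℝ}

lemma IsAnisoNorm.ofReal_eq_lintegral (hH : IsAnisoNorm H) (ξ : E2) :
    ENNReal.ofReal (H ξ) = ∫⁻ θ in Ioc (-Real.pi) Real.pi,
      ENNReal.ofReal |⟪ξ, angularVec θ⟫| * ENNReal.ofReal (curvatureRadius H θ / 4) := by
  have cont : Continuous fun θ => |⟪ξ, angularVec θ⟫| * curvatureRadius H θ / 4 := by
    have := hH.continuous_curvatureRadius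
    fun_prop
  rw [eq_div_of_mul_eq four_ne_zero ((mul_comm _ _).trans
      (hH.integral_abs_inner_mul_curvatureRadius ξ).symm), ← intervalIntegral.integral_div,
    intervalIntegral.integral_of_le (by linarith [Real.pi_pos]),
    ofReal_integral_eq_lintegral_ofReal (cont.intervalIntegrable _ _).1
      (.of_forall fun θ => div_nonneg (mul_nonneg (abs_nonneg _) (hH.curvatureRadius_pos θ).le)
        zero_le_four)]
  simp only [mul_div_assoc, ENNReal.ofReal_mul (abs_nonneg _)]

namespace Admissible

variable {Ω : Set E2} {u : E2 → ℝ} {t : ℝ}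

lemma supportFun_add_supportFun_neg_nonneg (h : Admissible Ω u) (ht : t ∈ Ioo 0 (maxcl Ω u))
    (v : E2) :
    0 ≤ supportFun (closedSuperLevel Ω u t) v + supportFun (closedSuperLevel Ω u t) (-v) := by
  obtain ⟨x, hx⟩ := h.closedSuperLevel_nonempty ht
  linarith [neg_supportFun_neg_le (h.isCompact_closedSuperLevel t) hx v,
    inner_le_supportFun (h.isCompact_closedSuperLevel t) hx v]

lemma continuous_supportFun_closedSuperLevel (h : Admissible Ω u) (t : ℝ) :
    Continuous (supportFun (closedSuperLevel Ω u t)) :=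
  continuous_supportFun (h.isCompact_closedSuperLevel t)

lemma setLIntegral_levelSet_ofReal_nuLevel (h : Admissible Ω u) (hH : IsAnisoNorm H)
    (ht : t ∈ Ioo 0 (maxcl Ω u)) :
    ∫⁻ x in levelSet Ω u t, ENNReal.ofReal (H (nuLevel u x)) ∂μH[1] =
      ∫⁻ θ in Ioc (-Real.pi) Real.pi, ENNReal.ofReal
        ((supportFun (closedSuperLevel Ω u t) (radialVec θ) +
          supportFun (closedSuperLevel Ω u t) (-radialVec θ)) * curvatureRadius H θ / 2) := by
  have : IsFiniteMeasure ((μH[1] : Measure E2).restrict (levelSet Ω u t)) :=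
    isFiniteMeasure_restrict.2 (h.hausdorffMeasure_levelSet_lt_top ht).ne
  have hmeas : Measurable fun p : E2 × ℝ => ENNReal.ofReal |⟪nuLevel u p.1, angularVec p.2⟫| *
      ENNReal.ofReal (curvatureRadius H p.2 / 4) := by
    have := measurable_nuLevel u
    have := continuous_angularVec.measurable
    have := hH.continuous_curvatureRadius.measurable
    fun_prop
  simp_rw [hH.ofReal_eq_lintegral]
  rw [lintegral_lintegral_swap hmeas.aemeasurable]
  refine lintegral_congr fun θ => ?_
  have width := h.supportFun_add_supportFun_neg_nonneg ht (radialVec θ)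
  rw [lintegral_mul_const' _ _ ENNReal.ofReal_ne_top, h.setLIntegral_levelSet_abs_inner_nuLevel ht,
    two_mul, ← ENNReal.ofReal_add width width, ← ENNReal.ofReal_mul (add_nonneg width width)]
  congr 1
  ring

lemma intervalIntegrable_supportFun_mul_curvatureRadius (h : Admissible Ω u) (hH : IsAnisoNorm H)
    (t : ℝ) :
    IntervalIntegrable (fun θ => supportFun (closedSuperLevel Ω u t) (-radialVec θ) *
      curvatureRadius H θ) volume (-Real.pi) Real.pi :=
  (((h.continuous_supportFun_closedSuperLevel t).comp continuous_radialVec.neg).mul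
    hH.continuous_curvatureRadius).intervalIntegrable _ _

lemma lambdaH_eq_integral_supportFun (h : Admissible Ω u) (hH : IsAnisoNorm H)
    (ht : t ∈ Ioo 0 (maxcl Ω u)) :
    lambdaH H Ω u t = ∫ θ in (-Real.pi)..Real.pi,
      supportFun (closedSuperLevel Ω u t) (-radialVec θ) * curvatureRadius H θ := by
  have hle : -Real.pi ≤ Real.pi := by linarith [Real.pi_pos]
  set k := supportFun (closedSuperLevel Ω u t)
  have hk : Continuous k := h.continuous_supportFun_closedSuperLevel t
  have : Continuous (curvatureRadius H) := hH.continuous_curvatureRadius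
  have symmetric : lambdaH H Ω u t = ∫ θ in (-Real.pi)..Real.pi,
      (k (radialVec θ) + k (-radialVec θ)) * curvatureRadius H θ / 2 := by
    rw [lambdaH, integral_eq_lintegral_of_nonneg_ae (.of_forall fun _ => hH.nonneg _)
      (hH.continuous.measurable.comp (measurable_nuLevel u)).aestronglyMeasurable,
      h.setLIntegral_levelSet_ofReal_nuLevel hH ht, intervalIntegral.integral_of_le hle,
      integral_eq_lintegral_of_nonneg_ae]
    · exact .of_forall fun θ => div_nonneg (mul_nonneg
        (h.supportFun_add_supportFun_neg_nonneg ht _) (hH.curvatureRadius_pos θ).le) zero_le_two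
    · exact Continuous.aestronglyMeasurable (by fun_prop)
  simp only [symmetric, add_mul, add_div]
  rw [intervalIntegral.integral_add
      (Continuous.intervalIntegrable (by fun_prop) _ _)
      (Continuous.intervalIntegrable (by fun_prop) _ _),
    intervalIntegral.integral_div, intervalIntegral.integral_div,
    integral_neg_radialVec hH.periodic_curvatureRadius, add_halves]

lemma strictAntiOn_lambdaH (h : Admissible Ω u) (hH : IsAnisoNorm H) :
    StrictAntiOn (lambdaH H Ω u) (Ioo 0 (maxcl Ω u)) := fun t ht t' ht' htt' => by
  have integrable := h.intervalIntegrable_supportFun_mul_curvatureRadius hH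
  rw [h.lambdaH_eq_integral_supportFun hH ht, h.lambdaH_eq_integral_supportFun hH ht', ← sub_pos,
    ← intervalIntegral.integral_sub (integrable t) (integrable t')]
  refine intervalIntegral.intervalIntegral_pos_of_pos ((integrable t).sub (integrable t'))
    (fun θ => ?_) (by linarith [Real.pi_pos])
  rw [← sub_mul]
  exact mul_pos (sub_pos.2 (h.supportFun_closedSuperLevel_lt ht ht' htt'
    (neg_ne_zero.2 (radialVec_ne_zero θ)))) (hH.curvatureRadius_pos θ)

lemma concaveOn_lambdaH (h : Admissible Ω u) (hH : IsAnisoNorm H) :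
    ConcaveOn ℝ (Ioo 0 (maxcl Ω u)) (lambdaH H Ω u) := by
  have integrable := h.intervalIntegrable_supportFun_mul_curvatureRadius hH
  refine ⟨convex_Ioo _ _, fun t ht t' ht' a b ha hb hab => ?_⟩
  rw [h.lambdaH_eq_integral_supportFun hH ht, h.lambdaH_eq_integral_supportFun hH ht',
    h.lambdaH_eq_integral_supportFun hH (convex_Ioo _ _ ht ht' ha hb hab), smul_eq_mul, smul_eq_mul,
    ← intervalIntegral.integral_const_mul, ← intervalIntegral.integral_const_mul,
    ← intervalIntegral.integral_add ((integrable t).const_mul _) ((integrable t').const_mul _)]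
  refine intervalIntegral.integral_mono_on (by linarith [Real.pi_pos])
    (((integrable t).const_mul _).add ((integrable t').const_mul _)) (integrable _) fun θ _ => ?_
  rw [← mul_assoc, ← mul_assoc, ← add_mul]
  exact mul_le_mul_of_nonneg_right ((h.concaveOn_supportFun_closedSuperLevel _).2 ht ht' ha hb hab)
    (hH.curvatureRadius_pos θ).le

lemma lambdaH_eq_zero (h : Admissible Ω u) (hH : IsAnisoNorm H) (ht : 0 < t)
    (hmax : maxcl Ω u ≤ t) : lambdaH H Ω u t = 0 := by
  refine setIntegral_eq_zero_of_forall_eq_zero fun x hx => ?_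
  have hxΩ : x ∈ Ω := h.mem_of_ne_zero hx.1 (hx.2 ▸ ht.ne')
  have hx' : u x = maxcl Ω u := (h.le_maxcl hx.1).antisymm (hx.2 ▸ hmax)
  rw [nuLevel, gradient, h.fderiv_eq_zero hxΩ hx', map_zero, smul_zero, neg_zero, hH.map_zero]

end Admissible

lemma IsAnisoNorm.lambdaH_nonneg (hH : IsAnisoNorm H) (Ω : Set E2) (u : E2 → ℝ) (t : ℝ) :
    0 ≤ lambdaH H Ω u t :=
  integral_nonneg fun _ => hH.nonneg _

end AnisotropicPerimeter

section MongeAmpereMass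

/-- The anisotropic Monge–Ampère measure `det_H[u] dx` on `Ω`; only the positive part of `det_H[u]`
counts, which is all of it when `u` is concave. -/
def mongeAmpereMeasure (H : E2 → ℝ) (Ω : Set E2) (u : E2 → ℝ) : Measure E2 :=
  (volume.restrict Ω).withDensity fun x => ENNReal.ofReal (detH H u x)

/-- The difference quotient `(h_t(-p) - h_{t'}(-p)) / (t' - t)` of the support functions `h_t` of
the superlevel sets `{u ≥ t}`. The sign of `p` is that of the inner normal, so that gradients of `u`
on the level lines are positive multiples of such `p`. -/
def supportQuotient (Ω : Set E2) (u : E2 → ℝ) (t t' : ℝ) (p : E2) : ℝ :=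
  (supportFun (closedSuperLevel Ω u t) (-p) - supportFun (closedSuperLevel Ω u t') (-p)) / (t' - t)

lemma supportQuotient_smul (Ω : Set E2) (u : E2 → ℝ) (t t' : ℝ) {r : ℝ} (hr : 0 ≤ r) (p : E2) :
    supportQuotient Ω u t t' (r • p) = r * supportQuotient Ω u t t' p := by
  rw [supportQuotient, supportQuotient, ← smul_neg, supportFun_smul hr, supportFun_smul hr,
    ← mul_sub, mul_div_assoc]

namespace Admissible

variable {Ω : Set E2} {u H : E2 → ℝ} {x p : E2} {t t' : ℝ}

lemma lintegral_ofReal_mul_detH_eq (h : Admissible Ω u) (H : E2 → ℝ) :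
    ∫⁻ x in Ω, ENNReal.ofReal (u x * detH H u x) =
      ∫⁻ t in Ioi 0, mongeAmpereMeasure H Ω u {x | t < u x} := by
  have meas_u : AEMeasurable u (volume.restrict Ω) :=
    (h.continuousOn.mono subset_closure).aemeasurable h.isOpen.measurableSet
  have nonneg_ae : 0 ≤ᵐ[volume.restrict Ω] u :=
    (ae_restrict_mem h.isOpen.measurableSet).mono fun x hx => h.nonneg hx
  have ac : mongeAmpereMeasure H Ω u ≪ volume.restrict Ω := withDensity_absolutelyContinuous _ _
  rw [← lintegral_eq_lintegral_meas_lt _ (ac.ae_le nonneg_ae) (meas_u.mono_ac ac),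
    mongeAmpereMeasure, lintegral_withDensity_eq_lintegral_mul₀
      (measurable_detH H u).ennreal_ofReal.aemeasurable meas_u.ennreal_ofReal]
  refine lintegral_congr_ae (nonneg_ae.mono fun x hx => ?_)
  simp only [Pi.mul_apply, ENNReal.ofReal_mul hx, mul_comm]

lemma isOpen_Eu_inter_superLevel (h : Admissible Ω u) (t : ℝ) :
    IsOpen {x ∈ Eu Ω u | t < u x} :=
  (h.continuousOn.mono fun _ hx => subset_closure hx.1).isOpen_inter_preimage h.isOpen_Eu isOpen_Ioi

lemma continuous_supportQuotient (h : Admissible Ω u) (t t' : ℝ) :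
    Continuous (supportQuotient Ω u t t') :=
  (((h.continuous_supportFun_closedSuperLevel t).comp continuous_neg).sub
    ((h.continuous_supportFun_closedSuperLevel t').comp continuous_neg)).div_const _

lemma supportQuotient_pos (h : Admissible Ω u) (ht : t ∈ Ioo 0 (maxcl Ω u))
    (ht' : t' ∈ Ioo 0 (maxcl Ω u)) (htt' : t < t') (hp : p ≠ 0) :
    0 < supportQuotient Ω u t t' p :=
  div_pos (sub_pos.2 (h.supportFun_closedSuperLevel_lt ht ht' htt' (neg_ne_zero.2 hp)))
    (sub_pos.2 htt')

lemma integral_supportQuotient (h : Admissible Ω u) (hH : IsAnisoNorm H)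
    (ht : t ∈ Ioo 0 (maxcl Ω u)) (ht' : t' ∈ Ioo 0 (maxcl Ω u)) :
    ∫ θ in (-Real.pi)..Real.pi, supportQuotient Ω u t t' (radialVec θ) * curvatureRadius H θ =
      (lambdaH H Ω u t - lambdaH H Ω u t') / (t' - t) := by
  have integrable := h.intervalIntegrable_supportFun_mul_curvatureRadius hH
  rw [h.lambdaH_eq_integral_supportFun hH ht, h.lambdaH_eq_integral_supportFun hH ht',
    ← intervalIntegral.integral_sub (integrable t) (integrable t'), ← intervalIntegral.integral_div]
  simp only [supportQuotient, div_mul_eq_mul_div, sub_mul]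

/-- Maximise `u - ⟨p, ·⟩` over `{u ≥ t}`: the hypothesis rules out maximum points with `u = t`. -/
lemma mem_image_gradient_of_supportQuotient_lt_one (h : Admissible Ω u)
    (ht : t ∈ Ioo 0 (maxcl Ω u)) (ht' : t' ∈ Ioo 0 (maxcl Ω u)) (htt' : t < t') (hp : p ≠ 0)
    (hlt : supportQuotient Ω u t t' p < 1) :
    p ∈ gradient u '' {x ∈ Eu Ω u | t < u x} := by
  rw [supportQuotient, div_lt_one (sub_pos.2 htt')] at hlt
  have hK := h.isCompact_closedSuperLevel t
  have cont : ContinuousOn (fun x : E2 => u x - ⟪p, x⟫) (closedSuperLevel Ω u t) :=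
    (h.continuousOn.mono fun _ hx => hx.1).sub (by fun_prop)
  obtain ⟨x, hx, hmax⟩ := hK.exists_isMaxOn (h.closedSuperLevel_nonempty ht) cont
  have hxΩ : x ∈ Ω := h.mem_of_ne_zero hx.1 (ht.1.trans_le hx.2).ne'
  have hxt : t < u x := by
    obtain ⟨y, hy, hye⟩ := exists_inner_eq_supportFun (h.isCompact_closedSuperLevel t')
      (h.closedSuperLevel_nonempty ht') (-p)
    have hyx : u y - ⟪p, y⟫ ≤ u x - ⟪p, x⟫ := hmax ⟨hy.1, htt'.le.trans hy.2⟩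
    have hxk := inner_le_supportFun hK hx (-p)
    rw [inner_neg_left] at hye hxk
    linarith [hy.2]
  have hloc : IsLocalMax (fun x : E2 => u x - ⟪p, x⟫) x := by
    filter_upwards [h.isOpen.mem_nhds hxΩ,
      (h.differentiableAt hxΩ).continuousAt.eventually (lt_mem_nhds hxt)] with z hz hzt
    exact hmax ⟨subset_closure hz, hzt.le⟩
  have hgrad : gradient u x = p := gradient_eq_of_isLocalExtr (h.differentiableAt hxΩ) hloc.isExtr
  refine ⟨x, ⟨?_, hxt⟩, hgrad⟩
  rw [h.Eu_eq]
  refine ⟨hxΩ, (h.le_maxcl hx.1).lt_of_ne fun hM => hp ?_⟩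
  rw [← hgrad, gradient, h.fderiv_eq_zero hxΩ hM, map_zero]

lemma lintegral_abs_det_gradient_le (h : Admissible Ω u) (H : E2 → ℝ) (t : ℝ) :
    ∫⁻ x in {x ∈ Eu Ω u | t < u x}, ENNReal.ofReal |(fderiv ℝ (gradient u) x).det| *
        ENNReal.ofReal (hessian (Fani H) (gradient u x)).det ≤
      mongeAmpereMeasure H Ω u {x | t < u x} := by
  have hA := (h.isOpen_Eu_inter_superLevel t).measurableSet
  refine le_trans (le_of_eq ?_) (measure_mono (sep_subset_ofPred (Eu Ω u) fun x => t < u x))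
  rw [mongeAmpereMeasure, withDensity_apply _ hA, Measure.restrict_restrict_of_subset
    fun _ hx => hx.1.1]
  refine setLIntegral_congr_fun hA fun x hx => ?_
  have hdet := h.det_hessian_nonneg hx.1
  simp only [det_fderiv_gradient (h.differentiableAt_fderiv hx.1), abs_of_nonneg hdet, detH,
    mul_comm (hessian (Fani H) _).det, ENNReal.ofReal_mul hdet]

lemma ofReal_integral_supportQuotient_le (h : Admissible Ω u) (hH : IsAnisoNorm H)
    (ht : t ∈ Ioo 0 (maxcl Ω u)) (ht' : t' ∈ Ioo 0 (maxcl Ω u)) (htt' : t < t') :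
    ENNReal.ofReal (∫ θ in (-Real.pi)..Real.pi, angularProfile H θ ^ 3 * curvatureRadius H θ /
        (2 * supportQuotient Ω u t t' (radialVec θ) ^ 2)) ≤
      mongeAmpereMeasure H Ω u {x | t < u x} := by
  rw [← hH.lintegral_det_hessian_Fani (h.continuous_supportQuotient t t')
    (fun r hr => supportQuotient_smul Ω u t t' hr.le)
    fun p hp => h.supportQuotient_pos ht ht' htt' hp]
  exact (setLIntegral_le_lintegral_abs_det_fderiv_mul volume (measurable_gradient u)
    (h.isOpen_Eu_inter_superLevel t).measurableSet
    (fun x hx => differentiableAt_gradient (h.differentiableAt_fderiv hx.1))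
    (fun p hp => h.mem_image_gradient_of_supportQuotient_lt_one ht ht' htt' hp.1 hp.2)
    (measurable_det_hessian (Fani H)).ennreal_ofReal).trans (h.lintegral_abs_det_gradient_le H t)

lemma wulffArea_pow_three_le_mul_integral (h : Admissible Ω u) (hH : IsAnisoNorm H)
    (ht : t ∈ Ioo 0 (maxcl Ω u)) (ht' : t' ∈ Ioo 0 (maxcl Ω u)) (htt' : t < t') :
    4 * wulffArea H ^ 3 ≤ ((lambdaH H Ω u t - lambdaH H Ω u t') / (t' - t)) ^ 2 *
      ∫ θ in (-Real.pi)..Real.pi, angularProfile H θ ^ 3 * curvatureRadius H θ /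
        (2 * supportQuotient Ω u t t' (radialVec θ) ^ 2) := by
  set Q : ℝ → ℝ := fun θ => supportQuotient Ω u t t' (radialVec θ)
  have hc := hH.continuous_angularProfile
  have hq := hH.continuous_curvatureRadius
  have hQ : Continuous Q := (h.continuous_supportQuotient t t').comp continuous_radialVec
  have hqpos := hH.curvatureRadius_pos
  have hQpos (θ : ℝ) : 0 < Q θ := h.supportQuotient_pos ht ht' htt' (radialVec_ne_zero θ)
  have quotient (θ : ℝ) : (angularProfile H θ * curvatureRadius H θ) ^ 3 /
      (Q θ * curvatureRadius H θ) ^ 2 =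
      2 * (angularProfile H θ ^ 3 * curvatureRadius H θ / (2 * Q θ ^ 2)) := by
    have := (hqpos θ).ne'
    field_simp
  have integrable {f : ℝ → ℝ} (hf : Continuous f) :
      IntegrableOn f (Ioc (-Real.pi) Real.pi) := (hf.intervalIntegrable _ _).1
  have holder := integral_pow_three_le (μ := volume.restrict (Ioc (-Real.pi) Real.pi))
    (fun θ => (mul_pos (hH.angularProfile_pos θ) (hqpos θ)).le)
    (fun θ => mul_pos (hQpos θ) (hqpos θ))
    (integrable (hc.mul hq)) (integrable (hQ.mul hq))
    (integrable (((hc.mul hq).pow 3).div ((hQ.mul hq).pow 2)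
      fun θ => (pow_pos (mul_pos (hQpos θ) (hqpos θ)) 2).ne'))
  simp only [quotient, ← intervalIntegral.integral_of_le (neg_le_self Real.pi_pos.le),
    intervalIntegral.integral_const_mul] at holder
  rw [h.integral_supportQuotient hH ht ht'] at holder
  rw [wulffArea]
  linarith

lemma ofReal_div_sq_le_mongeAmpereMeasure (h : Admissible Ω u) (hH : IsAnisoNorm H)
    (ht : t ∈ Ioo 0 (maxcl Ω u)) (ht' : t' ∈ Ioo 0 (maxcl Ω u)) (htt' : t < t') :
    ENNReal.ofReal (4 * wulffArea H ^ 3 / slope (lambdaH H Ω u) t t' ^ 2) ≤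
      mongeAmpereMeasure H Ω u {x | t < u x} := by
  refine le_trans (ENNReal.ofReal_le_ofReal ?_)
    (h.ofReal_integral_supportQuotient_le hH ht ht' htt')
  have quotient_pos : 0 < (lambdaH H Ω u t - lambdaH H Ω u t') / (t' - t) :=
    div_pos (sub_pos.2 (h.strictAntiOn_lambdaH hH ht ht' htt')) (sub_pos.2 htt')
  rw [slope_def_field, ← neg_sub (lambdaH H Ω u t), neg_div, neg_sq,
    div_le_iff₀' (pow_pos quotient_pos 2)]
  exact h.wulffArea_pow_three_le_mul_integral hH ht ht' htt'

lemma ofReal_div_deriv_sq_le_mongeAmpereMeasure (h : Admissible Ω u) (hH : IsAnisoNorm H)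
    (ht : t ∈ Ioo 0 (maxcl Ω u)) (hd : DifferentiableAt ℝ (lambdaH H Ω u) t)
    (hd0 : deriv (lambdaH H Ω u) t ≠ 0) :
    ENNReal.ofReal (4 * wulffArea H ^ 3 / deriv (lambdaH H Ω u) t ^ 2) ≤
      mongeAmpereMeasure H Ω u {x | t < u x} := by
  have hslope : Tendsto (slope (lambdaH H Ω u) t) (𝓝[>] t) (𝓝 (deriv (lambdaH H Ω u) t)) :=
    (hasDerivAt_iff_tendsto_slope.1 hd.hasDerivAt).mono_left
      (nhdsWithin_mono t fun y (hy : t < y) => hy.ne')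
  refine le_of_tendsto ((ENNReal.continuous_ofReal.tendsto _).comp
    (tendsto_const_nhds.div (hslope.pow 2) (pow_ne_zero 2 hd0))) ?_
  filter_upwards [Ioo_mem_nhdsGT ht.2] with t' ht'
  exact h.ofReal_div_sq_le_mongeAmpereMeasure hH ht ⟨ht.1.trans ht'.1, ht'.2⟩ ht'.1

end Admissible

end MongeAmpereMass

section UpperInverse

/-- The decreasing inverse `s ↦ sup {t ≥ 0 : L t ≥ s}`; `diamondRe` is the one of `lambdaH`. The
supremum of the empty set is `0`, which is the value wanted above the range of `L`. -/
def upperInverse (L : ℝ → ℝ) (s : ℝ) : ℝ := sSup {t : ℝ | 0 ≤ t ∧ s ≤ L t}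

variable {L : ℝ → ℝ} {M : ℝ} {s t : ℝ}

lemma upperInverse_eq_zero (h : ∀ t, 0 < t → L t < s) : upperInverse L s = 0 := by
  have hsub : {t | 0 ≤ t ∧ s ≤ L t} ⊆ {0} := fun t ht =>
    ht.1.eq_or_lt.elim Eq.symm fun ht0 => absurd ht.2 (h t ht0).not_ge
  rcases subset_singleton_iff_eq.1 hsub with h0 | h0 <;> simp [upperInverse, h0]

lemma upperInverse_eq_of_forall_le (hM : 0 < M) (nonpos : ∀ t, M ≤ t → L t ≤ 0) (hs : 0 < s)
    (h : ∀ t ∈ Ioo 0 M, s ≤ L t) : upperInverse L s = M := by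
  have upper : ∀ t ∈ {t | 0 ≤ t ∧ s ≤ L t}, t ≤ M := fun t ht => le_of_not_gt fun hMt =>
    (hs.trans_le ht.2).not_ge (nonpos t hMt.le)
  have lower : Ioo 0 M ⊆ {t | 0 ≤ t ∧ s ≤ L t} := fun t ht => ⟨ht.1.le, h t ht⟩
  refine (csSup_le ((nonempty_Ioo.2 hM).mono lower) upper).antisymm ?_
  exact (csSup_Ioo hM).symm.trans_le (csSup_le_csSup ⟨M, upper⟩ (nonempty_Ioo.2 hM) lower)

section Decreasing

variable (anti : StrictAntiOn L (Ioo 0 M)) (cont : ContinuousOn L (Ioo 0 M))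
  (pos : ∀ t ∈ Ioo 0 M, 0 < L t) (nonpos : ∀ t, 0 < t → M ≤ t → L t ≤ 0)

include anti pos nonpos in
lemma upperInverse_apply (ht : t ∈ Ioo 0 M) : upperInverse L (L t) = t := by
  refine IsGreatest.csSup_eq ⟨⟨ht.1.le, le_rfl⟩, fun t' ht' => le_of_not_gt fun htt' => ?_⟩
  rcases lt_or_ge t' M with hM | hM
  · exact (anti ht ⟨ht.1.trans htt', hM⟩ htt').not_ge ht'.2
  · exact ((pos t ht).trans_le ht'.2).not_ge (nonpos t' (ht.1.trans htt') hM)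

include anti cont pos nonpos in
lemma hasDerivAt_of_deriv_upperInverse_ne_zero (ht : t ∈ Ioo 0 M)
    (hd : deriv (upperInverse L) (L t) ≠ 0) :
    HasDerivAt L (deriv (upperInverse L) (L t))⁻¹ t := by
  refine (differentiableAt_of_deriv_ne_zero hd).hasDerivAt.of_local_left_inverse
    (cont.continuousAt (isOpen_Ioo.mem_nhds ht)) hd ?_
  filter_upwards [isOpen_Ioo.mem_nhds ht] with t' ht'
  exact upperInverse_apply anti pos nonpos ht'

include cont nonpos in
lemma deriv_upperInverse_eq_zero_ae :
    ∀ᵐ s, 0 < s → s ∉ L '' Ioo 0 M → deriv (upperInverse L) s = 0 := by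
  have hJ : (L '' Ioo 0 M).OrdConnected := (isPreconnected_Ioo.image L cont).ordConnected
  filter_upwards [measure_eq_zero_iff_ae_notMem.1 (hJ.convex.addHaar_frontier volume)]
    with s hsfr hs hsJ
  have hcl : s ∉ closure (L '' Ioo 0 M) := fun hcl =>
    hsfr ⟨hcl, fun hs_int => hsJ (interior_subset hs_int)⟩
  obtain ⟨a, b, hsab, hab⟩ := mem_nhds_iff_exists_Ioo_subset.1
    ((isClosed_closure.isOpen_compl.inter isOpen_Ioi).mem_nhds ⟨hcl, hs⟩)
  have avoid : ∀ t ∈ Ioo 0 M, L t ≤ a ∨ b ≤ L t := fun t ht => by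
    by_contra! hlt
    exact (hab hlt).1 (subset_closure (mem_image_of_mem L ht))
  have locally_const {c : ℝ} (hc : ∀ y ∈ Ioo a b, upperInverse L y = c) :
      deriv (upperInverse L) s = 0 := by
    rw [(eventuallyEq_of_mem (isOpen_Ioo.mem_nhds hsab) hc).deriv_eq, deriv_const]
  by_cases below : ∀ t ∈ Ioo 0 M, L t ≤ a
  · refine locally_const fun y hy => upperInverse_eq_zero fun t ht => ?_
    rcases lt_or_ge t M with hM | hM
    · exact (below t ⟨ht, hM⟩).trans_lt hy.1
    · exact (nonpos t ht hM).trans_lt (hab hy).2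
  · push Not at below
    obtain ⟨t₀, ht₀, hat₀⟩ := below
    have hM : 0 < M := ht₀.1.trans ht₀.2
    have above : ∀ t ∈ Ioo 0 M, b ≤ L t := fun t ht => (avoid t ht).resolve_left fun hta =>
      hsJ (hJ.out (mem_image_of_mem L ht) (mem_image_of_mem L ht₀) ⟨hta.trans hsab.1.le,
        hsab.2.le.trans ((avoid t₀ ht₀).resolve_left hat₀.not_ge)⟩)
    exact locally_const fun y hy => upperInverse_eq_of_forall_le hM
      (fun t hMt => nonpos t (hM.trans_le hMt) hMt) (hab hy).2
      fun t ht => hy.2.le.trans (above t ht)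

include anti cont pos nonpos in
lemma deriv_upperInverse_eq_zero_ae_of_notMem_image :
    ∀ᵐ s, 0 < s → s ∉ L '' {t ∈ Ioo 0 M | deriv L t ≠ 0} → deriv (upperInverse L) s = 0 := by
  filter_upwards [deriv_upperInverse_eq_zero_ae cont nonpos] with s hs hs0 hsG
  by_cases hsJ : s ∈ L '' Ioo 0 M
  · obtain ⟨t, ht, rfl⟩ := hsJ
    by_contra hne
    refine hsG ⟨t, ⟨ht, ?_⟩, rfl⟩
    rw [(hasDerivAt_of_deriv_upperInverse_ne_zero anti cont pos nonpos ht hne).deriv]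
    exact inv_ne_zero hne
  · exact hs hs0 hsJ

include anti cont pos nonpos in
lemma lintegral_abs_deriv_upperInverse_pow_le (p : ℕ) :
    ∫⁻ s in Ioi 0, ENNReal.ofReal (|deriv (upperInverse L) s| ^ (p + 1)) ≤
      ∫⁻ t in {t ∈ Ioo 0 M | deriv L t ≠ 0}, ENNReal.ofReal (|deriv L t|⁻¹ ^ p) := by
  set G : Set ℝ := {t ∈ Ioo 0 M | deriv L t ≠ 0}
  have hG : MeasurableSet G :=
    measurableSet_Ioo.inter (measurable_deriv L (measurableSet_singleton 0).compl)
  have inj : InjOn L G := anti.injOn.mono (sep_subset _ _)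
  have hLG : MeasurableSet (L '' G) :=
    hG.image_of_continuousOn_injOn (cont.mono (sep_subset _ _)) inj
  have negligible : ∫⁻ s in Ioi 0 \ L '' G,
      ENNReal.ofReal (|deriv (upperInverse L) s| ^ (p + 1)) = 0 := by
    rw [setLIntegral_congr_fun_ae (g := 0) (measurableSet_Ioi.diff hLG), Pi.zero_def,
      lintegral_zero]
    filter_upwards [deriv_upperInverse_eq_zero_ae_of_notMem_image anti cont pos nonpos]
      with s hs hsG
    simp [hs hsG.1 hsG.2]
  have hderiv : ∀ t ∈ G, HasDerivWithinAt L (deriv L t) G t := fun t ht =>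
    (differentiableAt_of_deriv_ne_zero ht.2).hasDerivAt.hasDerivWithinAt
  rw [← lintegral_inter_add_sdiff _ (Ioi 0) hLG, negligible, add_zero]
  refine (lintegral_mono_set inter_subset_right).trans ?_
  rw [lintegral_image_eq_lintegral_abs_deriv_mul hG hderiv inj]
  refine setLIntegral_mono' hG fun t ht => ?_
  by_cases hd : deriv (upperInverse L) (L t) = 0
  · simp [hd]
  · have hLt := hasDerivAt_of_deriv_upperInverse_ne_zero anti cont pos nonpos ht.1 hd
    rw [← inv_inv (deriv (upperInverse L) (L t)), ← hLt.deriv, abs_inv,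
      ← ENNReal.ofReal_mul (abs_nonneg _), pow_succ', mul_inv_cancel_left₀ (abs_ne_zero.2 ht.2)]

end Decreasing

end UpperInverse

section Conclusion

variable {H u : E2 → ℝ} {Ω : Set E2} {t : ℝ}

lemma Admissible.lambdaH_pos (h : Admissible Ω u) (hH : IsAnisoNorm H)
    (ht : t ∈ Ioo 0 (maxcl Ω u)) : 0 < lambdaH H Ω u t := by
  obtain ⟨t', htt', ht'⟩ := exists_between ht.2
  exact (hH.lambdaH_nonneg Ω u t').trans_lt
    (h.strictAntiOn_lambdaH hH ht ⟨ht.1.trans htt', ht'⟩ htt')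

lemma Admissible.lintegral_abs_deriv_diamondRe_pow_le (h : Admissible Ω u) (hH : IsAnisoNorm H)
    (p : ℕ) :
    ∫⁻ s in Ioi 0, ENNReal.ofReal (|deriv (diamondRe H Ω u) s| ^ (p + 1)) ≤
      ∫⁻ t in {t ∈ Ioo 0 (maxcl Ω u) | deriv (lambdaH H Ω u) t ≠ 0},
        ENNReal.ofReal (|deriv (lambdaH H Ω u) t|⁻¹ ^ p) :=
  lintegral_abs_deriv_upperInverse_pow_le (h.strictAntiOn_lambdaH hH)
    ((h.concaveOn_lambdaH hH).continuousOn isOpen_Ioo) (fun _ ht => h.lambdaH_pos hH ht)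
    (fun _ ht hmax => (h.lambdaH_eq_zero hH ht hmax).le) p

lemma Admissible.ofReal_mul_lintegral_diamondRe_le (h : Admissible Ω u) (hH : IsAnisoNorm H) :
    ENNReal.ofReal (4 * kappa H ^ 3) *
        ∫⁻ s in Ioi 0, ENNReal.ofReal (|deriv (diamondRe H Ω u) s| ^ 3) ≤
      ∫⁻ x in Ω, ENNReal.ofReal (u x * detH H u x) := by
  have hκ : 0 ≤ kappa H := ENNReal.toReal_nonneg
  have hG : MeasurableSet {t ∈ Ioo 0 (maxcl Ω u) | deriv (lambdaH H Ω u) t ≠ 0} :=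
    measurableSet_Ioo.inter (measurable_deriv _ (measurableSet_singleton 0).compl)
  calc ENNReal.ofReal (4 * kappa H ^ 3) *
        ∫⁻ s in Ioi 0, ENNReal.ofReal (|deriv (diamondRe H Ω u) s| ^ 3)
      ≤ ENNReal.ofReal (4 * kappa H ^ 3) *
          ∫⁻ t in {t ∈ Ioo 0 (maxcl Ω u) | deriv (lambdaH H Ω u) t ≠ 0},
            ENNReal.ofReal (|deriv (lambdaH H Ω u) t|⁻¹ ^ 2) :=
        mul_le_mul' le_rfl (h.lintegral_abs_deriv_diamondRe_pow_le hH 2)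
    _ ≤ ∫⁻ t in {t ∈ Ioo 0 (maxcl Ω u) | deriv (lambdaH H Ω u) t ≠ 0},
          mongeAmpereMeasure H Ω u {x | t < u x} := by
        rw [← lintegral_const_mul' _ _ ENNReal.ofReal_ne_top]
        refine setLIntegral_mono' hG fun t ht => le_trans ?_
          (h.ofReal_div_deriv_sq_le_mongeAmpereMeasure hH ht.1
            (differentiableAt_of_deriv_ne_zero ht.2) ht.2)
        rw [← ENNReal.ofReal_mul (by positivity), inv_pow, sq_abs, ← div_eq_mul_inv]
        gcongr
        exact hH.kappa_le_wulffArea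
    _ ≤ ∫⁻ t in Ioi 0, mongeAmpereMeasure H Ω u {x | t < u x} :=
        lintegral_mono_set fun _ ht => ht.1.1
    _ = ∫⁻ x in Ω, ENNReal.ofReal (u x * detH H u x) := (h.lintegral_ofReal_mul_detH_eq H).symm

end Conclusion

theorem aniso_polya_szego_general
    (H : E2 → ℝ) (hH : IsAnisoNorm H)
    (Ω : Set E2) (hΩo : IsOpen Ω) (hΩb : Bornology.IsBounded Ω)
    (u : E2 → ℝ) (hu : MemPhi0 Ω u) (hu2 : ContDiffOn ℝ 2 u (Eu Ω u)) :
    ∫ x in Ω, u x * detH H u x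
      ≥ 4 * kappa H ^ 3 * ∫ s in (0 : ℝ)..(PerH H Ω u), |deriv (diamondRe H Ω u) s| ^ 3 := by
  have h : Admissible Ω u := ⟨hΩo, hΩb, hu, hu2⟩
  have hκ : 0 ≤ 4 * kappa H ^ 3 := mul_nonneg zero_le_four (pow_nonneg ENNReal.toReal_nonneg 3)
  have hP : 0 ≤ PerH H Ω u := hH.lambdaH_nonneg Ω u 0
  have hI : 0 ≤ ∫ x in Ω, u x * detH H u x := integral_nonneg_of_ae (h.mul_detH_nonneg_ae hH)
  have hlint : ENNReal.ofReal (4 * kappa H ^ 3) *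
      ∫⁻ s in Ioc 0 (PerH H Ω u), ENNReal.ofReal (|deriv (diamondRe H Ω u) s| ^ 3) ≤
      ENNReal.ofReal (∫ x in Ω, u x * detH H u x) := by
    rw [ofReal_integral_eq_lintegral_ofReal (h.integrableOn_mul_detH hH) (h.mul_detH_nonneg_ae hH)]
    exact le_trans (by gcongr; exact Ioc_subset_Ioi_self) (h.ofReal_mul_lintegral_diamondRe_le hH)
  rw [ge_iff_le, intervalIntegral.integral_of_le hP,
    integral_eq_lintegral_of_nonneg_ae (.of_forall fun s => pow_nonneg (abs_nonneg _) 3)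
      ((measurable_deriv _).abs.pow_const 3).aestronglyMeasurable]
  simpa only [ENNReal.toReal_mul, ENNReal.toReal_ofReal hκ, ENNReal.toReal_ofReal hI] using
    ENNReal.toReal_mono ENNReal.ofReal_ne_top hlint

/-- Pólya–Szegő inequality for anisotropic Hessian integrals:
`I_H[u,Ω] ≥ I_H[u^★,Ω^★]`, i.e.
`∫_Ω u det_H[u] dx ≥ 4κ³ ∫₀^{P_H(Ω)} |(u^♦)'(s)|³ ds`. -/
theorem aniso_polya_szego
    (H : E2 → ℝ) (hH : IsAnisoNorm H)
    (Ω : Set E2) (hΩo : IsOpen Ω) (hΩb : Bornology.IsBounded Ω) (hΩc : Convex ℝ Ω)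
    (hΩbd : HasC2Boundary Ω)
    (u : E2 → ℝ) (hu : MemPhi0 Ω u) (hu2 : ContDiffOn ℝ 2 u (Eu Ω u)) :
    ∫ x in Ω, u x * detH H u x
      ≥ 4 * kappa H ^ 3 * ∫ s in (0 : ℝ)..(PerH H Ω u), |deriv (diamondRe H Ω u) s| ^ 3 := by
  exact aniso_polya_szego_general H hH Ω hΩo hΩb u hu hu2
end
end

section
/- Let w: [0,R] → ℝ be a C² function and let v(x) = w(H^o(x)) for x ∈ 𝒲_R ∖ {0}. Then v is C² on 𝒲_R ∖ {0} and the anisotropic Monge–Ampère operator applied to v satisfies det A[v](x) = w'(r)·w''(r)/r = [((w')²)'(r)]/(2r), where r = H^o(x), and moreover F_ξ(∇v(x)) = w'(r)·x/H^o(x). -/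
open MeasureTheory Set
open scoped ENNReal NNReal RealInnerProductSpace

noncomputable section

/-! Write `F = H² / 2`, `F° = (H°)² / 2` and `r = H°(x)`. Young's inequality gives `∇F° ∘ ∇F = id`
away from the origin, and `D²F` is invertible there, so `∇F°` is the `C¹` inverse of `∇F` and `H°`
is `C²`. For `v = w ∘ H°` and `s(r) = w'(r) / r` one has `∇v = s(r) ∇F°`, hence `∇F(∇v(x)) = s(r) x`
because `∇F` is homogeneous of degree one. If `w'(r) ≠ 0`, differentiating the last identity shows
that `D²F(∇v) D²v` is `s I` plus a rank-one operator, with determinant `sⁿ⁻¹ (s + r s') = sⁿ⁻¹ w''`.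
If `w'(r) = 0`, then `D²v` has rank at most one, and both sides vanish as soon as `n ≥ 2`. -/

open Filter Topology Module
open scoped Gradient

section Determinant

variable {K V : Type*} [Field K] [AddCommGroup V] [Module K V] [FiniteDimensional K V]

theorem det_smul_id_add_smulRight [Nontrivial V] {a : K} (ha : a ≠ 0) (f : Dual K V) (v : V) :
    LinearMap.det (a • LinearMap.id + f.smulRight v) = a ^ (finrank K V - 1) * (a + f v) := by
  have htransvection :
      a • LinearMap.id + f.smulRight v = a • LinearMap.transvection f (a⁻¹ • v) := by
    ext y
    simp [LinearMap.transvection.apply, smul_smul, mul_left_comm a, mul_inv_cancel₀ ha]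
  rw [htransvection, LinearMap.det_smul, LinearMap.transvection.det, map_smul, smul_eq_mul,
    ← pow_sub_one_mul finrank_pos.ne' a, mul_assoc, mul_add, mul_one, mul_inv_cancel_left₀ ha]

theorem det_smulRight_eq_zero (hdim : 1 < finrank K V) (f : Dual K V) (v : V) :
    LinearMap.det (f.smulRight v) = 0 := by
  have hker : f.ker ≠ ⊥ := LinearMap.ker_ne_bot_of_finrank_lt (by rwa [finrank_self])
  refine LinearMap.det_eq_zero_iff_ker_ne_bot.2 (ne_bot_of_le_ne_bot hker fun y hy => ?_)
  rw [LinearMap.mem_ker] at hy ⊢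
  rw [LinearMap.smulRight_apply, hy, zero_smul]

end Determinant

theorem hasDerivAt_deriv_div_self {w : ℝ → ℝ} {r : ℝ} (hr : r ≠ 0) (hw : ContDiffAt ℝ 2 w r) :
    HasDerivAt (fun t => deriv w t / t) ((deriv (deriv w) r - deriv w r / r) / r) r := by
  have hw' := ((hw.derivWithin one_add_one_eq_two.le).differentiableAt one_ne_zero).hasDerivAt
  refine (hw'.fun_div (hasDerivAt_id' r) hr).congr_deriv ?_
  field_simp

theorem deriv_deriv_pow_div_mul_pow {w : ℝ → ℝ} {r : ℝ} {n : ℕ} (hn : n ≠ 0)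
    (hw : ContDiffAt ℝ 2 w r) :
    deriv (fun t => deriv w t ^ n) r / (n * r ^ (n - 1)) =
      (deriv w r / r) ^ (n - 1) * deriv (deriv w) r := by
  have hw' := (hw.derivWithin one_add_one_eq_two.le).differentiableAt one_ne_zero
  rw [deriv_fun_pow hw', div_pow, mul_assoc, mul_div_mul_left _ _ (Nat.cast_ne_zero.2 hn),
    div_mul_eq_mul_div]

section Gradient

variable {E : Type*} [NormedAddCommGroup E] [InnerProductSpace ℝ E] [CompleteSpace E]
  {f : E → ℝ} {x : E}

theorem contDiffAt_gradient {m n : WithTop ℕ∞} (hf : ContDiffAt ℝ n f x) (hmn : m + 1 ≤ n) :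
    ContDiffAt ℝ m (∇ f) x :=
  (InnerProductSpace.toDual ℝ E).symm.toContinuousLinearEquiv.contDiff.contDiffAt.comp x
    (hf.fderiv_right hmn)

theorem contDiffAt_succ_of_gradient {n : ℕ} (hf : ∀ᶠ y in 𝓝 x, DifferentiableAt ℝ f y)
    (hgrad : ContDiffAt ℝ n (∇ f) x) : ContDiffAt ℝ (n + 1) f x := by
  refine contDiffAt_succ_iff_hasFDerivAt.2
    ⟨fderiv ℝ f, ⟨_, hf, fun _ hy => hy.hasFDerivAt⟩, ?_⟩
  rw [← toDual_comp_gradient]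
  exact (InnerProductSpace.toDual ℝ E).toContinuousLinearEquiv.contDiff.contDiffAt.comp x hgrad

theorem gradient_const_smul (c : ℝ) : ∇ (c • f) = c • ∇ f := by
  ext1 y
  simp [gradient, fderiv_const_smul_field]

theorem hasGradientAt_comp {g : ℝ → ℝ} {g' : ℝ} {f' : E} (hg : HasDerivAt g g' (f x))
    (hf : HasGradientAt f f' x) : HasGradientAt (g ∘ f) (g' • f') x := by
  simpa only [hasGradientAt_iff_hasFDerivAt, map_smul] using
    hg.comp_hasFDerivAt x hf.hasFDerivAt

theorem gradient_eq_of_isLocalMin_sub_inner {a : E} (hf : DifferentiableAt ℝ f x)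
    (hmin : IsLocalMin (fun y => f y - ⟪a, y⟫) x) : ∇ f x = a := by
  have hzero : fderiv ℝ f x - innerSL ℝ a = 0 :=
    hmin.hasFDerivAt_eq_zero (hf.hasFDerivAt.sub (innerSL ℝ a).hasFDerivAt)
  refine ext_inner_right ℝ fun η => ?_
  rw [inner_gradient_left, sub_eq_zero.1 hzero, innerSL_apply_apply]

theorem inner_gradient_self_of_homogeneous {k : ℕ} (hf : DifferentiableAt ℝ f x)
    (hom : ∀ t : ℝ, f (t • x) = t ^ k * f x) : ⟪∇ f x, x⟫ = k * f x := by
  have hline : HasDerivAt (fun t : ℝ => f (x + t • x)) ⟪∇ f x, x⟫ 0 := by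
    rw [inner_gradient_left]
    exact hf.hasFDerivAt.hasLineDerivAt x
  have hpow : HasDerivAt (fun t : ℝ => (1 + t) ^ k * f x) (k * f x) 0 := by
    simpa using (((hasDerivAt_id (0 : ℝ)).const_add 1).pow k).mul_const (f x)
  refine hline.unique (hpow.congr_of_eventuallyEq (.of_forall fun t => ?_))
  change f (x + t • x) = (1 + t) ^ k * f x
  rw [← hom, add_smul, one_smul]

theorem gradient_smul_of_homogeneous_s11 {k : ℕ} {t : ℝ} (ht : t ≠ 0)
    (hom : ∀ y, f (t • y) = t ^ (k + 1) * f y) (y : E) :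
    ∇ f (t • y) = t ^ k • ∇ f y := by
  have hscale : (f <| t • ·) = t ^ (k + 1) • f := funext hom
  have hfderiv := congrFun (fderiv_const_smul_field (𝕜 := ℝ) (f := f) (t ^ (k + 1))) y
  rw [← hscale, fderiv_comp_smul, pow_succ', Pi.smul_apply, mul_smul] at hfderiv
  simp only [gradient, smul_right_injective _ ht hfderiv, map_smul]

end Gradient

section Polar

variable {E : Type*} [NormedAddCommGroup E] [InnerProductSpace ℝ E]

/-- The potential `F = f² / 2` of a norm `f`, whose gradient is the duality map of `f`. -/
def halfSq (f : E → ℝ) (x : E) : ℝ := f x ^ 2 / 2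

/-- The polar function `f°(x) = sup_{ξ ≠ 0} ⟪ξ, x⟫ / f ξ`, i.e. the dual norm when `f` is a norm.
The real supremum is `0` when the quotients are unbounded. -/
def polarFunction (f : E → ℝ) (x : E) : ℝ := ⨆ ξ : {ξ : E // ξ ≠ 0}, ⟪(ξ : E), x⟫ / f ξ

variable {p : Seminorm ℝ E}

theorem halfSq_smul (p : Seminorm ℝ E) (t : ℝ) (ξ : E) :
    halfSq p (t • ξ) = t ^ 2 * halfSq p ξ := by
  simp only [halfSq, map_smul_eq_mul, Real.norm_eq_abs, mul_pow, sq_abs, mul_div_assoc]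

theorem pos_of_coercive (hp : ∃ α > 0, ∀ ξ, α * ‖ξ‖ ≤ p ξ) {ξ : E} (hξ : ξ ≠ 0) : 0 < p ξ := by
  obtain ⟨α, hα, hle⟩ := hp
  exact (mul_pos hα (norm_pos_iff.2 hξ)).trans_le (hle ξ)

theorem inner_le_mul_polarFunction (hp : ∃ α > 0, ∀ ξ, α * ‖ξ‖ ≤ p ξ) (ξ x : E) :
    ⟪ξ, x⟫ ≤ p ξ * polarFunction p x := by
  rcases eq_or_ne ξ 0 with rfl | hξ
  · simp
  have hbdd : BddAbove (range fun η : {η : E // η ≠ 0} => ⟪(η : E), x⟫ / p η) := by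
    obtain ⟨α, hα, hle⟩ := hp
    refine ⟨‖x‖ / α, forall_mem_range.2 fun η => ?_⟩
    rw [div_le_div_iff₀ (pos_of_coercive ⟨α, hα, hle⟩ η.2) hα]
    calc ⟪(η : E), x⟫ * α ≤ ‖(η : E)‖ * ‖x‖ * α := by gcongr; exact real_inner_le_norm _ _
      _ = ‖x‖ * (α * ‖(η : E)‖) := by ring
      _ ≤ ‖x‖ * p η := by gcongr; exact hle η
  rw [← div_le_iff₀' (pos_of_coercive hp hξ)]
  exact le_ciSup hbdd ⟨ξ, hξ⟩

theorem polarFunction_pos (hp : ∃ α > 0, ∀ ξ, α * ‖ξ‖ ≤ p ξ) {x : E} (hx : x ≠ 0) :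
    0 < polarFunction p x :=
  pos_of_mul_pos_right
    ((real_inner_self_pos.2 hx).trans_le (inner_le_mul_polarFunction hp x x)) (apply_nonneg p x)

theorem exists_forall_halfSq_sub_inner_le [FiniteDimensional ℝ E]
    (hp : ∃ α > 0, ∀ ξ, α * ‖ξ‖ ≤ p ξ) (x : E) :
    ∃ ξ, ∀ η, halfSq p ξ - ⟪x, ξ⟫ ≤ halfSq p η - ⟪x, η⟫ := by
  obtain ⟨α, hα, hle⟩ := hp
  have hcont : Continuous fun ξ => halfSq p ξ - ⟪x, ξ⟫ := by
    have := p.convexOn.locallyLipschitz.continuous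
    unfold halfSq
    fun_prop
  have hlower : ∀ ξ, ‖ξ‖ * (α ^ 2 / 2 * ‖ξ‖ - ‖x‖) ≤ halfSq p ξ - ⟪x, ξ⟫ := fun ξ => by
    have hsq : (α * ‖ξ‖) ^ 2 ≤ p ξ ^ 2 := by gcongr; exact hle ξ
    rw [halfSq]
    linarith [real_inner_le_norm x ξ]
  refine hcont.exists_forall_le (tendsto_atTop_mono hlower ?_)
  have hnorm := tendsto_norm_cocompact_atTop (E := E)
  exact hnorm.atTop_mul_atTop₀
    (tendsto_atTop_add_const_right _ _ (hnorm.const_mul_atTop (by positivity)))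

variable [CompleteSpace E] {ξ : E}

theorem gradient_halfSq_smul (p : Seminorm ℝ E) (t : ℝ) (ξ : E) :
    ∇ (halfSq p) (t • ξ) = t • ∇ (halfSq p) ξ := by
  have hom : ∀ (t : ℝ) (η : E), halfSq p (t • η) = t ^ (1 + 1) * halfSq p η := halfSq_smul p
  rcases eq_or_ne t 0 with rfl | ht
  · have hdouble := gradient_smul_of_homogeneous_s11 two_ne_zero (hom 2) 0
    rw [smul_zero, pow_one, two_smul, left_eq_add] at hdouble
    rw [zero_smul, zero_smul, hdouble]
  · simpa only [pow_one] using gradient_smul_of_homogeneous_s11 ht (hom t) ξ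

theorem inner_gradient_halfSq_self (hξ : DifferentiableAt ℝ (halfSq p) ξ) :
    ⟪∇ (halfSq p) ξ, ξ⟫ = p ξ ^ 2 := by
  rw [inner_gradient_self_of_homogeneous hξ fun t => halfSq_smul p t ξ, halfSq]
  push_cast
  ring

theorem inner_gradient_halfSq_le (hξ : DifferentiableAt ℝ (halfSq p) ξ) (η : E) :
    ⟪∇ (halfSq p) ξ, η⟫ ≤ p ξ * p η := by
  let gap : ℝ → ℝ := fun t => (p ξ + t * p η) ^ 2 / 2 - halfSq p (ξ + t • η)
  have hgap : HasDerivAt gap (p ξ * p η - ⟪∇ (halfSq p) ξ, η⟫) 0 := by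
    rw [inner_gradient_left]
    have hbound : HasDerivAt (fun t : ℝ => (p ξ + t * p η) ^ 2 / 2) (p ξ * p η) 0 := by
      simpa [mul_assoc] using
        ((((hasDerivAt_id (0 : ℝ)).mul_const (p η)).const_add (p ξ)).pow 2).div_const 2
    exact hbound.sub (hξ.hasFDerivAt.hasLineDerivAt η)
  have hmin : IsMinOn gap (Ici 0) 0 := fun t (ht : 0 ≤ t) => by
    have htriangle : p (ξ + t • η) ≤ p ξ + t * p η := by
      simpa [map_smul_eq_mul, abs_of_nonneg ht] using map_add_le_add p ξ (t • η)
    have hsq : p (ξ + t • η) ^ 2 ≤ (p ξ + t * p η) ^ 2 := by gcongr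
    simp only [gap, halfSq, mem_ofPred_eq, zero_mul, add_zero, zero_smul, sub_self]
    linarith
  have hone : (1 : ℝ) ∈ posTangentConeAt (Ici 0) 0 :=
    mem_posTangentConeAt_of_segment_subset (by
      rw [zero_add, segment_eq_Icc zero_le_one]; exact Icc_subset_Ici_self)
  simpa using hmin.localize.hasFDerivWithinAt_nonneg hgap.hasFDerivAt.hasFDerivWithinAt hone

theorem polarFunction_gradient_halfSq (hp : ∃ α > 0, ∀ ξ, α * ‖ξ‖ ≤ p ξ) (hξ₀ : ξ ≠ 0)
    (hξ : DifferentiableAt ℝ (halfSq p) ξ) : polarFunction p (∇ (halfSq p) ξ) = p ξ := by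
  have : Nonempty {η : E // η ≠ 0} := ⟨⟨ξ, hξ₀⟩⟩
  refine le_antisymm (ciSup_le fun η => ?_) ?_
  · rw [div_le_iff₀ (pos_of_coercive hp η.2), real_inner_comm]
    exact inner_gradient_halfSq_le hξ η
  · have hpair := inner_le_mul_polarFunction hp ξ (∇ (halfSq p) ξ)
    rw [real_inner_comm, inner_gradient_halfSq_self hξ, sq] at hpair
    exact le_of_mul_le_mul_left hpair (pos_of_coercive hp hξ₀)

-- By Young's inequality, `ξ` is the slope of an affine minorant of `F°` touching it at `∇F(ξ)`.
theorem gradient_halfSq_polarFunction_gradient_halfSq (hp : ∃ α > 0, ∀ ξ, α * ‖ξ‖ ≤ p ξ)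
    (hξ₀ : ξ ≠ 0) (hξ : DifferentiableAt ℝ (halfSq p) ξ)
    (hpolar : DifferentiableAt ℝ (halfSq (polarFunction p)) (∇ (halfSq p) ξ)) :
    ∇ (halfSq (polarFunction p)) (∇ (halfSq p) ξ) = ξ := by
  refine gradient_eq_of_isLocalMin_sub_inner hpolar (.of_forall fun y => ?_)
  have hself := inner_gradient_halfSq_self hξ
  have hyoung := two_mul_le_add_sq (p ξ) (polarFunction p y)
  have hpair := inner_le_mul_polarFunction hp ξ y
  rw [real_inner_comm] at hself
  simp only [halfSq, polarFunction_gradient_halfSq hp hξ₀ hξ]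
  linarith

theorem exists_gradient_halfSq_eq [FiniteDimensional ℝ E]
    (hp : ∃ α > 0, ∀ ξ, α * ‖ξ‖ ≤ p ξ)
    (hdiff : ∀ ξ ≠ 0, DifferentiableAt ℝ (halfSq p) ξ) {x : E} (hx : x ≠ 0) :
    ∃ ξ ≠ 0, ∇ (halfSq p) ξ = x := by
  obtain ⟨ξ, hmin⟩ := exists_forall_halfSq_sub_inner_le hp x
  have hξ : ξ ≠ 0 := by
    rintro rfl
    have hderiv : HasDerivAt (fun t : ℝ => t ^ 2 * halfSq p x - t * ⟪x, x⟫) (-⟪x, x⟫) 0 := by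
      exact ((((hasDerivAt_id (0 : ℝ)).pow 2).mul_const (halfSq p x)).fun_sub
        ((hasDerivAt_id (0 : ℝ)).mul_const ⟪x, x⟫)).congr_deriv (by simp)
    have hlocal : IsLocalMin (fun t : ℝ => t ^ 2 * halfSq p x - t * ⟪x, x⟫) 0 :=
      .of_forall fun t => by
        have hline := hmin (t • x)
        rw [halfSq_smul, inner_smul_right] at hline
        simpa [halfSq] using hline
    exact hx (inner_self_eq_zero.1 (neg_eq_zero.1 (hlocal.hasDerivAt_eq_zero hderiv)))
  exact ⟨ξ, hξ, gradient_eq_of_isLocalMin_sub_inner (hdiff ξ hξ) (.of_forall hmin)⟩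

end Polar

section MinkowskiNorm

variable {E : Type*} [NormedAddCommGroup E] [InnerProductSpace ℝ E] [CompleteSpace E]

/-- A (reversible) Minkowski norm: a norm `p` that is `C²` away from the origin, where `p² / 2` has
positive definite second derivative. The latter is encoded as the derivative of the gradient of
`p² / 2`. -/
structure IsMinkowskiNorm (p : Seminorm ℝ E) : Prop where
  coercive : ∃ α > 0, ∀ ξ, α * ‖ξ‖ ≤ p ξ
  contDiffAt : ∀ ξ ≠ 0, ContDiffAt ℝ 2 p ξ
  posDef : ∀ ξ ≠ 0, ∀ η ≠ 0, 0 < ⟪fderiv ℝ (∇ (halfSq p)) ξ η, η⟫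

namespace IsMinkowskiNorm

variable {p : Seminorm ℝ E} (hp : IsMinkowskiNorm p) {ξ x : E}

include hp

theorem contDiffAt_halfSq (hξ : ξ ≠ 0) : ContDiffAt ℝ 2 (halfSq p) ξ :=
  ((hp.contDiffAt ξ hξ).pow 2).div_const 2

theorem differentiableAt_halfSq (hξ : ξ ≠ 0) : DifferentiableAt ℝ (halfSq p) ξ :=
  (hp.contDiffAt_halfSq hξ).differentiableAt two_ne_zero

theorem contDiffAt_gradient_halfSq (hξ : ξ ≠ 0) : ContDiffAt ℝ 1 (∇ (halfSq p)) ξ :=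
  contDiffAt_gradient (hp.contDiffAt_halfSq hξ) one_add_one_eq_two.le

variable [FiniteDimensional ℝ E]

theorem exists_local_rightInverse_gradient_halfSq (hx : x ≠ 0) :
    ∃ T : E → E, ContDiffAt ℝ 1 T x ∧ ∀ᶠ y in 𝓝 x, T y ≠ 0 ∧ ∇ (halfSq p) (T y) = y := by
  obtain ⟨ξ, hξ, rfl⟩ :=
    exists_gradient_halfSq_eq hp.coercive (fun _ => hp.differentiableAt_halfSq) hx
  have hgrad := hp.contDiffAt_gradient_halfSq hξ
  have hinj : Function.Injective (fderiv ℝ (∇ (halfSq p)) ξ).toLinearMap :=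
    (injective_iff_map_eq_zero _).2 fun η hη => by
      by_contra hη₀
      have hpos := hp.posDef ξ hξ η hη₀
      rw [← ContinuousLinearMap.coe_coe, hη, inner_zero_left] at hpos
      exact hpos.false
  let D : E ≃L[ℝ] E := (LinearEquiv.ofInjectiveEndo _ hinj).toContinuousLinearEquiv
  have hD : HasFDerivAt (∇ (halfSq p)) (D : E →L[ℝ] E) ξ :=
    (hgrad.differentiableAt one_ne_zero).hasFDerivAt
  have hinv := hgrad.to_localInverse hD one_ne_zero
  refine ⟨_, hinv, (hinv.continuousAt.eventually_ne ?_).and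
    (hgrad.hasStrictFDerivAt' hD one_ne_zero).eventually_right_inverse⟩
  rwa [hgrad.localInverse_apply_image]

theorem contDiffAt_halfSq_polarFunction (hx : x ≠ 0) :
    ContDiffAt ℝ 2 (halfSq (polarFunction p)) x := by
  obtain ⟨T, hT, hinv⟩ := hp.exists_local_rightInverse_gradient_halfSq hx
  have hpolar : halfSq (polarFunction p) =ᶠ[𝓝 x] halfSq p ∘ T := by
    filter_upwards [hinv] with y hy
    have hpy := polarFunction_gradient_halfSq hp.coercive hy.1 (hp.differentiableAt_halfSq hy.1)
    rw [hy.2] at hpy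
    simp only [Function.comp_apply, halfSq, hpy]
  have hC1 : ContDiffAt ℝ 1 (halfSq (polarFunction p)) x :=
    (((hp.contDiffAt_halfSq hinv.self_of_nhds.1).of_le one_le_two).comp x hT).congr_of_eventuallyEq
      hpolar
  have hdiff : ∀ᶠ y in 𝓝 x, DifferentiableAt ℝ (halfSq (polarFunction p)) y :=
    (hC1.eventually (by simp)).mono fun _ hy => hy.differentiableAt one_ne_zero
  have hgrad : ∇ (halfSq (polarFunction p)) =ᶠ[𝓝 x] T := by
    filter_upwards [hinv, hdiff] with y hy hdiffy
    have henv := gradient_halfSq_polarFunction_gradient_halfSq hp.coercive hy.1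
      (hp.differentiableAt_halfSq hy.1)
    rw [hy.2] at henv
    exact henv hdiffy
  have hC2 := contDiffAt_succ_of_gradient (n := 1) hdiff
    (by exact_mod_cast hT.congr_of_eventuallyEq hgrad)
  rwa [Nat.cast_one, one_add_one_eq_two] at hC2

theorem contDiffAt_polarFunction (hx : x ≠ 0) : ContDiffAt ℝ 2 (polarFunction p) x := by
  have hsqrt : polarFunction p =ᶠ[𝓝 x] fun y => √(2 * halfSq (polarFunction p) y) := by
    filter_upwards [eventually_ne_nhds hx] with y hy
    rw [halfSq, mul_div_cancel₀ _ two_ne_zero, Real.sqrt_sq (polarFunction_pos hp.coercive hy).le]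
  have hpos : 2 * halfSq (polarFunction p) x ≠ 0 := by
    have := polarFunction_pos hp.coercive hx
    unfold halfSq
    positivity
  exact ((contDiffAt_const.mul (hp.contDiffAt_halfSq_polarFunction hx)).sqrt
    hpos).congr_of_eventuallyEq hsqrt

theorem gradient_halfSq_gradient_halfSq_polarFunction (hx : x ≠ 0) :
    ∇ (halfSq p) (∇ (halfSq (polarFunction p)) x) = x := by
  obtain ⟨ξ, hξ, rfl⟩ :=
    exists_gradient_halfSq_eq hp.coercive (fun _ => hp.differentiableAt_halfSq) hx
  rw [gradient_halfSq_polarFunction_gradient_halfSq hp.coercive hξ (hp.differentiableAt_halfSq hξ)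
    ((hp.contDiffAt_halfSq_polarFunction hx).differentiableAt two_ne_zero)]

theorem gradient_halfSq_polarFunction_ne_zero (hx : x ≠ 0) :
    ∇ (halfSq (polarFunction p)) x ≠ 0 := fun hzero => by
  have hinv := hp.gradient_halfSq_gradient_halfSq_polarFunction hx
  rw [hzero, ← zero_smul ℝ (0 : E), gradient_halfSq_smul, zero_smul] at hinv
  exact hx hinv.symm

theorem inner_gradient_halfSq_polarFunction_self (hx : x ≠ 0) :
    ⟪∇ (halfSq (polarFunction p)) x, x⟫ = polarFunction p x ^ 2 := by
  have hξ := hp.gradient_halfSq_polarFunction_ne_zero hx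
  have hself := inner_gradient_halfSq_self (hp.differentiableAt_halfSq hξ)
  have hpolar := polarFunction_gradient_halfSq hp.coercive hξ (hp.differentiableAt_halfSq hξ)
  rw [hp.gradient_halfSq_gradient_halfSq_polarFunction hx] at hself hpolar
  rw [hpolar, ← hself, real_inner_comm]

theorem gradient_polarFunction (hx : x ≠ 0) :
    ∇ (polarFunction p) x = (polarFunction p x)⁻¹ • ∇ (halfSq (polarFunction p)) x := by
  have hgrad := ((hp.contDiffAt_polarFunction hx).differentiableAt two_ne_zero).hasGradientAt
  have hsq : HasDerivAt (fun t : ℝ => t ^ 2 / 2) (polarFunction p x) (polarFunction p x) :=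
    ((hasDerivAt_pow 2 _).div_const 2).congr_deriv (by simp)
  have hhalf : ∇ (halfSq (polarFunction p)) x = polarFunction p x • ∇ (polarFunction p) x :=
    (hasGradientAt_comp hsq hgrad).gradient
  rw [hhalf, inv_smul_smul₀ (polarFunction_pos hp.coercive hx).ne']

section Radial

variable {w : ℝ → ℝ}

theorem gradient_radial (hx : x ≠ 0) (hw : DifferentiableAt ℝ w (polarFunction p x)) :
    ∇ (w ∘ polarFunction p) x =
      (deriv w (polarFunction p x) / polarFunction p x) • ∇ (halfSq (polarFunction p)) x := by
  rw [(hasGradientAt_comp hw.hasDerivAt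
      ((hp.contDiffAt_polarFunction hx).differentiableAt two_ne_zero).hasGradientAt).gradient,
    hp.gradient_polarFunction hx, smul_smul, div_eq_mul_inv]

theorem gradient_radial_ne_zero (hx : x ≠ 0) (hw : DifferentiableAt ℝ w (polarFunction p x))
    (hw' : deriv w (polarFunction p x) ≠ 0) : ∇ (w ∘ polarFunction p) x ≠ 0 := by
  rw [hp.gradient_radial hx hw]
  exact smul_ne_zero (div_ne_zero hw' (polarFunction_pos hp.coercive hx).ne')
    (hp.gradient_halfSq_polarFunction_ne_zero hx)

theorem gradient_halfSq_gradient_radial (hx : x ≠ 0)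
    (hw : DifferentiableAt ℝ w (polarFunction p x)) :
    ∇ (halfSq p) (∇ (w ∘ polarFunction p) x) =
      (deriv w (polarFunction p x) / polarFunction p x) • x := by
  rw [hp.gradient_radial hx hw, gradient_halfSq_smul,
    hp.gradient_halfSq_gradient_halfSq_polarFunction hx]

theorem hasFDerivAt_comp_polarFunction_smul {s : ℝ → ℝ} {s' : ℝ} {V : E → E} (hx : x ≠ 0)
    (hs : HasDerivAt s s' (polarFunction p x)) (hV : DifferentiableAt ℝ V x) :
    HasFDerivAt (fun y => s (polarFunction p y) • V y)
      (s (polarFunction p x) • fderiv ℝ V x +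
        (s' • fderiv ℝ (polarFunction p) x).smulRight (V x)) x :=
  (hs.comp_hasFDerivAt x
    ((hp.contDiffAt_polarFunction hx).differentiableAt two_ne_zero).hasFDerivAt).smul hV.hasFDerivAt

theorem det_fderiv_comp_polarFunction_smul_self {s : ℝ → ℝ} {s' : ℝ} (hx : x ≠ 0)
    (hs : HasDerivAt s s' (polarFunction p x)) (hs₀ : s (polarFunction p x) ≠ 0) :
    (fderiv ℝ (fun y => s (polarFunction p y) • y) x).det =
      s (polarFunction p x) ^ (finrank ℝ E - 1) *
        (s (polarFunction p x) + s' * polarFunction p x) := by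
  have : Nontrivial E := ⟨x, 0, hx⟩
  have heuler : fderiv ℝ (polarFunction p) x x = polarFunction p x := by
    rw [← inner_gradient_left, hp.gradient_polarFunction hx, real_inner_smul_left,
      hp.inner_gradient_halfSq_polarFunction_self hx, sq,
      inv_mul_cancel_left₀ (polarFunction_pos hp.coercive hx).ne']
  rw [(hp.hasFDerivAt_comp_polarFunction_smul hx hs differentiableAt_fun_id).fderiv, fderiv_fun_id]
  refine (det_smul_id_add_smulRight hs₀ (s' • fderiv ℝ (polarFunction p) x).toLinearMap x).trans ?_
  rw [ContinuousLinearMap.coe_coe, smul_apply, heuler, smul_eq_mul]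

theorem contDiffAt_radial (hx : x ≠ 0) (hw : ContDiffAt ℝ 2 w (polarFunction p x)) :
    ContDiffAt ℝ 2 (w ∘ polarFunction p) x :=
  hw.comp x (hp.contDiffAt_polarFunction hx)

theorem differentiableAt_gradient_radial (hx : x ≠ 0)
    (hw : ContDiffAt ℝ 2 w (polarFunction p x)) :
    DifferentiableAt ℝ (∇ (w ∘ polarFunction p)) x :=
  (contDiffAt_gradient (hp.contDiffAt_radial hx hw) one_add_one_eq_two.le).differentiableAt
    one_ne_zero

theorem eventually_ne_zero_and_differentiableAt (hx : x ≠ 0)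
    (hw : ContDiffAt ℝ 2 w (polarFunction p x)) :
    ∀ᶠ y in 𝓝 x, y ≠ 0 ∧ DifferentiableAt ℝ w (polarFunction p y) := by
  have hdiff : ∀ᶠ r in 𝓝 (polarFunction p x), DifferentiableAt ℝ w r :=
    (hw.eventually (by simp)).mono fun _ hr => hr.differentiableAt two_ne_zero
  exact (eventually_ne_nhds hx).and
    ((hp.contDiffAt_polarFunction hx).continuousAt.eventually hdiff)

theorem det_fderiv_mul_det_fderiv_radial (hx : x ≠ 0)
    (hw : ContDiffAt ℝ 2 w (polarFunction p x)) (hw' : deriv w (polarFunction p x) ≠ 0) :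
    (fderiv ℝ (∇ (halfSq p)) (∇ (w ∘ polarFunction p) x)).det *
        (fderiv ℝ (∇ (w ∘ polarFunction p)) x).det =
      (deriv w (polarFunction p x) / polarFunction p x) ^ (finrank ℝ E - 1) *
        deriv (deriv w) (polarFunction p x) := by
  have hr : polarFunction p x ≠ 0 := (polarFunction_pos hp.coercive hx).ne'
  have hgrad := hp.gradient_radial_ne_zero hx (hw.differentiableAt two_ne_zero) hw'
  have hradial : (∇ (halfSq p)) ∘ (∇ (w ∘ polarFunction p)) =ᶠ[𝓝 x] fun y =>
      (deriv w (polarFunction p y) / polarFunction p y) • y :=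
    (hp.eventually_ne_zero_and_differentiableAt hx hw).mono fun y hy =>
      hp.gradient_halfSq_gradient_radial hy.1 hy.2
  have hchain := fderiv_comp x
    ((hp.contDiffAt_gradient_halfSq hgrad).differentiableAt one_ne_zero)
    (hp.differentiableAt_gradient_radial hx hw)
  calc _ = (fderiv ℝ ((∇ (halfSq p)) ∘ (∇ (w ∘ polarFunction p))) x).det := by
        rw [hchain]
        exact (LinearMap.det_comp _ _).symm
    _ = _ := by
        rw [hradial.fderiv_eq, hp.det_fderiv_comp_polarFunction_smul_self hx
          (hasDerivAt_deriv_div_self hr hw) (div_ne_zero hw' hr)]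
        field_simp
        ring

theorem det_fderiv_gradient_radial_eq_zero (hdim : 1 < finrank ℝ E) (hx : x ≠ 0)
    (hw : ContDiffAt ℝ 2 w (polarFunction p x)) (hw' : deriv w (polarFunction p x) = 0) :
    (fderiv ℝ (∇ (w ∘ polarFunction p)) x).det = 0 := by
  have hr : polarFunction p x ≠ 0 := (polarFunction_pos hp.coercive hx).ne'
  have hradial : ∇ (w ∘ polarFunction p) =ᶠ[𝓝 x] fun y =>
      (deriv w (polarFunction p y) / polarFunction p y) • ∇ (halfSq (polarFunction p)) y :=
    (hp.eventually_ne_zero_and_differentiableAt hx hw).mono fun y hy =>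
      hp.gradient_radial hy.1 hy.2
  have hpolar : DifferentiableAt ℝ (∇ (halfSq (polarFunction p))) x :=
    (contDiffAt_gradient (hp.contDiffAt_halfSq_polarFunction hx)
      one_add_one_eq_two.le).differentiableAt one_ne_zero
  rw [hradial.fderiv_eq, (hp.hasFDerivAt_comp_polarFunction_smul hx
    (hasDerivAt_deriv_div_self hr hw) hpolar).fderiv, hw', zero_div, zero_smul, zero_add]
  exact det_smulRight_eq_zero hdim _ _

end Radial

end IsMinkowskiNorm

end MinkowskiNorm

section HessianMatrix

variable {ι : Type*} [Fintype ι] [DecidableEq ι] {f : EuclideanSpace ℝ ι → ℝ}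
  {x : EuclideanSpace ℝ ι}

/-- The Hessian matrix of `f` at `x`, as iterated partial derivatives: the `(i, j)` entry
is `∂ᵢ (∂ⱼ f) x`. -/
def hessianMatrix (f : EuclideanSpace ℝ ι → ℝ) (x : EuclideanSpace ℝ ι) : Matrix ι ι ℝ :=
  Matrix.of fun i j =>
    fderiv ℝ (fun y => fderiv ℝ f y (EuclideanSpace.single j 1)) x (EuclideanSpace.single i 1)

theorem hessianMatrix_apply (hf : DifferentiableAt ℝ (∇ f) x) (i j : ι) :
    hessianMatrix f x i j = fderiv ℝ (∇ f) x (EuclideanSpace.single i 1) j := by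
  have hpartial : (fun y => fderiv ℝ f y (EuclideanSpace.single j 1)) = fun y => ∇ f y j := by
    ext1 y
    simp [← inner_gradient_left, EuclideanSpace.inner_single_right]
  rw [hessianMatrix, Matrix.of_apply, hpartial]
  exact DFunLike.congr_fun
    ((EuclideanSpace.proj (𝕜 := ℝ) j).hasFDerivAt.comp x hf.hasFDerivAt).fderiv _

theorem det_hessianMatrix (hf : DifferentiableAt ℝ (∇ f) x) :
    (hessianMatrix f x).det = (fderiv ℝ (∇ f) x).det := by
  let b := (EuclideanSpace.basisFun ι ℝ).toBasis
  have htranspose : hessianMatrix f x = (LinearMap.toMatrix b b (fderiv ℝ (∇ f) x)).transpose := by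
    ext i j
    simp [b, hessianMatrix_apply hf, LinearMap.toMatrix_apply]
  rw [htranspose, Matrix.det_transpose, LinearMap.det_toMatrix]

theorem sum_hessianMatrix_mul_mul (hf : DifferentiableAt ℝ (∇ f) x) (η : EuclideanSpace ℝ ι) :
    ∑ i, ∑ j, hessianMatrix f x i j * η i * η j = ⟪fderiv ℝ (∇ f) x η, η⟫ := by
  have hbasis : η = ∑ i, η i • EuclideanSpace.single i (1 : ℝ) := by
    ext j
    simp [Pi.single_apply]
  calc ∑ i, ∑ j, hessianMatrix f x i j * η i * η j
      = ∑ i, η i * ⟪fderiv ℝ (∇ f) x (EuclideanSpace.single i 1), η⟫ := by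
        simp only [hessianMatrix_apply hf, PiLp.inner_apply, Finset.mul_sum, RCLike.inner_apply,
          conj_trivial]
        exact Finset.sum_congr rfl fun i _ => Finset.sum_congr rfl fun j _ => by ring
    _ = ⟪fderiv ℝ (∇ f) x (∑ i, η i • EuclideanSpace.single i 1), η⟫ := by
        simp only [map_sum, map_smul, sum_inner, real_inner_smul_left]
    _ = ⟪fderiv ℝ (∇ f) x η, η⟫ := by rw [← hbasis]

end HessianMatrix

theorem IsMinkowskiNorm.det_hessianMatrix_mul_hessianMatrix_radial {ι : Type*} [Fintype ι]
    [DecidableEq ι] [Nontrivial ι] {p : Seminorm ℝ (EuclideanSpace ℝ ι)} (hp : IsMinkowskiNorm p)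
    {w : ℝ → ℝ} {x : EuclideanSpace ℝ ι} (hx : x ≠ 0)
    (hw : ContDiffAt ℝ 2 w (polarFunction p x)) :
    (hessianMatrix (halfSq p) (∇ (w ∘ polarFunction p) x) *
        hessianMatrix (w ∘ polarFunction p) x).det =
      (deriv w (polarFunction p x) / polarFunction p x) ^ (Fintype.card ι - 1) *
        deriv (deriv w) (polarFunction p x) := by
  have hdim : 1 < finrank ℝ (EuclideanSpace ℝ ι) := by
    simpa only [finrank_euclideanSpace] using Fintype.one_lt_card
  rw [Matrix.det_mul, det_hessianMatrix (hp.differentiableAt_gradient_radial hx hw)]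
  by_cases hw' : deriv w (polarFunction p x) = 0
  -- Here `∇v` vanishes and `F` need not be twice differentiable at `0`, so `det D²v = 0` decides.
  · rw [hp.det_fderiv_gradient_radial_eq_zero hdim hx hw hw', hw', zero_div,
      zero_pow (Nat.sub_pos_of_lt Fintype.one_lt_card).ne', mul_zero, zero_mul]
  · have hgrad := hp.gradient_radial_ne_zero hx (hw.differentiableAt two_ne_zero) hw'
    rw [det_hessianMatrix ((hp.contDiffAt_gradient_halfSq hgrad).differentiableAt one_ne_zero),
      hp.det_fderiv_mul_det_fderiv_radial hx hw hw', finrank_euclideanSpace]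

theorem aniso_mongeAmpere_radial_general {ι : Type*} [Fintype ι] [DecidableEq ι] [Nontrivial ι]
    {p : Seminorm ℝ (EuclideanSpace ℝ ι)} (hp : IsMinkowskiNorm p) {R : ℝ} {w : ℝ → ℝ}
    (hw : ContDiffOn ℝ 2 w (Ioo 0 R)) :
    ContDiffOn ℝ 2 (w ∘ polarFunction p) ({x | polarFunction p x < R} \ {0}) ∧
    ∀ x ∈ {x | polarFunction p x < R} \ {0},
      (hessianMatrix (halfSq p) (∇ (w ∘ polarFunction p) x) *
          hessianMatrix (w ∘ polarFunction p) x).det =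
        (deriv w (polarFunction p x) / polarFunction p x) ^ (Fintype.card ι - 1) *
          deriv (deriv w) (polarFunction p x) ∧
      (hessianMatrix (halfSq p) (∇ (w ∘ polarFunction p) x) *
          hessianMatrix (w ∘ polarFunction p) x).det =
        deriv (fun t => deriv w t ^ Fintype.card ι) (polarFunction p x) /
          (Fintype.card ι * polarFunction p x ^ (Fintype.card ι - 1)) ∧
      ∇ (halfSq p) (∇ (w ∘ polarFunction p) x) =
        (deriv w (polarFunction p x) / polarFunction p x) • x := by
  have hwAt : ∀ x ∈ {x | polarFunction p x < R} \ {0}, ContDiffAt ℝ 2 w (polarFunction p x) :=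
    fun x hx => hw.contDiffAt (Ioo_mem_nhds (polarFunction_pos hp.coercive hx.2) hx.1)
  refine ⟨fun x hx => (hp.contDiffAt_radial hx.2 (hwAt x hx)).contDiffWithinAt, fun x hx => ?_⟩
  have hdet := hp.det_hessianMatrix_mul_hessianMatrix_radial hx.2 (hwAt x hx)
  refine ⟨hdet, ?_,
    hp.gradient_halfSq_gradient_radial hx.2 ((hwAt x hx).differentiableAt two_ne_zero)⟩
  rw [hdet, deriv_deriv_pow_div_mul_pow Fintype.card_ne_zero (hwAt x hx)]

section AnisoNorm

theorem map_add_le_add_of_convexOn {V : Type*} [AddCommGroup V] [Module ℝ V] {f : V → ℝ}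
    (hconv : ConvexOn ℝ univ f) (hom : ∀ (t : ℝ) (x : V), f (t • x) = |t| * f x) (x y : V) :
    f (x + y) ≤ f x + f y := by
  have hmid := hconv.2 (mem_univ x) (mem_univ y) one_half_pos.le one_half_pos.le (add_halves 1)
  rw [← smul_add, hom, abs_of_pos one_half_pos, smul_eq_mul, smul_eq_mul, ← mul_add] at hmid
  exact le_of_mul_le_mul_left hmid one_half_pos

namespace IsAnisoNorm

variable {H : E2 → ℝ} (hH : IsAnisoNorm H)

include hH

/-- An anisotropy `H` as a bundled seminorm. -/
def toSeminorm : Seminorm ℝ E2 :=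
  Seminorm.of H (map_add_le_add_of_convexOn hH.convex hH.homog) hH.homog

theorem isMinkowskiNorm : IsMinkowskiNorm hH.toSeminorm where
  coercive := hH.coercive
  contDiffAt ξ hξ := hH.smooth.contDiffAt (isOpen_compl_singleton.mem_nhds hξ)
  posDef ξ hξ η hη := by
    have hsmooth : ContDiffAt ℝ 2 (fun z => H z ^ 2) ξ :=
      (hH.smooth.contDiffAt (isOpen_compl_singleton.mem_nhds hξ)).pow 2
    have hsq : (fun z => H z ^ 2) = (2 : ℝ) • halfSq hH.toSeminorm := by
      ext z
      exact (mul_div_cancel₀ _ two_ne_zero).symm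
    have hpos : 0 < ∑ i, ∑ j, hessianMatrix (fun z => H z ^ 2) ξ i j * η i * η j :=
      hH.posdef ξ hξ η hη
    rw [sum_hessianMatrix_mul_mul ((contDiffAt_gradient hsmooth
      one_add_one_eq_two.le).differentiableAt one_ne_zero), hsq, gradient_const_smul,
      fderiv_const_smul_field, Pi.smul_apply, smul_apply, real_inner_smul_left] at hpos
    exact pos_of_mul_pos_right hpos zero_le_two

end IsAnisoNorm

end AnisoNorm

/-- for a `C²` function `w` on `[0,R]` and `v(x) = w(H^o(x))`, the
function `v` is `C²` on `𝒲_R ∖ {0}` and, with `r = H^o(x)`,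
`det A[v](x) = w'(r) w''(r)/r = [((w')²)'](r)/(2r)` and `F_ξ(∇v(x)) = w'(r)·x/H^o(x)`. -/
theorem aniso_mongeAmpere_radial
    (H : E2 → ℝ) (hH : IsAnisoNorm H) (R : ℝ) (hR : 0 < R)
    (w : ℝ → ℝ) (hw : ContDiffOn ℝ 2 w (Icc 0 R))
    (v : E2 → ℝ) (hv : ∀ x, v x = w (polar H x)) :
    ContDiffOn ℝ 2 v (wulffR H R \ {0}) ∧
    ∀ x ∈ wulffR H R \ {0},
      (Amat H v x).det = deriv w (polar H x) * deriv (deriv w) (polar H x) / polar H x ∧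
      (Amat H v x).det = deriv (fun t => deriv w t ^ 2) (polar H x) / (2 * polar H x) ∧
      gradient (Fani H) (gradient v x) = (deriv w (polar H x) / polar H x) • x := by
  obtain rfl : v = w ∘ polar H := funext hv
  have hgeneral :=
    aniso_mongeAmpere_radial_general hH.isMinkowskiNorm (hw.mono Ioo_subset_Icc_self)
  simp only [Fintype.card_fin, Nat.add_one_sub_one, pow_one, Nat.cast_ofNat,
    div_mul_eq_mul_div] at hgeneral
  -- The planar definitions unfold to `polarFunction`, `halfSq` and `hessianMatrix`.
  exact hgeneral
end
end
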